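/- arXiv:1201.1139 — 10 statements merged into one kernel-verified Lean document; each statement's English description precedes it below -/
import Mathlib

section
/- Let G be a finite group, let α ≥ 1 be a real number, and let A, B be nonempty subsets of G satisfying E(A,B) ≥ α^(−1)·(|A|·|B|)^(3/2). Then |A| ≤ α²·|B|, and there exist a subset H ⊆ G and elements x, y ∈ G such that: (i) H is a (2^1861·α^720)-approximate subgroup of G; (ii) |H| ≤ 2^325·α^126·|A|; (iii) |A ∩ xH| ≥ 2^(−2424)·α^(−937)·|A| and |B ∩ Hy| ≥ 2^(−2424)·α^(−937)·|B|; and (iv) |H·H·H| ≤ 2^930·α^360·|H|. -/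
open Pointwise

/-- The multiplicative energy `E(A,B)`: the number of quadruples
`(a₁,a₂,b₁,b₂) ∈ A×A×B×B` with `a₁b₁ = a₂b₂`. -/
def mulE {G : Type*} [Group G] [DecidableEq G] (A B : Finset G) : ℕ :=
  (((A ×ˢ A) ×ˢ B ×ˢ B).filter fun q => q.1.1 * q.2.1 = q.1.2 * q.2.2).card

/-- `H` is a `K`-approximate subgroup of `G`: `H` is symmetric, contains the identity,
and there is a symmetric set `X ⊆ H·H` with `|X| ≤ K` and `H·H ⊆ X·H`. -/
def IsApproxSubgroup {G : Type*} [Group G] [DecidableEq G] (K : ℝ) (H : Finset G) : Prop :=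
  (1 : G) ∈ H ∧ (∀ h ∈ H, h⁻¹ ∈ H) ∧
    ∃ X : Finset G, (∀ v ∈ X, v⁻¹ ∈ X) ∧ X ⊆ H * H ∧ (X.card : ℝ) ≤ K ∧ H * H ⊆ X * H

section helpers
open Finset

lemma bsg_fib {X Z : Type*} [DecidableEq X] [DecidableEq Z] (P : Finset X) (Q : Finset Z) (f : X → Z) (t : ℝ)
    (h : ∀ z ∈ Q, t ≤ ((P.filter (fun p => f p = z)).card : ℝ)) : (Q.card : ℝ) * t ≤ P.card := by
  have h1 : ∑ z ∈ Q, ((P.filter (fun p => f p = z)).card : ℝ) ≤ P.card := by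
    have h2 := Finset.card_eq_sum_card_fiberwise (f := f) (s := P.filter (fun p => f p ∈ Q)) (t := Q)
      (by intro x hx; simpa using (Finset.mem_filter.1 hx).2)
    have h3 : (P.filter (fun p => f p ∈ Q)).card ≤ P.card := Finset.card_filter_le _ _
    rw [h2] at h3
    have h4 : ∀ z ∈ Q, (P.filter (fun p => f p ∈ Q)).filter (fun p => f p = z)
        = P.filter (fun p => f p = z) := by
      intro z hz
      ext p
      simp only [Finset.mem_filter]
      constructor
      · rintro ⟨⟨a, b⟩, c⟩; exact ⟨a, c⟩
      · rintro ⟨a, c⟩; exact ⟨⟨a, c ▸ hz⟩, c⟩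
    rw [Finset.sum_congr rfl (fun z hz => by rw [h4 z hz])] at h3
    exact_mod_cast h3
  refine le_trans ?_ h1
  rw [← nsmul_eq_mul]
  exact Finset.card_nsmul_le_sum _ _ _ h

variable {G : Type*} [Group G] [DecidableEq G]

/-- number of representations -/
def bsgR (A B : Finset G) (g : G) : ℝ := (((A ×ˢ B).filter (fun p => p.1 * p.2 = g)).card : ℝ)

lemma bsgR_nonneg (A B : Finset G) (g : G) : 0 ≤ bsgR A B g := Nat.cast_nonneg _

lemma bsgR_sum (A B P : Finset G) :
    ∑ g ∈ P, bsgR A B g = (((A ×ˢ B).filter (fun p => p.1 * p.2 ∈ P)).card : ℝ) := by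
  unfold bsgR
  rw [Finset.card_eq_sum_card_fiberwise (f := fun p : G × G => p.1 * p.2)
    (s := (A ×ˢ B).filter (fun p => p.1 * p.2 ∈ P)) (t := P)
      (by intro x hx; simpa using (Finset.mem_filter.1 hx).2)]
  push_cast
  refine Finset.sum_congr rfl fun z hz => ?_
  congr 2
  ext p
  simp only [Finset.mem_filter]
  constructor
  · rintro ⟨a, c⟩; exact ⟨⟨a, c ▸ hz⟩, c⟩
  · rintro ⟨⟨a, b⟩, c⟩; exact ⟨a, c⟩

lemma bsgR_sum_univ [Fintype G] (A B : Finset G) :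
    ∑ g, bsgR A B g = (A.card : ℝ) * B.card := by
  rw [bsgR_sum]; simp

lemma bsgR_le_left (A B : Finset G) (g : G) : bsgR A B g ≤ A.card := by
  unfold bsgR
  norm_cast
  apply Finset.card_le_card_of_injOn (fun p => p.1)
  · intro p hp; simp at hp ⊢; exact hp.1.1
  · rintro ⟨a, b⟩ hp ⟨c, d⟩ hq h
    simp at hp hq h ⊢
    subst h
    refine ⟨rfl, ?_⟩
    have := hp.2.trans hq.2.symm
    simpa using this

lemma bsgR_le_right (A B : Finset G) (g : G) : bsgR A B g ≤ B.card := by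
  unfold bsgR
  norm_cast
  apply Finset.card_le_card_of_injOn (fun p => p.2)
  · intro p hp; simp at hp ⊢; exact hp.1.2
  · rintro ⟨a, b⟩ hp ⟨c, d⟩ hq h
    simp at hp hq h ⊢
    subst h
    refine ⟨?_, rfl⟩
    have := hp.2.trans hq.2.symm
    simpa using this

lemma mulE_eq_sq [Fintype G] (A B : Finset G) : (mulE A B : ℝ) = ∑ g, bsgR A B g ^ 2 := by
  unfold mulE bsgR
  rw [Finset.card_eq_sum_card_fiberwise (f := fun q : (G × G) × G × G => q.1.1 * q.2.1)
    (t := Finset.univ) (by intro x hx; simp)]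
  push_cast
  refine Finset.sum_congr rfl fun z hz => ?_
  rw [sq]
  norm_cast
  rw [← Finset.card_product]
  apply Finset.card_bij (fun q _ => ((q.1.1, q.2.1), (q.1.2, q.2.2)))
  · rintro ⟨⟨a, b⟩, c, d⟩ h
    simp at h ⊢
    obtain ⟨⟨h1, h2⟩, h3⟩ := h
    exact ⟨⟨⟨h1.1.1, h1.2.1⟩, h3⟩, ⟨h1.1.2, h1.2.2⟩, h2 ▸ h3⟩
  · rintro ⟨⟨a, b⟩, c, d⟩ h ⟨⟨a, b⟩, c, d⟩ h'
    simp; tauto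
  · rintro ⟨⟨a, b⟩, c, d⟩ h
    simp at h
    refine ⟨((a, c), (b, d)), ?_, rfl⟩
    simp
    obtain ⟨⟨h1, h2⟩, h3, h4⟩ := h
    exact ⟨⟨⟨⟨h1.1, h3.1⟩, h1.2, h3.2⟩, h2.trans h4.symm⟩, h2⟩

lemma mulE_eq_cross [Fintype G] (A B : Finset G) :
    (mulE A B : ℝ) = ∑ g, bsgR A⁻¹ A g * bsgR B B⁻¹ g := by
  unfold mulE bsgR
  rw [Finset.card_eq_sum_card_fiberwise (f := fun q : (G × G) × G × G => q.1.2⁻¹ * q.1.1)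
    (t := Finset.univ) (by intro x hx; simp)]
  push_cast
  refine Finset.sum_congr rfl fun z hz => ?_
  norm_cast
  rw [← Finset.card_product]
  have key : ∀ a b c d : G, a * c = b * d → b⁻¹ * a = d * c⁻¹ := by
    intro a b c d h
    rw [inv_mul_eq_iff_eq_mul, ← mul_assoc, ← h]; group
  apply Finset.card_bij (fun q _ => ((q.1.2⁻¹, q.1.1), (q.2.2, q.2.1⁻¹)))
  · rintro ⟨⟨a, b⟩, c, d⟩ h
    simp at h ⊢
    obtain ⟨⟨h1, h2⟩, h3⟩ := h
    refine ⟨⟨⟨h1.1.2, h1.1.1⟩, h3⟩, ⟨h1.2.2, h1.2.1⟩, ?_⟩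
    rw [← key _ _ _ _ h2, h3]
  · rintro ⟨⟨a, b⟩, c, d⟩ h ⟨⟨a, b⟩, c, d⟩ h'
    simp; tauto
  · rintro ⟨⟨a, b⟩, c, d⟩ h
    simp at h
    refine ⟨((b, a⁻¹), (d⁻¹, c)), ?_, by simp⟩
    simp
    obtain ⟨⟨h1, h2⟩, h3, h4⟩ := h
    refine ⟨⟨⟨⟨h1.2, h1.1⟩, h3.2, h3.1⟩, ?_⟩, h2⟩
    have : b = a⁻¹ * z := by rw [← h2]; group
    have h5 : c = z * d⁻¹ := by rw [← h4]; group
    rw [this, h5]; group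

lemma bsg_CS [Fintype G] (A B P : Finset G) :
    (∑ g ∈ P, bsgR A B g) ^ 2 ≤ P.card * (mulE A B : ℝ) := by
  rw [mulE_eq_sq]
  refine (sq_sum_le_card_mul_sum_sq).trans ?_
  gcongr
  exact Finset.subset_univ _

lemma bsgR_inv (A : Finset G) (g : G) : bsgR A⁻¹ A g⁻¹ = bsgR A⁻¹ A g := by
  unfold bsgR
  norm_cast
  apply Finset.card_bij (fun p _ => (p.2⁻¹, p.1⁻¹))
  · rintro ⟨a, b⟩ h
    simp at h ⊢
    refine ⟨⟨h.1.2, h.1.1⟩, ?_⟩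
    have := congrArg (·⁻¹) h.2
    simpa using this
  · rintro ⟨a, b⟩ h ⟨c, d⟩ h'
    simp; tauto
  · rintro ⟨a, b⟩ h
    refine ⟨(b⁻¹, a⁻¹), ?_, by simp⟩
    simp at h ⊢
    refine ⟨⟨h.1.2, h.1.1⟩, ?_⟩
    have := congrArg (·⁻¹) h.2
    simpa using this

lemma bsgR_one (A : Finset G) : bsgR A⁻¹ A 1 = A.card := by
  apply le_antisymm (bsgR_le_right _ _ _)
  unfold bsgR
  norm_cast
  apply Finset.card_le_card_of_injOn (fun p => (p⁻¹, p))
  · intro p hp; simp at hp ⊢; exact hp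
  · intro a _ b _ h; simpa using h

lemma bsg_step (A S Y : Finset G) (t : ℝ) (hS : ∀ s ∈ S, t ≤ bsgR A⁻¹ A s) :
    ((A * S * Y).card : ℝ) * t ≤ ((A * A⁻¹).card : ℝ) * (A * Y).card := by
  have := bsg_fib ((A * A⁻¹) ×ˢ (A * Y)) (A * S * Y) (fun p => p.1 * p.2) t ?_
  · rw [Finset.card_product] at this; exact_mod_cast this
  intro x hx
  obtain ⟨w, hw, y, hy, rfl⟩ := Finset.mem_mul.1 hx
  obtain ⟨a, ha, s, hs, rfl⟩ := Finset.mem_mul.1 hw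
  refine (hS s hs).trans ?_
  unfold bsgR
  norm_cast
  apply Finset.card_le_card_of_injOn (fun p => (a * p.1, p.2 * y))
  · rintro ⟨p, q⟩ h
    simp only [coe_filter, mem_product, Set.mem_ofPred_eq] at h ⊢
    refine ⟨⟨Finset.mul_mem_mul ha h.1.1, Finset.mul_mem_mul h.1.2 hy⟩, ?_⟩
    rw [← h.2]; group
  · rintro ⟨p, q⟩ h ⟨p', q'⟩ h'
    simp

lemma bsg_pow (A S : Finset G) (t : ℝ) (ht : 0 ≤ t) (hS : ∀ s ∈ S, t ≤ bsgR A⁻¹ A s) (k : ℕ) :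
    ((A * S ^ k * A⁻¹).card : ℝ) * t ^ k ≤ ((A * A⁻¹).card : ℝ) ^ (k + 1) := by
  induction k with
  | zero => simp
  | succ k ih =>
    have h := bsg_step A S (S ^ k * A⁻¹) t hS
    rw [pow_succ', ← mul_assoc, mul_assoc (A * S), pow_succ', ← mul_assoc, pow_succ' _ (k+1)]
    rw [← mul_assoc A] at h
    calc _ ≤ (((A * A⁻¹).card : ℝ) * (A * S ^ k * A⁻¹).card) * t ^ k := by gcongr
      _ = ((A * A⁻¹).card : ℝ) * ((A * S ^ k * A⁻¹).card * t ^ k) := by ring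
      _ ≤ _ := by gcongr

/-- dependent random choice -/
lemma bsg_drc {X Y : Type*} [DecidableEq X] [DecidableEq Y] (A : Finset X) (B : Finset Y)
    (adj : X → Y → Prop) [∀ x y, Decidable (adj x y)] (β : ℝ) (hβ : 0 < β)
    (hA : A.Nonempty) (hB : B.Nonempty)
    (he : β * A.card * B.card ≤ ∑ v ∈ B, ((A.filter (fun x => adj x v)).card : ℝ)) :
    ∃ U ⊆ A, ∃ A' ⊆ U, β / 2 * A.card ≤ U.card ∧ (U.card : ℝ) / 2 ≤ A'.card ∧
      ∀ x ∈ A', ∀ y ∈ A', (U.card : ℝ) / 2 ≤ ((U.filter (fun z =>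
        β ^ 2 / 16 * B.card ≤ ((B.filter (fun b => adj x b ∧ adj z b)).card : ℝ) ∧
        β ^ 2 / 16 * B.card ≤ ((B.filter (fun b => adj y b ∧ adj z b)).card : ℝ))).card : ℝ) := by
  classical
  set N : ℝ := (A.card : ℝ) with hN
  set M : ℝ := (B.card : ℝ) with hM
  have hNpos : 0 < N := by simpa [hN] using hA.card_pos
  have hMpos : 0 < M := by simpa [hM] using hB.card_pos
  set γ : ℝ := β ^ 2 / 16 with hγ
  set cod : X → X → ℝ := fun x z => ((B.filter (fun b => adj x b ∧ adj z b)).card : ℝ) with hcod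
  set U : Y → Finset X := fun v => A.filter (fun x => adj x v) with hU
  set bad : Y → Finset (X × X) := fun v => (U v ×ˢ U v).filter (fun p => cod p.1 p.2 < γ * M) with hbad
  -- sum of bad
  have hb : ∑ v ∈ B, ((bad v).card : ℝ) ≤ N ^ 2 * (γ * M) := by
    have h1 : ∑ v ∈ B, ((bad v).card : ℝ)
        = ∑ p ∈ (A ×ˢ A).filter (fun p => cod p.1 p.2 < γ * M), cod p.1 p.2 := by
      have h2 : ∀ v ∈ B, ((bad v).card : ℝ) =
          ∑ p ∈ (A ×ˢ A).filter (fun p => cod p.1 p.2 < γ * M),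
            (if adj p.1 v ∧ adj p.2 v then (1:ℝ) else 0) := by
        intro v hv
        rw [← Finset.sum_filter, Finset.sum_const, nsmul_eq_mul, mul_one]
        congr 2
        ext p
        simp only [hbad, hU, mem_filter, mem_product]
        tauto
      rw [Finset.sum_congr rfl h2, Finset.sum_comm]
      refine Finset.sum_congr rfl fun p hp => ?_
      rw [← Finset.sum_filter, Finset.sum_const, nsmul_eq_mul, mul_one]
    rw [h1]
    calc _ ≤ ∑ p ∈ (A ×ˢ A).filter (fun p => cod p.1 p.2 < γ * M), (γ * M) :=
          Finset.sum_le_sum fun p hp => (Finset.mem_filter.1 hp).2.le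
      _ = (((A ×ˢ A).filter (fun p => cod p.1 p.2 < γ * M)).card : ℝ) * (γ * M) := by
          rw [Finset.sum_const, nsmul_eq_mul]
      _ ≤ ((A ×ˢ A).card : ℝ) * (γ * M) := by
          gcongr; exact Finset.filter_subset _ _
      _ = _ := by rw [Finset.card_product]; push_cast; ring
  have hs : β ^ 2 * N ^ 2 * M ≤ ∑ v ∈ B, ((U v).card : ℝ) ^ 2 := by
    have h1 : (∑ v ∈ B, ((U v).card : ℝ)) ^ 2 ≤ B.card * ∑ v ∈ B, ((U v).card : ℝ) ^ 2 :=
      sq_sum_le_card_mul_sum_sq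
    have h2 : (β * N * M) ^ 2 ≤ (∑ v ∈ B, ((U v).card : ℝ)) ^ 2 := by gcongr
    have h3 := h2.trans h1
    rw [← hM] at h3
    by_contra hcon
    push Not at hcon
    nlinarith [mul_lt_mul_of_pos_left hcon hMpos]
  obtain ⟨v, hv, hvv⟩ : ∃ v ∈ B, β ^ 2 * N ^ 2 / 2 ≤ ((U v).card : ℝ) ^ 2 - 8 * (bad v).card := by
    apply Finset.exists_le_of_sum_le hB
    rw [Finset.sum_const, nsmul_eq_mul, Finset.sum_sub_distrib, ← Finset.mul_sum]
    rw [← hM]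
    have : N ^ 2 * (γ * M) = β ^ 2 * N ^ 2 * M / 16 := by rw [hγ]; ring
    nlinarith
  have hUc : β / 2 * N ≤ (U v).card := by
    by_contra hcon
    push Not at hcon
    have h0 : (0:ℝ) ≤ (U v).card := Nat.cast_nonneg _
    have h1 : (0:ℝ) ≤ (bad v).card := Nat.cast_nonneg _
    have : ((U v).card : ℝ) ^ 2 < (β / 2 * N) ^ 2 := by gcongr
    nlinarith [sq_nonneg (β * N)]
  have hUpos : (0:ℝ) < (U v).card := lt_of_lt_of_le (by positivity) hUc
  set V := U v with hV
  set bd : X → Finset X := fun x => V.filter (fun z => cod x z < γ * M) with hbd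
  set D := V.filter (fun x => (V.card : ℝ) / 4 < (bd x).card) with hD
  have hDc : (D.card : ℝ) * (V.card / 4) ≤ (bad v).card := by
    apply bsg_fib (bad v) D Prod.fst
    intro x hx
    refine (Finset.mem_filter.1 hx).2.le.trans ?_
    norm_cast
    apply Finset.card_le_card_of_injOn (fun z => (x, z))
    · intro z hz
      have hz' := Finset.mem_filter.1 hz
      simp only [hbad, coe_filter, Set.mem_ofPred_eq, mem_filter, mem_product, and_true]
      exact ⟨⟨(Finset.mem_filter.1 hx).1, hz'.1⟩, hz'.2⟩
    · intro a _ b _ h; simpa using h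
  have hD2 : (D.card : ℝ) ≤ V.card / 2 := by
    have : 8 * ((bad v).card : ℝ) ≤ (V.card : ℝ) ^ 2 := by
      have : 0 ≤ β ^ 2 * N ^ 2 / 2 := by positivity
      linarith
    by_contra hcon
    push Not at hcon
    nlinarith
  refine ⟨V, Finset.filter_subset _ _, V \ D, Finset.sdiff_subset, hUc, ?_, ?_⟩
  · rw [Finset.cast_card_sdiff (Finset.filter_subset _ _)]
    linarith
  · intro x hx y hy
    have hb : ∀ x ∈ V \ D, ((bd x).card : ℝ) ≤ V.card / 4 := by
      intro x hx
      rw [Finset.mem_sdiff] at hx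
      by_contra hcon
      push Not at hcon
      exact hx.2 (Finset.mem_filter.2 ⟨hx.1, hcon⟩)
    have h1 : V ⊆ (V.filter (fun z => γ * M ≤ cod x z ∧ γ * M ≤ cod y z)) ∪ (bd x ∪ bd y) := by
      intro z hz
      simp only [mem_union, mem_filter, hbd]
      by_cases h1 : γ * M ≤ cod x z
      · by_cases h2 : γ * M ≤ cod y z
        · exact Or.inl ⟨hz, h1, h2⟩
        · exact Or.inr (Or.inr ⟨hz, not_le.1 h2⟩)
      · exact Or.inr (Or.inl ⟨hz, not_le.1 h1⟩)
    have h2 := (Finset.card_le_card h1).trans ((Finset.card_union_le _ _).trans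
      (Nat.add_le_add_left (Finset.card_union_le _ _) _))
    have h3 : (V.card : ℝ) ≤ ((V.filter (fun z => γ * M ≤ cod x z ∧ γ * M ≤ cod y z)).card : ℝ)
      + (((bd x).card : ℝ) + (bd y).card) := by exact_mod_cast h2
    have h4 := hb x hx
    have h5 := hb y hy
    linarith


lemma bsg_count_right (A B P : Finset G) :
    ∑ g ∈ P, bsgR A B g = ∑ b ∈ B, ((A.filter (fun a => a * b ∈ P)).card : ℝ) := by
  rw [bsgR_sum, Finset.card_filter, Finset.sum_product_right]
  push_cast
  refine Finset.sum_congr rfl fun b _ => ?_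
  rw [Finset.card_filter]; push_cast; rfl

lemma bsg_count_left (A B P : Finset G) :
    ∑ g ∈ P, bsgR A B g = ∑ a ∈ A, ((B.filter (fun b => a * b ∈ P)).card : ℝ) := by
  rw [bsgR_sum, Finset.card_filter, Finset.sum_product]
  push_cast
  refine Finset.sum_congr rfl fun b _ => ?_
  rw [Finset.card_filter]; push_cast; rfl

lemma bsg_exists_left (A B P : Finset G) (hA : A.Nonempty) (c : ℝ)
    (h : c * A.card * B.card ≤ ∑ g ∈ P, bsgR A B g) :
    ∃ a ∈ A, c * B.card ≤ ((B.filter (fun b => a * b ∈ P)).card : ℝ) := by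
  apply Finset.exists_le_of_sum_le hA
  rw [← bsg_count_left, Finset.sum_const, nsmul_eq_mul]
  linarith

lemma bsg_exists_right (A B P : Finset G) (hB : B.Nonempty) (c : ℝ)
    (h : c * A.card * B.card ≤ ∑ g ∈ P, bsgR A B g) :
    ∃ b ∈ B, c * A.card ≤ ((A.filter (fun a => a * b ∈ P)).card : ℝ) := by
  apply Finset.exists_le_of_sum_le hB
  rw [← bsg_count_right, Finset.sum_const, nsmul_eq_mul]
  linarith

lemma bsg_main1 [Fintype G] (A B : Finset G) (hA : A.Nonempty) (hB : B.Nonempty) (β n : ℝ)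
    (hβ : 0 < β) (hn : 0 < n) (hn2 : n ^ 2 = (A.card : ℝ) * B.card)
    (hE : 2 * β * n ^ 3 ≤ (mulE A B : ℝ)) :
    ∃ A' ⊆ A, β / 4 * A.card ≤ A'.card ∧ ((A' * A'⁻¹).card : ℝ) * β ^ 10 ≤ 2 ^ 12 * A'.card ∧
      β ^ 5 / 256 * (A'.card : ℝ) ^ 2 * (B.card : ℝ) ^ 2 ≤ n * (mulE A' B : ℝ) := by
  classical
  have hNpos : (0:ℝ) < A.card := by simpa using hA.card_pos
  have hMpos : (0:ℝ) < B.card := by simpa using hB.card_pos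
  set P : Finset G := Finset.univ.filter (fun g => β * n ≤ bsgR A B g) with hP
  have hPc : (P.card : ℝ) * β ≤ n := by
    have h1 : (P.card : ℝ) * (β * n) ≤ ∑ g ∈ P, bsgR A B g := by
      rw [← nsmul_eq_mul]
      exact Finset.card_nsmul_le_sum _ _ _ fun g hg => (Finset.mem_filter.1 hg).2
    have h2 : ∑ g ∈ P, bsgR A B g ≤ ∑ g, bsgR A B g :=
      Finset.sum_le_sum_of_subset_of_nonneg (Finset.subset_univ _) fun g _ _ => bsgR_nonneg _ _ _
    rw [bsgR_sum_univ, ← hn2] at h2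
    by_contra hcon
    push Not at hcon
    nlinarith
  have hrn : ∀ g, bsgR A B g ≤ n := by
    intro g
    have h1 := bsgR_le_left A B g
    have h2 := bsgR_le_right A B g
    have h0 := bsgR_nonneg A B g
    have h3 : bsgR A B g ^ 2 ≤ n ^ 2 := by
      rw [hn2, sq]; gcongr
    exact le_of_sq_le_sq h3 hn.le
  have hedge : β * n ^ 2 ≤ ∑ g ∈ P, bsgR A B g := by
    have h1 : (mulE A B : ℝ) ≤ ∑ g ∈ P, n * bsgR A B g + ∑ g, β * n * bsgR A B g := by
      rw [mulE_eq_sq, ← Finset.sum_filter_add_sum_filter_not Finset.univ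
        (fun g => β * n ≤ bsgR A B g)]
      gcongr with g hg
      · rw [sq]
        exact mul_le_mul_of_nonneg_right (hrn _) (bsgR_nonneg _ _ _)
      · calc _ ≤ ∑ g ∈ Finset.univ.filter (fun g => ¬ β * n ≤ bsgR A B g), β * n * bsgR A B g := by
              refine Finset.sum_le_sum fun g hg => ?_
              rw [sq]
              exact mul_le_mul_of_nonneg_right (not_le.1 (Finset.mem_filter.1 hg).2).le
                (bsgR_nonneg _ _ _)
          _ ≤ _ := Finset.sum_le_sum_of_subset_of_nonneg (Finset.subset_univ _)
              fun g _ _ => mul_nonneg (by positivity) (bsgR_nonneg _ _ _)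
    rw [← Finset.mul_sum, ← Finset.mul_sum, bsgR_sum_univ, ← hn2] at h1
    by_contra hcon
    push Not at hcon
    nlinarith
  obtain ⟨U, hUA, A', hA'U, hUc, hA'c, hgood⟩ := bsg_drc A B (fun x b => x * b ∈ P) β hβ hA hB
    (by rw [← bsg_count_right, mul_assoc, ← hn2]; exact hedge)
  have hUpos : (0:ℝ) < U.card := lt_of_lt_of_le (by positivity) hUc
  have hPpow : (P.card : ℝ) ^ 4 * β ^ 4 ≤ (A.card : ℝ) ^ 2 * (B.card : ℝ) ^ 2 := by
    calc _ = ((P.card : ℝ) * β) ^ 4 := by ring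
      _ ≤ n ^ 4 := by gcongr
      _ = (n ^ 2) ^ 2 := by ring
      _ = _ := by rw [hn2]; ring
  set γ := β ^ 2 / 16 with hγ
  have hγ0 : 0 < γ := by positivity
  refine ⟨A', hA'U.trans hUA, by linarith, ?_, ?_⟩
  · have h1 : ((A' * A'⁻¹).card : ℝ) * (U.card / 2 * (γ * B.card * (γ * B.card))) ≤ (P.card : ℝ) ^ 4 := by
      have := bsg_fib ((P ×ˢ P) ×ˢ (P ×ˢ P)) (A' * A'⁻¹)
        (fun p => p.1.1 * p.1.2⁻¹ * (p.2.1 * p.2.2⁻¹)) (U.card / 2 * (γ * B.card * (γ * B.card))) ?_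
      · refine this.trans (le_of_eq ?_)
        simp only [Finset.card_product]; push_cast; ring
      intro g hg
      obtain ⟨x, hx, y', hy', rfl⟩ := Finset.mem_mul.1 hg
      obtain ⟨y, hy, rfl⟩ := Finset.mem_inv.1 hy'
      refine le_trans (mul_le_mul_of_nonneg_right (hgood x hx y hy) (by positivity)) ?_
      apply bsg_fib _ _ (fun p : (G × G) × (G × G) => p.1.2 * p.1.1⁻¹ * x)
      intro z hz
      obtain ⟨-, hz1, hz2⟩ := Finset.mem_filter.1 hz
      refine le_trans (mul_le_mul hz1 hz2 (by positivity) (by positivity)) ?_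
      norm_cast
      rw [← Finset.card_product]
      apply Finset.card_le_card_of_injOn (fun p => ((x * p.1, z * p.1), (z * p.2, y * p.2)))
      · rintro ⟨b, c⟩ h
        simp only [coe_product, Set.mem_prod, mem_coe, mem_filter] at h
        simp only [mem_coe, mem_filter, mem_product]
        refine ⟨⟨⟨⟨h.1.2.1, h.1.2.2⟩, h.2.2.2, h.2.2.1⟩, ?_⟩, ?_⟩ <;> group
      · rintro ⟨b, c⟩ _ ⟨b', c'⟩ _ h
        simpa using h
    have h2 : ((A' * A'⁻¹).card : ℝ) * (U.card / 2 * (γ * γ)) * β ^ 4 ≤ (A.card : ℝ) ^ 2 := by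
      have : ((A' * A'⁻¹).card : ℝ) * (U.card / 2 * (γ * γ)) * β ^ 4 * (B.card : ℝ) ^ 2
          ≤ (A.card : ℝ) ^ 2 * (B.card : ℝ) ^ 2 := by
        refine le_trans (le_of_eq ?_) ((mul_le_mul_of_nonneg_right h1 (by positivity : 0 ≤ β ^ 4)).trans hPpow)
        ring
      exact le_of_mul_le_mul_right this (by positivity)
    have h3 : ((A' * A'⁻¹).card : ℝ) * β ^ 9 / 1024 ≤ A.card := by
      have : ((A' * A'⁻¹).card : ℝ) * β ^ 9 / 1024 * A.card ≤ A.card * A.card := by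
        calc _ = ((A' * A'⁻¹).card : ℝ) * ((β / 2 * A.card) / 2 * (γ * γ)) * β ^ 4 := by
              rw [hγ]; ring
          _ ≤ ((A' * A'⁻¹).card : ℝ) * (U.card / 2 * (γ * γ)) * β ^ 4 := by gcongr
          _ ≤ (A.card : ℝ) ^ 2 := h2
          _ = _ := sq _
      exact le_of_mul_le_mul_right this hNpos
    have h4 : β / 4 * A.card ≤ A'.card := by linarith
    nlinarith [mul_le_mul_of_nonneg_left h3 hβ.le]
  · have h1 : (A'.card : ℝ) * (γ * B.card) ≤ ∑ g ∈ P, bsgR A' B g := by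
      rw [bsg_count_left, ← nsmul_eq_mul]
      refine Finset.card_nsmul_le_sum _ _ _ fun x hx => ?_
      have h2 := hgood x hx x hx
      have h3 : (0:ℝ) < U.card / 2 := by positivity
      have h4 := Finset.card_pos.1 (Nat.cast_pos.1 (lt_of_lt_of_le h3 h2))
      obtain ⟨z, hz⟩ := h4
      obtain ⟨-, hz1, -⟩ := Finset.mem_filter.1 hz
      refine hz1.trans ?_
      norm_cast
      apply Finset.card_le_card
      intro b hb
      rw [Finset.mem_filter] at hb ⊢
      exact ⟨hb.1, hb.2.1⟩
    have h2 := bsg_CS A' B P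
    have h3 : ((A'.card : ℝ) * (γ * B.card)) ^ 2 ≤ (∑ g ∈ P, bsgR A' B g) ^ 2 := by gcongr
    have h4 := h3.trans h2
    calc _ = ((A'.card : ℝ) * (γ * B.card)) ^ 2 * β := by rw [hγ]; ring
      _ ≤ (P.card * (mulE A' B : ℝ)) * β := by gcongr
      _ = (P.card * β) * (mulE A' B : ℝ) := by ring
      _ ≤ _ := by gcongr

lemma bsg_main2 [Fintype G] (A B : Finset G) (hA : A.Nonempty) (hB : B.Nonempty) (K : ℝ)
    (hK : 1 ≤ K) (hAA : ((A * A⁻¹).card : ℝ) ≤ K * A.card)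
    (hE : (A.card : ℝ) * (B.card : ℝ) ^ 2 ≤ K * (mulE A B : ℝ)) :
    ∃ (H : Finset G) (x y : G),
      IsApproxSubgroup (2 ^ 7 * K ^ 12) H ∧ (H.card : ℝ) ≤ 4 * K ^ 5 * A.card ∧
      (A.card : ℝ) ≤ 4 * K ^ 2 * ((A ∩ ({x} * H)).card : ℝ) ∧
      (B.card : ℝ) ≤ 2 * K * ((B ∩ (H * {y})).card : ℝ) ∧
      ((H * H * H).card : ℝ) ≤ 2 ^ 7 * K ^ 14 * H.card := by
  classical
  have hNpos : (0:ℝ) < A.card := by simpa using hA.card_pos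
  have hMpos : (0:ℝ) < B.card := by simpa using hB.card_pos
  have hK0 : 0 < K := by linarith
  set a : ℝ := (A.card : ℝ) with ha
  set t : ℝ := a / (2 * K) with ht
  have htpos : 0 < t := by positivity
  have hta : Unit → a = 2 * K * t := by intro _; rw [ht]; field_simp
  set S : Finset G := Finset.univ.filter (fun g => t ≤ bsgR A⁻¹ A g) with hS
  have hSt : ∀ s ∈ S, t ≤ bsgR A⁻¹ A s := fun s hs => (Finset.mem_filter.1 hs).2
  have h1S : (1 : G) ∈ S := by
    refine Finset.mem_filter.2 ⟨Finset.mem_univ _, ?_⟩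
    rw [bsgR_one, ← ha, hta ()]; nlinarith
  have hinv : S⁻¹ = S := by
    ext g
    rw [Finset.mem_inv']
    simp only [hS, mem_filter, mem_univ, true_and, bsgR_inv]
  have hSne : S.Nonempty := ⟨1, h1S⟩
  -- power bounds
  have hpow : ∀ k : ℕ, ((S ^ k).card : ℝ) ≤ 2 ^ k * K ^ (2 * k + 1) * a := by
    intro k
    have h1 := bsg_pow A S t htpos.le hSt k
    have h2 : ((S ^ k).card : ℝ) ≤ ((A * S ^ k * A⁻¹).card : ℝ) := by
      norm_cast
      refine (Finset.card_le_card_mul_left hA).trans (Finset.card_le_card_mul_right hA.inv)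
    have h3 : ((S ^ k).card : ℝ) * t ^ k ≤ (K * a) ^ (k + 1) := by
      calc _ ≤ ((A * S ^ k * A⁻¹).card : ℝ) * t ^ k := by gcongr
        _ ≤ _ := h1
        _ ≤ _ := by gcongr
    have h4 : (K * a) ^ (k + 1) = 2 ^ k * K ^ (2 * k + 1) * a * t ^ k := by
      have : a ^ k = 2 ^ k * K ^ k * t ^ k := by
        rw [← mul_pow, ← mul_pow, ← hta ()]
      rw [mul_pow, pow_succ a, this]; ring
    rw [h4] at h3
    exact le_of_mul_le_mul_right h3 (by positivity)
  -- lower bound for S, via energy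
  have hsplit : ∀ f : G → ℝ, (∀ g, 0 ≤ f g) → ∀ F : ℝ, ∑ g, f g = F →
      ∑ g, bsgR A⁻¹ A g * f g ≤ a * ∑ g ∈ S, f g + t * F := by
    intro f hf F hF
    rw [← Finset.sum_filter_add_sum_filter_not Finset.univ (fun g => t ≤ bsgR A⁻¹ A g), ← hF,
      Finset.mul_sum, Finset.mul_sum]
    refine add_le_add ?_ ?_
    · exact Finset.sum_le_sum fun g _ => mul_le_mul_of_nonneg_right (bsgR_le_right _ _ _) (hf g)
    · calc _ ≤ ∑ g ∈ Finset.univ.filter (fun g => ¬ t ≤ bsgR A⁻¹ A g), t * f g :=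
            Finset.sum_le_sum fun g hg => mul_le_mul_of_nonneg_right
              (not_le.1 (Finset.mem_filter.1 hg).2).le (hf g)
        _ ≤ _ := Finset.sum_le_sum_of_subset_of_nonneg (Finset.subset_univ _)
              fun g _ _ => mul_nonneg htpos.le (hf g)
  have hEA : a ^ 3 ≤ K * (mulE A A⁻¹ : ℝ) := by
    have h1 := bsg_CS A A⁻¹ (A * A⁻¹)
    have h2 : ∑ g ∈ A * A⁻¹, bsgR A A⁻¹ g = a * a := by
      rw [bsg_count_left, Finset.sum_congr rfl (g := fun _ => a)]
      · rw [Finset.sum_const, nsmul_eq_mul]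
      · intro x hx
        rw [Finset.filter_true_of_mem fun b hb => Finset.mul_mem_mul hx hb, Finset.card_inv]
    rw [h2] at h1
    have h3 : (a * a) ^ 2 ≤ K * a * (mulE A A⁻¹ : ℝ) := h1.trans (by gcongr)
    have h4 : a ^ 3 * a ≤ K * (mulE A A⁻¹ : ℝ) * a := by linarith
    exact le_of_mul_le_mul_right h4 hNpos
  have hSsum : a * a ≤ 2 * K * ∑ g ∈ S, bsgR A⁻¹ A g := by
    have h1 := hsplit (bsgR A⁻¹ A) (fun g => bsgR_nonneg _ _ _) (a * a)
      (by rw [bsgR_sum_univ, Finset.card_inv])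
    have h2 := mulE_eq_cross A A⁻¹
    rw [inv_inv] at h2
    rw [← h2] at h1
    have h3 : a ^ 3 ≤ K * (a * ∑ g ∈ S, bsgR A⁻¹ A g + t * (a * a)) := hEA.trans (by gcongr)
    have h4 : K * (t * (a * a)) = a ^ 3 / 2 := by rw [ht]; field_simp
    have h5 : a * a * a ≤ (2 * K * ∑ g ∈ S, bsgR A⁻¹ A g) * a := by nlinarith
    exact le_of_mul_le_mul_right h5 hNpos
  have hScard : a ≤ 2 * K * S.card := by
    have h1 : ∑ g ∈ S, bsgR A⁻¹ A g ≤ S.card * a := by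
      rw [← nsmul_eq_mul]
      exact Finset.sum_le_card_nsmul _ _ _ fun g _ => bsgR_le_right _ _ _
    have h2 : a * a ≤ (2 * K * S.card) * a := by
      calc _ ≤ _ := hSsum
        _ ≤ 2 * K * (S.card * a) := by gcongr
        _ = _ := by ring
    exact le_of_mul_le_mul_right h2 hNpos
  have hSH : S ⊆ S * S := fun s hs => Finset.mem_mul.2 ⟨1, h1S, s, hs, one_mul s⟩
  have hHinv : (S * S)⁻¹ = S * S := by rw [mul_inv_rev, hinv]
  obtain ⟨u, hu, hux⟩ := bsg_exists_left A⁻¹ A S hA.inv (1 / (2 * K)) (by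
    rw [Finset.card_inv, ← ha]
    rw [mul_assoc, one_div_mul_eq_div, div_le_iff₀ (by positivity)]
    linarith)
  obtain ⟨w, hw, hwy⟩ := bsg_exists_right B B⁻¹ S hB.inv (1 / (2 * K)) (by
    rw [Finset.card_inv, mul_assoc, one_div_mul_eq_div, div_le_iff₀ (by positivity)]
    have h1 := hsplit (bsgR B B⁻¹) (fun g => bsgR_nonneg _ _ _) (B.card * B.card)
      (by rw [bsgR_sum_univ, Finset.card_inv])
    rw [← mulE_eq_cross] at h1
    have h3 : a * (B.card:ℝ) ^ 2 ≤ K * (a * ∑ g ∈ S, bsgR B B⁻¹ g + t * (B.card * B.card)) :=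
      hE.trans (by gcongr)
    have h4 : K * (t * (B.card * B.card : ℝ)) = a * (B.card : ℝ) ^ 2 / 2 := by rw [ht]; field_simp
    have h5 : (B.card * B.card : ℝ) * a ≤ ((∑ g ∈ S, bsgR B B⁻¹ g) * (2 * K)) * a := by nlinarith
    exact le_of_mul_le_mul_right h5 hNpos)
  have hHc : (S.card : ℝ) ≤ ((S * S).card : ℝ) := by
    exact_mod_cast Finset.card_le_card hSH
  refine ⟨S * S, u⁻¹, w⁻¹, ⟨hSH h1S, ?_, ?_⟩, ?_, ?_, ?_, ?_⟩
  · intro h hh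
    rw [← hHinv] at hh
    exact Finset.mem_inv'.1 hh
  · have h5 : ((S ^ 4 * S).card : ℝ) ≤ (2 ^ 6 * K ^ 12) * S.card := by
      rw [← pow_succ]
      calc _ ≤ 2 ^ 5 * K ^ (2 * 5 + 1) * a := hpow 5
        _ ≤ 2 ^ 5 * K ^ (2 * 5 + 1) * (2 * K * S.card) := by gcongr
        _ = _ := by ring
    obtain ⟨F, hF, hFc, hFcov⟩ := Finset.ruzsa_covering_mul hSne h5
    have hS4 : S * S * (S * S) = S ^ 4 := by
      simp only [pow_succ, pow_zero, one_mul, mul_assoc]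
    have hS4i : (S ^ 4)⁻¹ = S ^ 4 := by rw [← hS4, mul_inv_rev, hHinv]
    refine ⟨F ∪ F⁻¹, ?_, ?_, ?_, ?_⟩
    · intro v hv
      rw [Finset.mem_union, Finset.mem_inv'] at hv ⊢
      rw [inv_inv]; exact hv.symm
    · rw [hS4]
      refine Finset.union_subset hF ?_
      rw [← hS4i]
      exact Finset.inv_subset_inv hF
    · have h1 : ((F ∪ F⁻¹).card : ℝ) ≤ F.card + F.card := by
        have := Finset.card_union_le F F⁻¹
        rw [Finset.card_inv] at this
        exact_mod_cast this
      linarith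
    · rw [hS4]
      refine hFcov.trans ?_
      rw [div_eq_mul_inv, hinv]
      exact Finset.mul_subset_mul_right Finset.subset_union_left
  · have := hpow 2
    rw [sq] at this
    norm_num at this ⊢
    exact this
  · have h1 : ((A.filter (fun b => u * b ∈ S)).card : ℝ) ≤ ((A ∩ ({u⁻¹} * (S * S))).card : ℝ) := by
      norm_cast
      apply Finset.card_le_card
      intro b hb
      rw [Finset.mem_filter] at hb
      refine Finset.mem_inter.2 ⟨hb.1, Finset.mem_mul.2 ⟨u⁻¹, by simp, u * b, hSH hb.2, by group⟩⟩
    have h2 := hux.trans h1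
    rw [← ha, one_div_mul_eq_div, div_le_iff₀ (by positivity)] at h2
    have h0 : (0:ℝ) ≤ ((A ∩ ({u⁻¹} * (S * S))).card : ℝ) := Nat.cast_nonneg _
    have h3 : 2 * K ≤ 4 * K ^ 2 := by nlinarith
    nlinarith
  · have h1 : ((B.filter (fun b => b * w ∈ S)).card : ℝ) ≤ ((B ∩ (S * S * {w⁻¹})).card : ℝ) := by
      norm_cast
      apply Finset.card_le_card
      intro b hb
      rw [Finset.mem_filter] at hb
      refine Finset.mem_inter.2 ⟨hb.1, Finset.mem_mul.2 ⟨b * w, hSH hb.2, w⁻¹, by simp, by group⟩⟩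
    have h2 := hwy.trans h1
    rw [one_div_mul_eq_div, div_le_iff₀ (by positivity)] at h2
    linarith
  · have hS6 : S * S * (S * S) * (S * S) = S ^ 6 := by
      simp only [pow_succ, pow_zero, one_mul, mul_assoc]
    rw [hS6]
    calc _ ≤ 2 ^ 6 * K ^ (2 * 6 + 1) * a := hpow 6
      _ ≤ 2 ^ 6 * K ^ (2 * 6 + 1) * (2 * K * S.card) := by gcongr
      _ ≤ 2 ^ 6 * K ^ (2 * 6 + 1) * (2 * K * (S * S).card) := by gcongr
      _ = _ := by ring

end helpers

theorem stmt_5 {G : Type*} [Group G] [Fintype G] [DecidableEq G]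
    (α : ℝ) (hα : 1 ≤ α) (A B : Finset G) (hA : A.Nonempty) (hB : B.Nonempty)
    (hE : α⁻¹ * ((A.card : ℝ) * B.card) ^ ((3 : ℝ) / 2) ≤ (mulE A B : ℝ)) :
    (A.card : ℝ) ≤ α ^ 2 * B.card ∧
    ∃ (H : Finset G) (x y : G),
      IsApproxSubgroup (2 ^ 1861 * α ^ 720) H ∧
      (H.card : ℝ) ≤ 2 ^ 325 * α ^ 126 * A.card ∧
      (2 : ℝ) ^ (-2424 : ℤ) * α ^ (-937 : ℤ) * A.card ≤ ((A ∩ ({x} * H)).card : ℝ) ∧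
      (2 : ℝ) ^ (-2424 : ℤ) * α ^ (-937 : ℤ) * B.card ≤ ((B ∩ (H * {y})).card : ℝ) ∧
      ((H * H * H).card : ℝ) ≤ 2 ^ 930 * α ^ 360 * H.card := by
  have hNpos : (0:ℝ) < A.card := by simpa using hA.card_pos
  have hMpos : (0:ℝ) < B.card := by simpa using hB.card_pos
  have hα0 : 0 < α := by linarith
  set n : ℝ := Real.sqrt ((A.card : ℝ) * B.card) with hn
  have hnpos : 0 < n := Real.sqrt_pos.2 (by positivity)
  have hn2 : n ^ 2 = (A.card : ℝ) * B.card := Real.sq_sqrt (by positivity)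
  have hn3 : ((A.card : ℝ) * B.card) ^ ((3 : ℝ) / 2) = n ^ 3 := by
    rw [hn, Real.sqrt_eq_rpow, ← Real.rpow_natCast, ← Real.rpow_mul (by positivity)]
    norm_num
  rw [hn3] at hE
  have hE1 : n ^ 3 ≤ α * (mulE A B : ℝ) := by
    rwa [inv_mul_le_iff₀ hα0] at hE
  -- trivial energy bounds
  have hEb : ∀ c : ℝ, (∀ g, bsgR A B g ≤ c) → n ≤ α * c := by
    intro c hc
    have h1 : (mulE A B : ℝ) ≤ c * n ^ 2 := by
      rw [mulE_eq_sq, hn2, ← bsgR_sum_univ, Finset.mul_sum]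
      refine Finset.sum_le_sum fun g _ => ?_
      rw [sq]
      exact mul_le_mul_of_nonneg_right (hc g) (bsgR_nonneg _ _ _)
    have h2 : n * n ^ 2 ≤ (α * c) * n ^ 2 := by
      calc _ = n ^ 3 := by ring
        _ ≤ _ := hE1
        _ ≤ α * (c * n ^ 2) := by gcongr
        _ = _ := by ring
    exact le_of_mul_le_mul_right h2 (by positivity)
  have hnA := hEb _ (bsgR_le_left A B)
  have hnB := hEb _ (bsgR_le_right A B)
  refine ⟨?_, ?_⟩
  · have h1 : n ^ 2 ≤ (α * B.card) ^ 2 := by gcongr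
    rw [hn2] at h1
    have h2 : (A.card : ℝ) * B.card ≤ (α ^ 2 * B.card) * B.card := by linarith
    exact le_of_mul_le_mul_right h2 hMpos
  set β : ℝ := 1 / (2 * α) with hβ
  have hβ0 : 0 < β := by positivity
  have hαβ : 2 * α * β = 1 := by rw [hβ]; field_simp
  obtain ⟨A', hA'A, hA'c, hA'K, hA'E⟩ := bsg_main1 A B hA hB β n hβ0 hnpos hn2 (by
    have : 2 * β = α⁻¹ := by rw [hβ]; field_simp
    rw [this]; exact hE)
  have hA'pos : (0:ℝ) < A'.card := lt_of_lt_of_le (by positivity) hA'c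
  have hA'ne : A'.Nonempty := Finset.card_pos.1 (Nat.cast_pos.1 hA'pos)
  have hA'le : (A'.card : ℝ) ≤ A.card := by exact_mod_cast Finset.card_le_card hA'A
  set K : ℝ := 2 ^ 22 * α ^ 10 with hK
  have hα10 : 1 ≤ α ^ 10 := one_le_pow₀ hα
  have hK1 : 1 ≤ K := by rw [hK]; linarith
  have hKβ : K * β ^ 10 = 2 ^ 12 := by
    calc _ = 2 ^ 12 * (2 * α * β) ^ 10 := by rw [hK]; ring
      _ = _ := by rw [hαβ]; norm_num
  obtain ⟨H, x, y, h1, h2, h3, h4, h5⟩ := bsg_main2 A' B hA'ne hB K hK1 (by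
    rw [← hKβ] at hA'K
    have : ((A' * A'⁻¹).card : ℝ) * β ^ 10 ≤ (K * A'.card) * β ^ 10 := by linarith
    exact le_of_mul_le_mul_right this (by positivity)) (by
    have e1 : n * β ≤ A.card / 2 := by
      calc n * β ≤ (α * A.card) * β := by gcongr
        _ = (2 * α * β) * A.card / 2 := by ring
        _ = _ := by rw [hαβ, one_mul]
    have e2 : n * β ^ 2 ≤ 2 * A'.card := by nlinarith
    have e3 : β ^ 7 / 512 * A'.card * (B.card : ℝ) ^ 2 * n ≤ (mulE A' B : ℝ) * n := by
      calc _ = β ^ 5 / 512 * A'.card * (B.card : ℝ) ^ 2 * (n * β ^ 2) := by ring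
        _ ≤ β ^ 5 / 512 * A'.card * (B.card : ℝ) ^ 2 * (2 * A'.card) := by gcongr
        _ = β ^ 5 / 256 * (A'.card : ℝ) ^ 2 * (B.card : ℝ) ^ 2 := by ring
        _ ≤ n * (mulE A' B : ℝ) := hA'E
        _ = _ := by ring
    have e4 := le_of_mul_le_mul_right e3 hnpos
    have e5 : 1 ≤ K * (β ^ 7 / 512) := by
      have : K * (β ^ 7 / 512) = 2 ^ 6 * (2 * α * β) ^ 7 * α ^ 3 := by rw [hK]; ring
      rw [this, hαβ]
      have : 1 ≤ α ^ 3 := one_le_pow₀ hα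
      linarith
    calc (A'.card : ℝ) * (B.card : ℝ) ^ 2 = 1 * (A'.card * (B.card : ℝ) ^ 2) := by ring
      _ ≤ K * (β ^ 7 / 512) * (A'.card * (B.card : ℝ) ^ 2) := by gcongr
      _ = K * (β ^ 7 / 512 * A'.card * (B.card : ℝ) ^ 2) := by ring
      _ ≤ _ := by gcongr)
  have hpw : ∀ (i j k l : ℕ), i ≤ k → j ≤ l → (2:ℝ) ^ i * α ^ j ≤ 2 ^ k * α ^ l := by
    intro i j k l hik hjl
    have a1 : (2:ℝ) ^ i ≤ 2 ^ k := pow_le_pow_right₀ (by norm_num) hik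
    have a2 : α ^ j ≤ α ^ l := pow_le_pow_right₀ hα hjl
    gcongr
  have hzp : ∀ (X Y : ℝ), X ≤ 2 ^ 2424 * α ^ 937 * Y →
      (2 : ℝ) ^ (-2424 : ℤ) * α ^ (-937 : ℤ) * X ≤ Y := by
    intro X Y h
    have c1 : (2 : ℝ) ^ (-2424 : ℤ) = ((2:ℝ) ^ 2424)⁻¹ := by
      rw [zpow_neg]; norm_cast
    have c2 : α ^ (-937 : ℤ) = (α ^ 937)⁻¹ := by
      rw [zpow_neg]; norm_cast
    rw [c1, c2, ← mul_inv, inv_mul_le_iff₀ (by positivity)]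
    exact h
  refine ⟨H, x, y, ?_, ?_, hzp _ _ ?_, hzp _ _ ?_, ?_⟩
  · obtain ⟨g1, g2, X, g3, g4, g5, g6⟩ := h1
    refine ⟨g1, g2, X, g3, g4, g5.trans ?_, g6⟩
    have : (2:ℝ) ^ 7 * K ^ 12 = 2 ^ 271 * α ^ 120 := by
      rw [hK, mul_pow, ← pow_mul, ← pow_mul, ← mul_assoc, ← pow_add]
    rw [this]
    exact hpw _ _ _ _ (by norm_num) (by norm_num)
  · have e : 4 * K ^ 5 = 2 ^ 112 * α ^ 50 := by
      rw [hK, mul_pow, ← pow_mul, ← pow_mul, ← mul_assoc, show (4:ℝ) = 2 ^ 2 by norm_num, ← pow_add]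
    rw [e] at h2
    refine h2.trans (mul_le_mul (hpw _ _ _ _ (by norm_num) (by norm_num)) hA'le hA'pos.le
      (by positivity))
  · have e : 4 * K ^ 2 = 2 ^ 46 * α ^ 20 := by
      rw [hK, mul_pow, ← pow_mul, ← pow_mul, ← mul_assoc, show (4:ℝ) = 2 ^ 2 by norm_num, ← pow_add]
    rw [e] at h3
    have e1 : ((A' ∩ ({x} * H)).card : ℝ) ≤ ((A ∩ ({x} * H)).card : ℝ) := by
      exact_mod_cast Finset.card_le_card (Finset.inter_subset_inter_right hA'A)
    have e2 : (A.card : ℝ) ≤ 8 * α * A'.card := by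
      calc (A.card : ℝ) = (2 * α * β) * A.card := by rw [hαβ, one_mul]
        _ = 8 * α * (β / 4 * A.card) := by ring
        _ ≤ _ := by gcongr
    calc (A.card : ℝ) ≤ 8 * α * A'.card := e2
      _ ≤ 8 * α * (2 ^ 46 * α ^ 20 * ((A' ∩ ({x} * H)).card : ℝ)) := by gcongr
      _ ≤ 8 * α * (2 ^ 46 * α ^ 20 * ((A ∩ ({x} * H)).card : ℝ)) := by gcongr
      _ = 2 ^ 49 * α ^ 21 * ((A ∩ ({x} * H)).card : ℝ) := by ring
      _ ≤ _ := mul_le_mul_of_nonneg_right (hpw _ _ _ _ (by norm_num) (by norm_num))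
          (Nat.cast_nonneg _)
  · have e : 2 * K = 2 ^ 23 * α ^ 10 := by rw [hK]; ring
    rw [e] at h4
    exact h4.trans (mul_le_mul_of_nonneg_right (hpw _ _ _ _ (by norm_num) (by norm_num))
          (Nat.cast_nonneg _))
  · have : (2:ℝ) ^ 7 * K ^ 14 = 2 ^ 315 * α ^ 140 := by
      rw [hK, mul_pow, ← pow_mul, ← pow_mul, ← mul_assoc, ← pow_add]
    rw [this] at h5
    exact h5.trans (mul_le_mul_of_nonneg_right (hpw _ _ _ _ (by norm_num) (by norm_num))
          (Nat.cast_nonneg _))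
end

section
/- Let G be a finite group and let H be a nonempty symmetric subset of G. Then for every n ≥ 3, |H^(n)| · |H|^(n−3) ≤ |H^(3)|^(n−2). -/
open Pointwise

/-- **Ruzsa's inequality (Proposition 1(1)).** For a nonempty symmetric subset `H` of a
finite group `G` and `n ≥ 3`, one has `|H^(n)| · |H|^(n-3) ≤ |H^(3)|^(n-2)`,
i.e. `α_n ≤ α_3^(n-2)` where `α_n = |H^(n)|/|H|`. -/
theorem stmt_6 {G : Type*} [Group G] [Fintype G] [DecidableEq G]
    (H : Finset G) (hne : H.Nonempty) (hsym : ∀ h ∈ H, h⁻¹ ∈ H)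
    (n : ℕ) (hn : 3 ≤ n) :
    (H ^ n : Finset G).card * H.card ^ (n - 3) ≤ (H ^ 3 : Finset G).card ^ (n - 2) := by
  have hinv : H⁻¹ = H := by
    ext x
    rw [Finset.mem_inv']
    exact ⟨fun h => by simpa using hsym _ h, hsym x⟩
  induction n, hn using Nat.le_induction with
  | base => simp
  | succ n hn ih =>
    obtain ⟨k, rfl⟩ := Nat.exists_eq_add_of_le hn
    have e1 : 3 + k + 1 - 3 = k + 1 := by omega
    have e2 : 3 + k + 1 - 2 = k + 2 := by omega
    have e3 : 3 + k - 3 = k := by omega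
    have e4 : 3 + k - 2 = k + 1 := by omega
    rw [e3, e4] at ih
    rw [e1, e2]
    have key := Finset.ruzsa_triangle_inequality_mul_mul_invMul (H ^ (k + 2)) H (H ^ 2)
    rw [← inv_pow, hinv, ← pow_add, ← pow_succ, ← pow_succ] at key
    have a1 : k + 2 + 2 = 3 + k + 1 := by omega
    have a2 : k + 2 + 1 = 3 + k := by omega
    rw [a1, a2] at key
    calc (H ^ (3 + k + 1)).card * H.card ^ (k + 1)
        = ((H ^ (3 + k + 1)).card * H.card) * H.card ^ k := by ring
      _ ≤ ((H ^ (3 + k)).card * (H ^ 3).card) * H.card ^ k := Nat.mul_le_mul_right _ key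
      _ = ((H ^ (3 + k)).card * H.card ^ k) * (H ^ 3).card := by ring
      _ ≤ (H ^ 3).card ^ (k + 1) * (H ^ 3).card := Nat.mul_le_mul_right _ ih
      _ = (H ^ 3).card ^ (k + 2) := by ring
end

section
/- Let G be a finite group and let H be a nonempty symmetric subset of G. Then |H^(6)| · |H|^4 ≤ |H^(3)|^4 · |H^(2)|, and for every k ≥ 3, |H^(3k)| · |H|^(3k−3) ≤ |H^(3)|^(3k−3) · |H^(k)|. (Equivalently, the tripling constant of H^(2) is at most that of H raised to the 4th power, and the tripling constant of H^(k) is at most that of H raised to the power 3k−3 for k ≥ 3.) -/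
open Pointwise

/-- Real-arithmetic step used in both parts. -/
lemma aux_arith (a h K c b : ℝ) (n : ℕ) (hh : 0 ≤ h) (hK : 0 ≤ K)
    (ha : a ≤ K ^ n * c) (hc : c ≤ b) : a * h ^ n ≤ (K * h) ^ n * b := by
  calc a * h ^ n ≤ (K ^ n * c) * h ^ n := by gcongr
    _ ≤ (K ^ n * b) * h ^ n := by gcongr
    _ = _ := by rw [mul_pow]; ring

/-- **Ruzsa's inequality for tripling constants of powers (Proposition 1(2)).**
For a nonempty symmetric subset `H` of a finite group:
`|H^(6)|·|H|^4 ≤ |H^(3)|^4·|H^(2)|` (i.e. `trp(H^(2)) ≤ trp(H)^4`) and, for `k ≥ 3`,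
`|H^(3k)|·|H|^(3k-3) ≤ |H^(3)|^(3k-3)·|H^(k)|` (i.e. `trp(H^(k)) ≤ trp(H)^(3k-3)`). -/
theorem stmt_7 {G : Type*} [Group G] [Fintype G] [DecidableEq G]
    (H : Finset G) (hne : H.Nonempty) (hsym : ∀ h ∈ H, h⁻¹ ∈ H) :
    (H ^ 6 : Finset G).card * H.card ^ 4 ≤ (H ^ 3 : Finset G).card ^ 4 * (H ^ 2 : Finset G).card ∧
    ∀ k : ℕ, 3 ≤ k →
      (H ^ (3 * k) : Finset G).card * H.card ^ (3 * k - 3) ≤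
        (H ^ 3 : Finset G).card ^ (3 * k - 3) * (H ^ k : Finset G).card := by
  classical
  have hinv : H⁻¹ = H := by
    ext x
    rw [Finset.mem_inv']
    exact ⟨fun h => by simpa using hsym _ h, fun h => hsym _ h⟩
  have hpos : (0 : ℝ) < H.card := by exact_mod_cast hne.card_pos
  set K : ℝ := (H ^ 3 : Finset G).card / H.card with hK
  have hK3 : ((H ^ 3 : Finset G).card : ℝ) = K * H.card := by
    rw [hK]; field_simp
  have hK0 : 0 ≤ K := div_nonneg (Nat.cast_nonneg _) (Nat.cast_nonneg _)
  have key : ∀ m : ℕ, 3 ≤ m → ((H ^ m : Finset G).card : ℝ) ≤ K ^ (m - 2) * H.card :=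
    fun m hm => Finset.small_pow_of_small_tripling hm hK3.le hinv
  have mono : ∀ i j : ℕ, i ≤ j → (H ^ i : Finset G).card ≤ (H ^ j : Finset G).card := by
    intro i j hij
    obtain ⟨d, rfl⟩ := Nat.exists_eq_add_of_le hij
    rw [pow_add]
    exact Finset.card_le_card_mul_right hne.pow
  constructor
  · have h6 := key 6 (by norm_num)
    have h12 : (H.card : ℝ) ≤ (H ^ 2 : Finset G).card := by
      exact_mod_cast (by simpa using mono 1 2 (by norm_num))
    have : ((H ^ 6 : Finset G).card : ℝ) * H.card ^ 4 ≤
        ((H ^ 3 : Finset G).card : ℝ) ^ 4 * (H ^ 2 : Finset G).card := by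
      rw [hK3]
      exact aux_arith _ _ _ _ _ 4 hpos.le hK0 h6 h12
    exact_mod_cast this
  · intro k hk
    have h6 := key (3 * k) (by omega)
    have h3k : K * H.card ≤ ((H ^ k : Finset G).card : ℝ) := by
      rw [← hK3]; exact_mod_cast mono 3 k hk
    have : ((H ^ (3 * k) : Finset G).card : ℝ) * H.card ^ (3 * k - 3) ≤
        ((H ^ 3 : Finset G).card : ℝ) ^ (3 * k - 3) * (H ^ k : Finset G).card := by
      rw [hK3]
      have he : 3 * k - 2 = (3 * k - 3) + 1 := by omega
      rw [he, pow_succ, mul_assoc] at h6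
      exact aux_arith _ _ _ _ _ _ hpos.le hK0 h6 h3k
    exact_mod_cast this
end

section
/- Let G be a finite group and let H be a symmetric generating set of G containing the identity. If H^(3) ≠ G, then |H^(3)|² ≥ 2·|H|² (i.e. |H^(3)| ≥ √2·|H|). -/
open Pointwise

/-- **Growth for small sets (Lemma `lm-small-p`).** If `H` is a symmetric generating set of a
finite group `G` containing the identity and `H^(3) ≠ G`, then `|H^(3)|² ≥ 2·|H|²`,
i.e. `|H^(3)| ≥ √2·|H|`. -/
theorem stmt_8 {G : Type*} [Group G] [Fintype G] [DecidableEq G]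
    (H : Finset G) (hsym : ∀ h ∈ H, h⁻¹ ∈ H) (hone : (1 : G) ∈ H)
    (hgen : Subgroup.closure (H : Set G) = ⊤)
    (hne : (H ^ 3 : Finset G) ≠ Finset.univ) :
    2 * H.card ^ 2 ≤ (H ^ 3 : Finset G).card ^ 2 := by
  have hinv : H⁻¹ = H := by
    ext x
    rw [Finset.mem_inv']
    exact ⟨fun h => by simpa using hsym _ h, hsym x⟩
  have hx : ∃ x ∈ H ^ 3, x ∉ H ^ 2 := by
    by_contra! hc
    apply hne
    have key : ∀ g : G, g ∈ H ^ 2 := by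
      intro g
      have hg : g ∈ Subgroup.closure (H : Set G) := by rw [hgen]; trivial
      induction hg using Subgroup.closure_induction_right with
      | one => exact Finset.one_mem_pow hone
      | mul_right x hx y hy ih =>
        exact hc _ (by rw [pow_succ]; exact Finset.mul_mem_mul ih hy)
      | mul_inv_cancel x hx y hy ih =>
        exact hc _ (by rw [pow_succ]; exact Finset.mul_mem_mul ih (hsym _ hy))
    ext g
    simp only [Finset.mem_univ, iff_true]
    exact Finset.pow_subset_pow_right hone (by norm_num) (key g)
  obtain ⟨x, hx3, hx2⟩ := hx
  have hdis : Disjoint (x • H) H := by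
    rw [Finset.disjoint_left]
    intro a ha haH
    obtain ⟨b, hb, rfl⟩ := Finset.mem_smul_finset.1 ha
    apply hx2
    rw [pow_two]
    have := Finset.mul_mem_mul haH (hsym b hb)
    simpa using this
  have hsub : (x • H) ∪ H ⊆ H ^ 4 := by
    apply Finset.union_subset
    · intro a ha
      obtain ⟨b, hb, rfl⟩ := Finset.mem_smul_finset.1 ha
      rw [pow_succ]
      exact Finset.mul_mem_mul hx3 hb
    · exact Finset.subset_pow hone (by norm_num)
  have h4 : 2 * H.card ≤ (H ^ 4).card := by
    have := Finset.card_le_card hsub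
    rw [Finset.card_union_of_disjoint hdis, Finset.card_smul_finset] at this
    omega
  have hr := Finset.ruzsa_triangle_inequality_mul_mul_invMul (H ^ 2) H (H ^ 2)
  have e : H ^ 2 * H ^ 2 = H ^ 4 := by rw [← pow_add]
  have e1 : H ^ 2 * H = H ^ 3 := by rw [← pow_succ]
  have e2 : H * H ^ 2 = H ^ 3 := by rw [← pow_succ']
  have e3 : (H ^ 2)⁻¹ = H ^ 2 := by rw [← inv_pow, hinv]
  simp only [hinv, e3, e, e1, e2, div_eq_mul_inv] at hr
  nlinarith
end

section
/- Let G be a finite group acting on a nonempty finite set X, let x ∈ X, and let K = {g ∈ G : g·x = x} be the stabilizer of x. Then for any nonempty symmetric subset H ⊆ G, |K ∩ H^(2)| · |H·x| ≥ |H|, where H·x = {h·x : h ∈ H}. -/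
open Pointwise

/-- **Helfgott's orbit–stabilizer inequality.** If a finite group `G` acts on a nonempty finite
set `X`, `x ∈ X`, `K` is the stabilizer of `x`, and `H ⊆ G` is a nonempty symmetric subset,
then `|K ∩ H^(2)| · |H·x| ≥ |H|`. -/
theorem stmt_9 {G X : Type*} [Group G] [Fintype G] [DecidableEq G]
    [Fintype X] [Nonempty X] [DecidableEq X] [MulAction G X]
    (x : X) (H : Finset G) (hne : H.Nonempty) (hsym : ∀ h ∈ H, h⁻¹ ∈ H) :
    H.card ≤ ((H ^ 2 : Finset G).filter fun g => g • x = x).card *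
      (H.image fun h => h • x).card := by
  refine Finset.card_le_mul_card_image H _ ?_
  intro b hb
  obtain ⟨a, ha, rfl⟩ := Finset.mem_image.mp hb
  refine Finset.card_le_card_of_injOn (fun h => a⁻¹ * h) ?_ ?_
  · intro h hh
    have hh2 := Finset.mem_filter.mp (Finset.mem_coe.mp hh)
    refine Finset.mem_coe.mpr (Finset.mem_filter.mpr ⟨?_, ?_⟩)
    · rw [pow_two]
      exact Finset.mul_mem_mul (hsym a ha) hh2.1
    · have h2 : h • x = a • x := hh2.2
      simp only [mul_smul, h2, inv_smul_smul]
  · intro h _ k _ hk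
    exact mul_left_cancel hk
end

section
/- Let G be a finite group, K a subgroup of G, and H a nonempty symmetric subset of G. Then for every n ≥ 1, |H^(n+1)| · |H^(2) ∩ K| ≥ |H| · |H^(n) ∩ K|. -/
open Pointwise

/-- **Intersection with subgroups (Lemma `lm-intersection`).** For a finite group `G`,
a subgroup `K ⊆ G` and a nonempty symmetric subset `H ⊆ G`, for every `n ≥ 1` one has
`|H^(n+1)| · |H^(2) ∩ K| ≥ |H| · |H^(n) ∩ K|`. -/
theorem stmt_10 {G : Type*} [Group G] [Fintype G] [DecidableEq G]
    (K : Subgroup G) (H : Finset G) (hne : H.Nonempty) (hsym : ∀ h ∈ H, h⁻¹ ∈ H)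
    (n : ℕ) (hn : 1 ≤ n) :
    H.card * ((↑(H ^ n : Finset G) ∩ (K : Set G)).ncard) ≤
      (H ^ (n + 1) : Finset G).card * ((↑(H ^ 2 : Finset G) ∩ (K : Set G)).ncard) := by
  classical
  have key : ∀ m : ℕ, ((↑(H ^ m : Finset G) ∩ (K : Set G)).ncard)
      = ((H ^ m : Finset G).filter (fun x => x ∈ K)).card := by
    intro m
    rw [← Set.ncard_coe_finset]
    congr 1
    ext x
    simp only [Set.mem_inter_iff, Finset.mem_coe, SetLike.mem_coe, Finset.mem_filter]
  rw [key, key, ← Finset.card_product, mul_comm]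
  refine Finset.card_le_mul_card_image_of_maps_to (f := fun p : G × G => p.1 * p.2) ?_ _ ?_
  · rintro ⟨h, k⟩ hp
    simp only [Finset.mem_product, Finset.mem_filter] at hp
    rw [pow_succ']
    exact Finset.mul_mem_mul hp.1 hp.2.1
  · intro b _
    rcases Finset.eq_empty_or_nonempty
      ((H ×ˢ (H ^ n : Finset G).filter (fun x => x ∈ K)).filter
        (fun p : G × G => p.1 * p.2 = b)) with he | ⟨⟨h', k'⟩, hq⟩
    · rw [he]; simp
    · simp only [Finset.mem_product, Finset.mem_filter] at hq
      obtain ⟨⟨hh', -, hk'⟩, hb'⟩ := hq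
      refine Finset.card_le_card_of_injOn (fun p => h'⁻¹ * p.1) ?_ ?_
      · rintro ⟨h, k⟩ hp
        simp only [Finset.coe_filter, Set.mem_setOf_eq, Finset.mem_product,
          Finset.mem_filter] at hp ⊢
        obtain ⟨⟨hh, -, hk⟩, hb⟩ := hp
        refine ⟨?_, ?_⟩
        · rw [pow_two]
          exact Finset.mul_mem_mul (hsym _ hh') hh
        · have e : h'⁻¹ * h = k' * k⁻¹ := by
            rw [inv_mul_eq_iff_eq_mul, ← mul_assoc, hb', ← hb, mul_inv_cancel_right]
          rw [e]
          exact K.mul_mem hk' (K.inv_mem hk)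
      · rintro ⟨h, k⟩ hp ⟨h₂, k₂⟩ hp₂ heq
        simp only [Finset.coe_filter, Set.mem_setOf_eq] at hp hp₂
        have e : h = h₂ := mul_left_cancel heq
        subst e
        have e2 : k = k₂ := mul_left_cancel (hp.2.trans hp₂.2.symm)
        rw [e2]
end

section
/- Let p ≥ 3 be a prime and let H be a subset of SL₂(𝔽_p) with |H|⁹ ≥ 2⁹ · |SL₂(𝔽_p)|⁸ (i.e. |H| ≥ 2·|SL₂(𝔽_p)|^(8/9)). Then H^(3) = SL₂(𝔽_p). -/
open Pointwise

instance {n : Type*} [DecidableEq n] [Fintype n] {R : Type*} [CommRing R] [DecidableEq R] :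
    DecidableEq (Matrix.SpecialLinearGroup n R) := Subtype.instDecidableEq
open Module

theorem hs_bound {V : Type*} [NormedAddCommGroup V] [InnerProductSpace ℂ V]
    [FiniteDimensional ℂ V] {ι : Type*} [Fintype ι] (b : OrthonormalBasis ι ℂ V)
    (T : V →ₗ[ℂ] V) (d : ℕ)
    (hd : ∀ μ : ℂ, μ ≠ 0 → (Module.End.HasEigenvalue (LinearMap.adjoint T * T) μ) →
      d ≤ finrank ℂ (Module.End.eigenspace (LinearMap.adjoint T * T) μ)) (f : V) :
    (d : ℝ) * ‖T f‖ ^ 2 ≤ (∑ i, ‖T (b i)‖ ^ 2) * ‖f‖ ^ 2 := by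
  classical
  set S := LinearMap.adjoint T * T with hS
  have hin : ∀ x y, inner ℂ x (S y) = inner ℂ (T x) (T y) := by
    intro x y
    rw [hS, Module.End.mul_apply, LinearMap.adjoint_inner_right]
  have hsym : S.IsSymmetric := by
    intro x y
    rw [hin, ← inner_conj_symm, hin, inner_conj_symm]
  set n := finrank ℂ V with hn
  set e := hsym.eigenvectorBasis hn.symm with he
  set l := hsym.eigenvalues hn.symm with hl
  have hSe : ∀ i, S (e i) = (l i : ℂ) • e i := fun i => hsym.apply_eigenvectorBasis hn.symm i
  have hl2 : ∀ i, l i = ‖T (e i)‖ ^ 2 := by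
    intro i
    have h1 := hin (e i) (e i)
    rw [hSe, inner_smul_right, inner_self_eq_norm_sq_to_K, inner_self_eq_norm_sq_to_K,
      e.norm_eq_one] at h1
    simp at h1
    exact_mod_cast h1
  have hl0 : ∀ i, 0 ≤ l i := fun i => by rw [hl2]; positivity
  have htr : ∑ i, ‖T (b i)‖ ^ 2 = ∑ i, l i := by
    have h1 := LinearMap.trace_eq_sum_inner S b
    have h2 := LinearMap.trace_eq_sum_inner S e
    rw [h1] at h2
    simp only [hin, inner_self_eq_norm_sq_to_K] at h2
    simp only [hl2]
    exact_mod_cast h2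
  rw [htr]
  have hmax : ∀ i, (d : ℝ) * l i ≤ ∑ j, l j := by
    intro i
    by_cases h0 : l i = 0
    · rw [h0, mul_zero]; exact Finset.sum_nonneg fun j _ => hl0 j
    have hne : (l i : ℂ) ≠ 0 := by exact_mod_cast h0
    have h1 := hd _ hne (hsym.hasEigenvalue_eigenvalues hn.symm i)
    rw [← hsym.card_filter_eigenvalues_eq hn.symm] at h1
    calc (d : ℝ) * l i ≤ (Finset.card {j | ((l j : ℝ) : ℂ) = l i} : ℕ) * l i := by
          gcongr
          · exact hl0 i
          · exact h1
      _ = ∑ j ∈ {j | ((l j : ℝ) : ℂ) = l i}, l j := by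
          rw [← nsmul_eq_mul, ← Finset.sum_const]
          refine Finset.sum_congr rfl fun j hj => ?_
          simp at hj
          exact hj.symm
      _ ≤ _ := Finset.sum_le_sum_of_subset_of_nonneg (Finset.subset_univ _) fun j _ _ => hl0 j
  have hTf : ‖T f‖ ^ 2 = ∑ i, l i * ‖inner ℂ (e i) f‖ ^ 2 := by
    have h1 : inner ℂ f (S f) = ∑ i, inner ℂ f (e i) * inner ℂ (e i) (S f) :=
      (e.sum_inner_mul_inner f (S f)).symm
    have h2 : ∀ i, inner ℂ f (e i) * inner ℂ (e i) (S f) =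
        ((l i * ‖inner ℂ (e i) f‖ ^ 2 : ℝ) : ℂ) := by
      intro i
      rw [← hsym (e i) f, hSe, inner_smul_left, ← inner_conj_symm f (e i)]
      have := RCLike.conj_mul (inner ℂ (e i) f)
      push_cast
      simp only [Complex.conj_ofReal]
      linear_combination (l i : ℂ) * this
    rw [hin, inner_self_eq_norm_sq_to_K] at h1
    simp only [h2] at h1
    apply Complex.ofReal_injective
    push_cast at h1 ⊢
    exact h1
  rw [hTf, ← e.sum_sq_norm_inner_right f, Finset.mul_sum, Finset.mul_sum]
  refine Finset.sum_le_sum fun i _ => ?_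
  rw [← mul_assoc]
  gcongr
  exact hmax i

abbrev SLp (p : ℕ) := Matrix.SpecialLinearGroup (Fin 2) (ZMod p)

def upM {p : ℕ} (t : ZMod p) : SLp p := ⟨!![1, t; 0, 1], by simp [Matrix.det_fin_two]⟩
def loM {p : ℕ} (t : ZMod p) : SLp p := ⟨!![1, 0; t, 1], by simp [Matrix.det_fin_two]⟩
def diM {p : ℕ} [Fact p.Prime] (t : ZMod p) (ht : t ≠ 0) : SLp p :=
  ⟨!![t, 0; 0, t⁻¹], by simp [Matrix.det_fin_two, ht]⟩

def wM {p : ℕ} : SLp p := ⟨!![0, -1; 1, 0], by simp [Matrix.det_fin_two]⟩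

theorem upM_coe {p : ℕ} (t : ZMod p) : (upM t : Matrix (Fin 2) (Fin 2) (ZMod p)) = !![1, t; 0, 1] := rfl
theorem loM_coe {p : ℕ} (t : ZMod p) : (loM t : Matrix (Fin 2) (Fin 2) (ZMod p)) = !![1, 0; t, 1] := rfl
theorem wM_coe {p : ℕ} : ((wM : SLp p) : Matrix (Fin 2) (Fin 2) (ZMod p)) = !![0, -1; 1, 0] := rfl
theorem diM_coe {p : ℕ} [Fact p.Prime] (t : ZMod p) (ht : t ≠ 0) :
    (diM t ht : Matrix (Fin 2) (Fin 2) (ZMod p)) = !![t, 0; 0, t⁻¹] := rfl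

theorem upM_pow {p : ℕ} (k : ℕ) : (upM 1 : SLp p) ^ k = upM (k : ZMod p) := by
  induction k with
  | zero => ext i j; fin_cases i <;> fin_cases j <;> simp [upM_coe]
  | succ k ih =>
    rw [pow_succ, ih]
    ext i j; fin_cases i <;> fin_cases j <;> simp [upM_coe, Matrix.mul_apply, Fin.sum_univ_two, add_comm]

theorem normal_top {p : ℕ} [Fact p.Prime] (N : Subgroup (SLp p)) [N.Normal]
    (h : upM 1 ∈ N) : N = ⊤ := by
  have hu : ∀ t : ZMod p, upM t ∈ N := by
    intro t
    have := N.pow_mem h t.val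
    rwa [upM_pow, ZMod.natCast_zmod_val] at this
  have hw : ∀ t : ZMod p, loM t ∈ N := by
    intro t
    have h1 := (inferInstance : N.Normal).conj_mem _ (hu (-t))
      wM
    convert h1 using 1
    ext i j; fin_cases i <;> fin_cases j <;>
      simp [upM_coe, loM_coe, wM_coe, Matrix.mul_apply, Fin.sum_univ_two, Matrix.adjugate_fin_two]
  have hc : ∀ g : SLp p, g 1 0 ≠ 0 → g ∈ N := by
    intro g hg
    have hdet := g.det_coe
    rw [Matrix.det_fin_two] at hdet
    have : g = upM ((g 0 0 - 1) / g 1 0) * loM (g 1 0) * upM ((g 1 1 - 1) / g 1 0) := by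
      ext i j; fin_cases i <;> fin_cases j <;>
        simp [upM_coe, loM_coe, wM_coe, Matrix.mul_apply, Fin.sum_univ_two] <;> field_simp <;>
        first
        | linear_combination -hdet
        | linear_combination hdet
        | ring
    rw [this]
    exact N.mul_mem (N.mul_mem (hu _) (hw _)) (hu _)
  rw [eq_top_iff]
  intro g _
  by_cases hg : g 1 0 = 0
  · have h1 : loM 1 * g ∈ N := by
      apply hc
      have hdet := g.det_coe
      rw [Matrix.det_fin_two, hg] at hdet
      simp [loM_coe, Matrix.mul_apply, Fin.sum_univ_two, hg]
      intro h0
      simp [h0] at hdet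
    exact (N.mul_mem_cancel_left (hw 1)).1 h1
  · exact hc g hg

theorem card_le {p : ℕ} [Fact p.Prime] : Fintype.card (SLp p) ≤ p ^ 3 := by
  have : Function.Injective (fun g : SLp p =>
      ((g 0 0, g 0 1, if g 0 0 = 0 then g 1 1 else g 1 0) : ZMod p × ZMod p × ZMod p)) := by
    intro g h hgh
    simp only [Prod.mk.injEq] at hgh
    obtain ⟨h1, h2, h3⟩ := hgh
    have hdg := g.det_coe
    have hdh := h.det_coe
    rw [Matrix.det_fin_two] at hdg hdh
    rw [← h1] at h3
    split_ifs at h3 with h0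
    · rw [← h1, ← h2, h0] at hdh
      rw [h0] at hdg
      have hb : g 0 1 ≠ 0 := by intro hb; simp [hb] at hdg
      have h4 : g 1 0 = h 1 0 := by
        apply mul_left_cancel₀ hb
        linear_combination hdh - hdg
      ext i j; fin_cases i <;> fin_cases j <;> simp [*]
    · have h4 : g 1 1 = h 1 1 := by
        apply mul_left_cancel₀ h0
        rw [← h1, ← h2, ← h3] at hdh
        linear_combination hdg - hdh
      ext i j; fin_cases i <;> fin_cases j <;> simp [*]
  have h := Fintype.card_le_of_injective _ this
  simp only [Fintype.card_prod, ZMod.card] at h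
  calc _ ≤ _ := h
    _ = p ^ 3 := by ring

theorem rep_dim {p : ℕ} [Fact p.Prime] {V : Type*} [AddCommGroup V] [Module ℂ V]
    [FiniteDimensional ℂ V] (ρ : SLp p →* Module.End ℂ V) (g₀ : SLp p) (hg₀ : ρ g₀ ≠ 1) :
    (p - 1) / 2 ≤ finrank ℂ V := by
  have hp : p.Prime := Fact.out
  set T := ρ (upM 1) with hT
  have hT1 : T ≠ 1 := by
    intro h
    have := normal_top ρ.ker h
    apply hg₀
    have h2 : g₀ ∈ ρ.ker := this ▸ Subgroup.mem_top g₀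
    exact h2
  have hTp : T ^ p = 1 := by
    rw [hT, ← map_pow, upM_pow, ZMod.natCast_self]
    have : (upM 0 : SLp p) = 1 := by
      ext i j; fin_cases i <;> fin_cases j <;> simp [upM_coe]
    rw [this, map_one]
  have hss : T.IsSemisimple := by
    have hsq : Squarefree (Polynomial.X ^ p - 1 : Polynomial ℂ) := by
      apply Polynomial.Separable.squarefree
      apply Polynomial.X_pow_sub_one_separable_iff.2
      exact_mod_cast hp.ne_zero
    apply Module.End.isSemisimple_of_squarefree_aeval_eq_zero hsq
    simp [hTp]
  have hex : ∃ μ : ℂ, μ ≠ 1 ∧ T.HasEigenvalue μ := by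
    by_contra! hcon
    apply hT1
    have htop := hss.iSup_eigenspace_eq_top
    have : (⊤ : Submodule ℂ V) ≤ T.eigenspace 1 := by
      rw [← htop]
      refine iSup_le fun μ => ?_
      by_cases h : μ = 1
      · rw [h]
      · have := hcon μ h
        rw [Module.End.hasEigenvalue_iff, not_not] at this
        rw [this]; exact bot_le
    ext v
    have := this (Submodule.mem_top (x := v))
    rw [Module.End.mem_eigenspace_iff] at this
    simpa using this
  obtain ⟨μ, hμ1, hμ⟩ := hex
  obtain ⟨v, hv⟩ := hμ.exists_hasEigenvector
  have hpowv : ∀ k : ℕ, (T ^ k) v = μ ^ k • v := fun k => by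
    rw [hv.pow_apply]
  have hμp : μ ^ p = 1 := by
    have h := hpowv p
    rw [hTp] at h
    by_contra hne
    have h2 : (μ ^ p - 1) • v = 0 := by rw [sub_smul, ← h]; simp
    rcases smul_eq_zero.1 h2 with h3 | h3
    · exact hne (sub_eq_zero.1 h3)
    · exact hv.2 h3
  have hord : orderOf μ = p := orderOf_eq_prime hμp hμ1
  let k : Fin ((p - 1) / 2) → ℕ := fun i => (((i : ℕ) + 1) ^ 2 )
  have hne : ∀ i : Fin ((p - 1) / 2), (((i : ℕ) + 1 : ℕ) : ZMod p) ≠ 0 := by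
    intro i h
    rw [ZMod.natCast_eq_zero_iff] at h
    have := Nat.le_of_dvd (by omega) h
    have := i.2
    omega
  have hev : ∀ i, T.HasEigenvector (μ ^ k i) (ρ (diM _ (inv_ne_zero (hne i))) v) := by
    intro i
    set D := diM _ (inv_ne_zero (hne i)) with hD
    rw [Module.End.hasEigenvector_iff]
    constructor
    · rw [Module.End.mem_eigenspace_iff]
      have hcomm : upM 1 * D = D * (upM 1) ^ (k i) := by
        rw [upM_pow]
        have := hne i
        ext a b
        fin_cases a <;> fin_cases b <;>
          simp [Matrix.mul_apply, Fin.sum_univ_two, hD, diM_coe, upM_coe, k]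
        push_cast at this
        field_simp
      rw [hT, ← Module.End.mul_apply, ← map_mul, hcomm, map_mul, Module.End.mul_apply, map_pow,
        hpowv, map_smul]
    · intro h0
      apply hv.2
      have : ρ D⁻¹ (ρ D v) = v := by
        rw [← Module.End.mul_apply, ← map_mul]; simp
      rw [← this, h0, map_zero]
  have hinj : Function.Injective (fun i => μ ^ k i) := by
    intro i j hij
    simp only at hij
    have hfin : IsOfFinOrder μ := orderOf_pos_iff.1 (hord ▸ hp.pos)
    rw [hfin.pow_eq_pow_iff_modEq, hord] at hij
    have h1 : ((k i : ℕ) : ZMod p) = k j := (ZMod.natCast_eq_natCast_iff' _ _ _).2 hij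
    simp only [k] at h1
    push_cast at h1
    have h2 : (((i : ℕ) : ZMod p) - (j : ℕ)) * (((i + j + 2 : ℕ) : ZMod p)) = 0 := by
      push_cast; linear_combination h1
    have hi := i.2
    have hj := j.2
    rcases mul_eq_zero.1 h2 with h3 | h3
    · rw [sub_eq_zero, ZMod.natCast_eq_natCast_iff'] at h3
      rw [Nat.mod_eq_of_lt (by omega), Nat.mod_eq_of_lt (by omega)] at h3
      exact Fin.ext h3
    · rw [ZMod.natCast_eq_zero_iff] at h3
      have := Nat.le_of_dvd (by omega) h3
      omega
  have hli := Module.End.eigenvectors_linearIndependent' T _ hinj _ hev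
  simpa using hli.fintype_card_le_finrank
theorem nik {p : ℕ} [Fact p.Prime] (H : Finset (SLp p)) (f : EuclideanSpace ℂ (SLp p))
    (K : Matrix (SLp p) (SLp p) ℂ)
    (hK : ∀ x y, K x y = (if x * y⁻¹ ∈ H then 1 else 0) -
      (H.card : ℂ) / Fintype.card (SLp p)) :
    (((p - 1) / 2 : ℕ) : ℝ) * ‖Matrix.toEuclideanLin K f‖ ^ 2 ≤
      (H.card * Fintype.card (SLp p)) * ‖f‖ ^ 2 := by
  classical
  set n := Fintype.card (SLp p) with hn
  have hn0 : (n : ℂ) ≠ 0 := by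
    have : 0 < n := Fintype.card_pos
    exact_mod_cast this.ne'
  have hcount : ∀ y : SLp p, Finset.card {x | x * y⁻¹ ∈ H} = H.card := by
    intro y
    refine Finset.card_bij (fun x _ => x * y⁻¹) (by simp) (by simp) ?_
    intro b hb
    exact ⟨b * y, by simpa using hb, by simp⟩
  have hcount' : ∀ x : SLp p, Finset.card {y | x * y⁻¹ ∈ H} = H.card := by
    intro y
    refine Finset.card_bij (fun x _ => y * x⁻¹) (by simp) (by simp) ?_
    intro b hb
    exact ⟨b⁻¹ * y, by simpa using hb, by simp⟩
  have hrow : ∀ x, ∑ y, K x y = 0 := by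
    intro x
    simp only [hK, Finset.sum_sub_distrib, Finset.sum_boole, hcount', Finset.sum_const,
      Finset.card_univ, nsmul_eq_mul, ← hn]
    field_simp
    ring
  have hinv : ∀ x y g, K (x * g) (y * g) = K x y := by
    intro x y g
    simp [hK, mul_assoc]
  have hcol : ∀ y, ∑ x, ‖K x y‖ ^ 2 ≤ H.card := by
    intro y
    have hr : ∀ x, ‖K x y‖ ^ 2 = (if x * y⁻¹ ∈ H then (1 : ℝ) else 0) * (1 - 2 * (H.card / n)) +
        (H.card / n : ℝ) ^ 2 := by
      intro x
      have : K x y = (((if x * y⁻¹ ∈ H then (1 : ℝ) else 0) - (H.card / n : ℝ) : ℝ) : ℂ) := by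
        rw [hK]; split_ifs <;> simp
      rw [this, Complex.norm_real, Real.norm_eq_abs, sq_abs]
      split_ifs <;> ring
    have hn0' : (n : ℝ) ≠ 0 := by exact_mod_cast hn0
    simp only [hr, Finset.sum_add_distrib, ← Finset.sum_mul, Finset.sum_boole, hcount,
      Finset.sum_const, Finset.card_univ, nsmul_eq_mul, ← hn]
    have : (H.card : ℝ) * (1 - 2 * (H.card / n)) + n * (H.card / n : ℝ) ^ 2 =
      H.card - (H.card : ℝ) ^ 2 / n := by
      field_simp
      ring
    rw [this]
    have : 0 ≤ (H.card : ℝ) ^ 2 / n := by positivity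
    linarith
  set T := Matrix.toEuclideanLin K with hT
  have hTa : ∀ f x, (T f) x = ∑ y, K x y * f y := by
    intro f x
    simp [hT, Matrix.toLpLin_apply, Matrix.mulVec, dotProduct]
  have hadj : ∀ f x, (LinearMap.adjoint T f) x = ∑ y, star (K y x) * f y := by
    intro f x
    rw [hT, ← Matrix.toEuclideanLin_conjTranspose_eq_adjoint]
    simp [Matrix.toLpLin_apply, Matrix.mulVec, dotProduct]
  let R : SLp p →* Module.End ℂ (EuclideanSpace ℂ (SLp p)) :=
    { toFun := fun g =>
        { toFun := fun f => WithLp.toLp 2 (fun x => f (x * g))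
          map_add' := fun f f' => by ext; simp
          map_smul' := fun c f => by ext; simp }
      map_one' := by ext f x; simp
      map_mul' := fun g h => by ext f x; simp [mul_assoc] }
  have hR : ∀ g f x, (R g f) x = f (x * g) := fun g f x => rfl
  have hTR : ∀ g f, T (R g f) = R g (T f) := by
    intro g f
    ext x
    rw [hR, hTa, hTa, ← Equiv.sum_comp (Equiv.mulRight g) (fun y => K (x * g) y * f y)]
    simp [hR, hinv]
  have hAR : ∀ g f, LinearMap.adjoint T (R g f) = R g (LinearMap.adjoint T f) := by
    intro g f
    ext x
    rw [hR, hadj, hadj, ← Equiv.sum_comp (Equiv.mulRight g) (fun y => star (K y (x * g)) * f y)]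
    simp [hR, hinv]
  have key := hs_bound (EuclideanSpace.basisFun (SLp p) ℂ) T ((p - 1) / 2) ?_ f
  · refine key.trans ?_
    gcongr
    calc _ = ∑ y, ∑ x, ‖K x y‖ ^ 2 := by
          refine Finset.sum_congr rfl fun y _ => ?_
          rw [EuclideanSpace.norm_sq_eq]
          refine Finset.sum_congr rfl fun x _ => ?_
          rw [hTa]
          simp [EuclideanSpace.basisFun_apply, Pi.single_apply]
      _ ≤ ∑ y : SLp p, (H.card : ℝ) := Finset.sum_le_sum fun y _ => hcol y
      _ = _ := by simp [← hn, mul_comm]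
  · intro μ hμ0 hμ
    set E := Module.End.eigenspace (LinearMap.adjoint T * T) μ with hE
    have hmem : ∀ f, f ∈ E ↔ LinearMap.adjoint T (T f) = μ • f := by
      intro f
      rw [hE, Module.End.mem_eigenspace_iff, Module.End.mul_apply]
    have hst : ∀ g, ∀ f ∈ E, R g f ∈ E := by
      intro g f hf
      rw [hmem] at hf ⊢
      rw [hTR, hAR, hf, map_smul]
    let ρ : SLp p →* Module.End ℂ E :=
      { toFun := fun g => (R g).restrict (hst g)
        map_one' := by ext f; simp
        map_mul' := fun g h => by ext f; simp }
    obtain ⟨v, hv⟩ := hμ.exists_hasEigenvector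
    have : ∃ g, ρ g ≠ 1 := by
      by_contra! hcon
      apply hv.2
      have hvE : v ∈ E := hv.1
      have h1 : ∀ g, v g = v 1 := by
        intro g
        have h2 := congrArg (fun F => (F ⟨v, hvE⟩ : EuclideanSpace ℂ (SLp p)) 1) (hcon g)
        have h3 : (R g v) 1 = v 1 := h2
        rwa [hR, one_mul] at h3
      have h4 : T v = 0 := by
        ext x
        rw [hTa]
        simp only [h1, ← Finset.sum_mul, hrow]
        simp
      have h5 := (hmem v).1 hvE
      rw [h4, map_zero] at h5
      exact (smul_eq_zero.1 h5.symm).resolve_left hμ0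
    obtain ⟨g₀, hg₀⟩ := this
    exact rep_dim ρ g₀ hg₀

theorem mix {p : ℕ} [Fact p.Prime] (H : Finset (SLp p)) (g : SLp p)
    (hg : ∀ a ∈ H, ∀ b ∈ H, ∀ c ∈ H, a * b * c ≠ g) :
    (p - 1) / 2 * H.card ^ 3 ≤ Fintype.card (SLp p) ^ 3 := by
  classical
  set n := Fintype.card (SLp p) with hn
  have hnpos : 0 < n := Fintype.card_pos
  have hn0 : (n : ℝ) ≠ 0 := by exact_mod_cast hnpos.ne'
  let K : Matrix (SLp p) (SLp p) ℂ := fun x y => (if x * y⁻¹ ∈ H then 1 else 0) -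
      (H.card : ℂ) / Fintype.card (SLp p)
  let f : EuclideanSpace ℂ (SLp p) := WithLp.toLp 2 (fun y => if y ∈ H then 1 else 0)
  have h1 := nik H f K (fun x y => rfl)
  have hf : ‖f‖ ^ 2 = H.card := by
    rw [EuclideanSpace.norm_sq_eq]
    have : ∀ x, ‖f x‖ ^ 2 = if x ∈ H then (1 : ℝ) else 0 := by
      intro x; simp only [f]; split_ifs <;> simp
    simp [this]
  have hC : ∀ c ∈ H, (Matrix.toEuclideanLin K f) (g * c⁻¹) = -((H.card : ℂ) ^ 2 / n) := by
    intro c hc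
    have : (Matrix.toEuclideanLin K f) (g * c⁻¹) = ∑ y, K (g * c⁻¹) y * f y := by
      simp [Matrix.toLpLin_apply, Matrix.mulVec, dotProduct]
    rw [this]
    have h2 : ∀ y, K (g * c⁻¹) y * f y = if y ∈ H then -((H.card : ℂ) / n) else 0 := by
      intro y
      simp only [f, K]
      by_cases hy : y ∈ H
      · have : g * c⁻¹ * y⁻¹ ∉ H := by
          intro h
          exact hg _ h y hy c hc (by group)
        simp [hy, this, ← hn]
      · simp [hy]
    simp only [h2]
    simp
    ring
  have hlow : (H.card : ℝ) * ((H.card : ℝ) ^ 2 / n) ^ 2 ≤ ‖Matrix.toEuclideanLin K f‖ ^ 2 := by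
    rw [EuclideanSpace.norm_sq_eq]
    have hinj : Function.Injective (fun c : SLp p => g * c⁻¹) := by
      intro a b; simp
    calc _ = ∑ c ∈ H, ‖(Matrix.toEuclideanLin K f) (g * c⁻¹)‖ ^ 2 := by
          rw [Finset.sum_congr rfl (fun c hc => by rw [hC c hc])]
          simp
      _ = ∑ x ∈ H.image (fun c => g * c⁻¹), ‖(Matrix.toEuclideanLin K f) x‖ ^ 2 := by
          rw [Finset.sum_image (fun a _ b _ h => hinj h)]
      _ ≤ _ := Finset.sum_le_sum_of_subset_of_nonneg (Finset.subset_univ _)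
          fun _ _ _ => by positivity
  rw [hf] at h1
  rcases Nat.eq_zero_or_pos H.card with h0 | h0
  · simp [h0]
  have hh : (0 : ℝ) < H.card := by exact_mod_cast h0
  have hnr : (0 : ℝ) < n := by exact_mod_cast hnpos
  have h3 : (((p - 1) / 2 : ℕ) : ℝ) * ((H.card : ℝ) * ((H.card : ℝ) ^ 2 / n) ^ 2) ≤
      (H.card * n) * H.card := le_trans (by gcongr) h1
  have h4 : (((p - 1) / 2 : ℕ) : ℝ) * (H.card : ℝ) ^ 3 ≤ (n : ℝ) ^ 3 := by
    have h5 := mul_le_mul_of_nonneg_right h3 (by positivity : 0 ≤ (n : ℝ) ^ 2 / (H.card : ℝ) ^ 2)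
    have e1 : (((p - 1) / 2 : ℕ) : ℝ) * ((H.card : ℝ) * ((H.card : ℝ) ^ 2 / n) ^ 2) *
        ((n : ℝ) ^ 2 / (H.card : ℝ) ^ 2) = (((p - 1) / 2 : ℕ) : ℝ) * (H.card : ℝ) ^ 3 := by
      field_simp
    have e2 : (H.card * n : ℝ) * H.card * ((n : ℝ) ^ 2 / (H.card : ℝ) ^ 2) = (n : ℝ) ^ 3 := by
      field_simp
    rw [e1, e2] at h5
    exact h5
  exact_mod_cast h4

theorem stmt_11 (p : ℕ) [Fact p.Prime] (hp : 3 ≤ p)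
    (H : Finset (Matrix.SpecialLinearGroup (Fin 2) (ZMod p)))
    (hbig : 2 ^ 9 * Fintype.card (Matrix.SpecialLinearGroup (Fin 2) (ZMod p)) ^ 8 ≤
      H.card ^ 9) :
    (H ^ 3 : Finset (Matrix.SpecialLinearGroup (Fin 2) (ZMod p))) = Finset.univ := by
  rw [Finset.eq_univ_iff_forall]
  intro g
  by_contra hg
  have hm := mix H g (by
    rintro a ha b hb c hc rfl
    apply hg
    rw [pow_succ, pow_two]
    exact Finset.mul_mem_mul (Finset.mul_mem_mul ha hb) hc)
  have hc := card_le (p := p)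
  have hpp : p.Prime := Fact.out
  set n := Fintype.card (Matrix.SpecialLinearGroup (Fin 2) (ZMod p)) with hn
  have hnpos : 0 < n := Fintype.card_pos
  set d := (p - 1) / 2 with hd
  have h8 : p < 8 * d := by omega
  have h1 : d ^ 3 * H.card ^ 9 ≤ n ^ 9 := by
    calc d ^ 3 * H.card ^ 9 = (d * H.card ^ 3) ^ 3 := by ring
      _ ≤ (n ^ 3) ^ 3 := Nat.pow_le_pow_left hm 3
      _ = n ^ 9 := by ring
  have h2 : (8 * d) ^ 3 * n ^ 8 ≤ n * n ^ 8 := by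
    calc (8 * d) ^ 3 * n ^ 8 = d ^ 3 * (2 ^ 9 * n ^ 8) := by ring
      _ ≤ d ^ 3 * H.card ^ 9 := Nat.mul_le_mul_left _ hbig
      _ ≤ n ^ 9 := h1
      _ = n * n ^ 8 := by ring
  have h3 : (8 * d) ^ 3 ≤ n := Nat.le_of_mul_le_mul_right h2 (by positivity)
  have h4 : p ^ 3 < (8 * d) ^ 3 := Nat.pow_lt_pow_left h8 (by norm_num)
  omega
end

section
/- Let p ≥ 7 be a prime and let H be a symmetric generating set of SL₂(𝔽_p) containing the identity. Then H^(3) contains a regular semisimple element of nonzero trace, i.e. there exists x ∈ H^(3) with tr(x) ≠ 0 and tr(x)² ≠ 4. -/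
open Pointwise

/-- Five-term progression inside `{0, 2, -2}` is constant. -/
lemma escape_arith {F : Type*} [Field F] (h2 : (2 : F) ≠ 0) (h3 : (3 : F) ≠ 0)
    (t w : F) (h0 : t = 0 ∨ t = 2 ∨ t = -2)
    (ha : t + w = 0 ∨ t + w = 2 ∨ t + w = -2)
    (hb : t - w = 0 ∨ t - w = 2 ∨ t - w = -2)
    (hc : t + 2 * w = 0 ∨ t + 2 * w = 2 ∨ t + 2 * w = -2)
    (hd : t - 2 * w = 0 ∨ t - 2 * w = 2 ∨ t - 2 * w = -2) : w = 0 := by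
  have h4 : (4 : F) ≠ 0 := by
    have := mul_ne_zero h2 h2
    norm_num at this; exact this
  have h6 : (6 : F) ≠ 0 := by
    have := mul_ne_zero h2 h3
    norm_num at this; exact this
  have h8 : (8 : F) ≠ 0 := by
    have := mul_ne_zero h2 h4
    norm_num at this; exact this
  rcases h0 with h0 | h0 | h0 <;> rcases ha with ha | ha | ha <;> subst h0 <;> grind

/-- A nonzero nilpotent `n` with `tr (n h) = 0` on generators is impossible. -/
lemma escape_borel {F : Type*} [Field F]
    (S : Set (Matrix.SpecialLinearGroup (Fin 2) F)) (hS : Subgroup.closure S = ⊤)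
    (x y z : F) (hn : x * x + y * z = 0) (hne : ¬ (x = 0 ∧ y = 0 ∧ z = 0))
    (h : ∀ g ∈ S, x * g 0 0 + y * g 1 0 + z * g 0 1 - x * g 1 1 = 0) : False := by
  have key : ∀ g : Matrix.SpecialLinearGroup (Fin 2) F, ∃ l : F,
      (g : Matrix (Fin 2) (Fin 2) F) * !![x, y; z, -x] = l • !![x, y; z, -x] := by
    intro g
    have hg : g ∈ Subgroup.closure S := by rw [hS]; trivial
    induction hg using Subgroup.closure_induction with
    | mem g hg =>
      have e := h g hg
      by_cases hy : y = 0
      · have hx : x = 0 := by subst hy; simpa using hn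
        have hz : z ≠ 0 := by tauto
        have hb : g 0 1 = 0 := by subst hy hx; simpa [hz] using e
        refine ⟨g 1 1, ?_⟩
        ext i j
        fin_cases i <;> fin_cases j <;> simp [Matrix.mul_apply, Fin.sum_univ_two, hx, hy, hb]
      · refine ⟨(g 0 0 * y - g 0 1 * x) / y, ?_⟩
        ext i j
        fin_cases i <;> fin_cases j <;>
          simp [Matrix.mul_apply, Fin.sum_univ_two] <;> field_simp <;> grind
    | one => exact ⟨1, by simp⟩
    | mul a b _ _ ha hb =>
      obtain ⟨l, hl⟩ := ha
      obtain ⟨m, hm⟩ := hb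
      refine ⟨m * l, ?_⟩
      rw [Matrix.SpecialLinearGroup.coe_mul, Matrix.mul_assoc, hm, Matrix.mul_smul, hl, smul_smul]
    | inv a _ ha =>
      obtain ⟨l, hl⟩ := ha
      have e : !![x, y; z, -x] = l • (((a⁻¹ : Matrix.SpecialLinearGroup (Fin 2) F) :
          Matrix (Fin 2) (Fin 2) F) * !![x, y; z, -x]) := by
        rw [← Matrix.mul_smul, ← hl, ← Matrix.mul_assoc, ← Matrix.SpecialLinearGroup.coe_mul]
        simp
      have hl0 : l ≠ 0 := by
        rintro rfl
        rw [zero_smul] at e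
        apply hne
        have e1 := congrFun (congrFun e 0) 0
        have e2 := congrFun (congrFun e 0) 1
        have e3 := congrFun (congrFun e 1) 0
        simp at e1 e2 e3
        exact ⟨e1, e2, e3⟩
      refine ⟨l⁻¹, ?_⟩
      conv_rhs => rw [e]
      rw [smul_smul, inv_mul_cancel₀ hl0, one_smul]
  obtain ⟨l, hl⟩ := key ⟨!![1, 1; 0, 1], by simp [Matrix.det_fin_two]⟩
  obtain ⟨m, hm⟩ := key ⟨!![1, 0; 1, 1], by simp [Matrix.det_fin_two]⟩
  have a1 := congrFun (congrFun hl 0) 0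
  have a2 := congrFun (congrFun hl 1) 0
  have b1 := congrFun (congrFun hm 0) 1
  have b2 := congrFun (congrFun hm 1) 1
  simp [Matrix.mul_apply, Fin.sum_univ_two] at a1 a2 b1 b2
  apply hne
  grind

/-- A noncentral `g` normalized up to sign by generators is impossible. -/
lemma escape_quat {F : Type*} [Field F] (h2 : (2 : F) ≠ 0)
    (S : Set (Matrix.SpecialLinearGroup (Fin 2) F)) (hS : Subgroup.closure S = ⊤)
    (x y z : F) (hne : ¬ (x = 0 ∧ y = 0 ∧ z = 0))
    (h : ∀ g ∈ S, (g : Matrix (Fin 2) (Fin 2) F) * !![x, y; z, -x] = !![x, y; z, -x] * g ∨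
      (g : Matrix (Fin 2) (Fin 2) F) * !![x, y; z, -x] = - (!![x, y; z, -x] * g)) : False := by
  have key : ∀ g : Matrix.SpecialLinearGroup (Fin 2) F,
      (g : Matrix (Fin 2) (Fin 2) F) * !![x, y; z, -x] = !![x, y; z, -x] * g ∨
      (g : Matrix (Fin 2) (Fin 2) F) * !![x, y; z, -x] = - (!![x, y; z, -x] * g) := by
    intro g
    have hg : g ∈ Subgroup.closure S := by rw [hS]; trivial
    generalize !![x, y; z, -x] = N at *
    induction hg using Subgroup.closure_induction with
    | mem g hg => exact h g hg
    | one => left; simp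
    | mul a b _ _ ha hb =>
      rw [Matrix.SpecialLinearGroup.coe_mul, Matrix.mul_assoc]
      rcases ha with ha | ha <;> rcases hb with hb | hb <;> rw [hb] <;>
        simp only [Matrix.mul_neg, ← Matrix.mul_assoc] <;> rw [ha] <;> simp
    | inv a _ ha =>
      have e1 : (a : Matrix (Fin 2) (Fin 2) F) * (a⁻¹ : Matrix.SpecialLinearGroup (Fin 2) F) = 1 := by
        rw [← Matrix.SpecialLinearGroup.coe_mul]; simp
      have e2 : ((a⁻¹ : Matrix.SpecialLinearGroup (Fin 2) F) : Matrix (Fin 2) (Fin 2) F) * a = 1 := by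
        rw [← Matrix.SpecialLinearGroup.coe_mul]; simp
      generalize ((a⁻¹ : Matrix.SpecialLinearGroup (Fin 2) F) : Matrix (Fin 2) (Fin 2) F) = B at *
      generalize (a : Matrix (Fin 2) (Fin 2) F) = A at *
      have e3 : B * (A * N) * B = N * B := by rw [← Matrix.mul_assoc B, e2, Matrix.one_mul]
      have e4 : B * (N * A) * B = B * N := by
        rw [Matrix.mul_assoc, Matrix.mul_assoc, e1, Matrix.mul_one]
      rcases ha with ha | ha
      · left; rw [← e3, ← e4, ha]
      · right; rw [← e3, ← e4, ha]; simp
  have k1 := key ⟨!![1, 1; 0, 1], by simp [Matrix.det_fin_two]⟩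
  have k2 := key ⟨!![1, 0; 1, 1], by simp [Matrix.det_fin_two]⟩
  simp only [← Matrix.ext_iff, Fin.forall_fin_two] at k1 k2
  simp [Matrix.mul_apply, Fin.sum_univ_two] at k1 k2
  apply hne
  clear key h hS hne
  have c : ∀ t : F, 2 * t = 0 → t = 0 := fun t ht => (mul_eq_zero.mp ht).resolve_left h2
  have hy : y = 0 := c y (by rcases k2 with k2 | k2 <;> grind)
  have hz : z = 0 := c z (by rcases k1 with k1 | k1 <;> grind)
  subst hy hz
  have hx : x = 0 := c x (by rcases k1 with k1 | k1 <;> grind)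
  exact ⟨hx, rfl, rfl⟩

theorem stmt_12 (p : ℕ) (hp : p.Prime) (hp7 : 7 ≤ p)
    (H : Finset (Matrix.SpecialLinearGroup (Fin 2) (ZMod p)))
    (hsym : ∀ h ∈ H, h⁻¹ ∈ H)
    (hone : (1 : Matrix.SpecialLinearGroup (Fin 2) (ZMod p)) ∈ H)
    (hgen : Subgroup.closure (H : Set (Matrix.SpecialLinearGroup (Fin 2) (ZMod p))) = ⊤) :
    ∃ x ∈ (H ^ 3 : Finset (Matrix.SpecialLinearGroup (Fin 2) (ZMod p))),
      Matrix.trace (x : Matrix (Fin 2) (Fin 2) (ZMod p)) ≠ 0 ∧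
      Matrix.trace (x : Matrix (Fin 2) (Fin 2) (ZMod p)) ^ 2 ≠ 4 := by
  have : Fact p.Prime := ⟨hp⟩
  have hsmall : ∀ n : ℕ, 0 < n → n < 7 → (n : ZMod p) ≠ 0 := by
    intro n h0 h7 h
    rw [ZMod.natCast_eq_zero_iff] at h
    have := Nat.le_of_dvd h0 h
    omega
  have h2 : (2 : ZMod p) ≠ 0 := by exact_mod_cast hsmall 2 (by norm_num) (by norm_num)
  have h3 : (3 : ZMod p) ≠ 0 := by exact_mod_cast hsmall 3 (by norm_num) (by norm_num)
  have h5 : (5 : ZMod p) ≠ 0 := by exact_mod_cast hsmall 5 (by norm_num) (by norm_num)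
  by_contra hcon
  push Not at hcon
  have T3 : ∀ a ∈ H, ∀ b ∈ H, ∀ c ∈ H,
      Matrix.trace ((a : Matrix (Fin 2) (Fin 2) (ZMod p)) * (b : Matrix (Fin 2) (Fin 2) (ZMod p)) * (c : Matrix (Fin 2) (Fin 2) (ZMod p))) = 0 ∨
      Matrix.trace ((a : Matrix (Fin 2) (Fin 2) (ZMod p)) * (b : Matrix (Fin 2) (Fin 2) (ZMod p)) * (c : Matrix (Fin 2) (Fin 2) (ZMod p))) = 2 ∨
      Matrix.trace ((a : Matrix (Fin 2) (Fin 2) (ZMod p)) * (b : Matrix (Fin 2) (Fin 2) (ZMod p)) * (c : Matrix (Fin 2) (Fin 2) (ZMod p))) = -2 := by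
    intro a ha b hb c hc
    have hm : a * b * c ∈ H ^ 3 := by
      rw [pow_succ, pow_two]
      exact Finset.mul_mem_mul (Finset.mul_mem_mul ha hb) hc
    have := hcon _ hm
    rw [Matrix.SpecialLinearGroup.coe_mul, Matrix.SpecialLinearGroup.coe_mul] at this
    by_cases h0 : Matrix.trace ((a : Matrix (Fin 2) (Fin 2) (ZMod p)) * (b : Matrix (Fin 2) (Fin 2) (ZMod p)) * (c : Matrix (Fin 2) (Fin 2) (ZMod p))) = 0
    · exact Or.inl h0
    · right
      have h4 := this h0
      apply sq_eq_sq_iff_eq_or_eq_neg.mp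
      rw [h4]; norm_num
  have T2 : ∀ a ∈ H, ∀ b ∈ H,
      Matrix.trace ((a : Matrix (Fin 2) (Fin 2) (ZMod p)) * (b : Matrix (Fin 2) (Fin 2) (ZMod p))) = 0 ∨
      Matrix.trace ((a : Matrix (Fin 2) (Fin 2) (ZMod p)) * (b : Matrix (Fin 2) (Fin 2) (ZMod p))) = 2 ∨
      Matrix.trace ((a : Matrix (Fin 2) (Fin 2) (ZMod p)) * (b : Matrix (Fin 2) (Fin 2) (ZMod p))) = -2 := by
    intro a ha b hb
    simpa using T3 a ha b hb 1 hone
  have T1 : ∀ a ∈ H, Matrix.trace (a : Matrix (Fin 2) (Fin 2) (ZMod p)) = 0 ∨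
      Matrix.trace (a : Matrix (Fin 2) (Fin 2) (ZMod p)) = 2 ∨
      Matrix.trace (a : Matrix (Fin 2) (Fin 2) (ZMod p)) = -2 := by
    intro a ha
    simpa using T2 a ha 1 hone
  have D : ∀ a : Matrix.SpecialLinearGroup (Fin 2) (ZMod p),
      a 0 0 * a 1 1 - a 0 1 * a 1 0 = 1 := by
    intro a
    have := a.det_coe
    rwa [Matrix.det_fin_two] at this
  have I : ∀ a : Matrix.SpecialLinearGroup (Fin 2) (ZMod p),
      a⁻¹ 0 0 = a 1 1 ∧ a⁻¹ 0 1 = - a 0 1 ∧ a⁻¹ 1 0 = - a 1 0 ∧ a⁻¹ 1 1 = a 0 0 := by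
    intro a
    have := Matrix.SpecialLinearGroup.SL2_inv_expl a
    simp [this]
  simp only [Matrix.trace_fin_two, Matrix.mul_apply, Fin.sum_univ_two] at T3 T2 T1
  -- Case 1
  have C1 : ∀ a ∈ H, ∀ e : ZMod p, e = 1 ∨ e = -1 → a 0 0 + a 1 1 = 2 * e →
      a 0 0 = e ∧ a 0 1 = 0 ∧ a 1 0 = 0 := by
    intro a ha e he hta
    by_contra hne
    refine escape_borel _ hgen (a 0 0 - e) (a 0 1) (a 1 0) ?_ ?_ ?_
    · have := D a
      rcases he with rfl | rfl <;> linear_combination (-1) * this + a 0 0 * hta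
    · rw [sub_eq_zero]; exact hne
    · intro h hh
      have hh : h ∈ H := hh
      have ha' := hsym a ha
      obtain ⟨i1, i2, i3, i4⟩ := I a
      have t1 := T1 h hh
      have t2 := T2 a ha h hh
      have t3 := T2 _ ha' h hh
      have t4 := T3 a ha a ha h hh
      have t5 := T3 _ ha' _ ha' h hh
      rw [i1, i2, i3, i4] at t3 t5
      have d := D a
      have hd1 : a 1 1 = 2 * e - a 0 0 := by linear_combination hta
      rw [hd1] at t2 t3 t4 t5 d
      generalize a 0 0 = A at *
      generalize a 0 1 = B at *
      generalize a 1 0 = C at *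
      generalize h 0 0 = X at *
      generalize h 0 1 = Y at *
      generalize h 1 0 = Z at *
      generalize h 1 1 = W at *
      have hBC : B * C = A * (2 * e - A) - 1 := by linear_combination -d
      have s1 : e * (X + W) + ((A - e) * X + B * Z + C * Y - (A - e) * W)
        = A * X + B * Z + (C * Y + (2 * e - A) * W) := by ring
      have s2 : e * (X + W) - ((A - e) * X + B * Z + C * Y - (A - e) * W)
        = (2 * e - A) * X + -B * Z + (-C * Y + A * W) := by ring
      have he2 : e * e = 1 := by rcases he with rfl | rfl <;> ring
      have s3 : e * (X + W) + 2 * ((A - e) * X + B * Z + C * Y - (A - e) * W)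
        = e * ((A * A + B * C) * X + (A * B + B * (2 * e - A)) * Z +
          ((C * A + (2 * e - A) * C) * Y + (C * B + (2 * e - A) * (2 * e - A)) * W)) := by
        rcases he with rfl | rfl
        · linear_combination (-(X+W)) * hBC
        · linear_combination (X+W) * hBC
      have s4 : e * (X + W) - 2 * ((A - e) * X + B * Z + C * Y - (A - e) * W)
        = e * (((2 * e - A) * (2 * e - A) + -B * -C) * X + ((2 * e - A) * -B + -B * A) * Z +
          ((-C * (2 * e - A) + A * -C) * Y + (-C * -B + A * A) * W)) := by
        rcases he with rfl | rfl
        · linear_combination (-(X+W)) * hBC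
        · linear_combination (X+W) * hBC
      have T_e : ∀ t : ZMod p, t = 0 ∨ t = 2 ∨ t = -2 → e * t = 0 ∨ e * t = 2 ∨ e * t = -2 := by
        rintro t (rfl | rfl | rfl) <;> rcases he with rfl | rfl <;> simp
      refine escape_arith h2 h3 (e * (X + W)) _ (T_e _ t1) ?_ ?_ ?_ ?_
      · rw [s1]; exact t2
      · rw [s2]; exact t3
      · rw [s3]; apply T_e; convert t4 using 2 <;> ring_nf
      · rw [s4]; apply T_e; convert t5 using 2 <;> ring_nf
  -- every element of H is either scalar or traceless
  have C1' : ∀ a ∈ H, a 1 1 = - a 0 0 ∨ (a 0 1 = 0 ∧ a 1 0 = 0 ∧ a 1 1 = a 0 0) := by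
    intro a ha
    rcases T1 a ha with h | h | h
    · left; linear_combination h
    · right
      obtain ⟨q1, q2, q3⟩ := C1 a ha 1 (Or.inl rfl) (by rw [h]; ring)
      exact ⟨q2, q3, by linear_combination h - 2 * q1⟩
    · right
      obtain ⟨q1, q2, q3⟩ := C1 a ha (-1) (Or.inr rfl) (by rw [h]; ring)
      exact ⟨q2, q3, by linear_combination h - 2 * q1⟩
  -- Case 2
  have C2 : ∀ g ∈ H, ∀ h ∈ H, g 1 1 = - g 0 0 → h 1 1 = - h 0 0 → ∀ e : ZMod p,
      e = 1 ∨ e = -1 →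
      2 * (g 0 0 * h 0 0) + g 0 1 * h 1 0 + g 1 0 * h 0 1 = 2 * e →
      g 0 0 + e * h 0 0 = 0 ∧ g 0 1 + e * h 0 1 = 0 ∧ g 1 0 + e * h 1 0 = 0 := by
    intro g hg h hh tg th e he hs
    by_contra hne
    have he2 : e * e = 1 := by rcases he with rfl | rfl <;> ring
    have dg := D g
    have dh := D h
    rw [tg] at dg
    rw [th] at dh
    refine escape_borel _ hgen _ _ _ ?_ hne ?_
    · linear_combination -dg - e * e * dh + e * hs + he2
    · intro k hk
      have hk : k ∈ H := hk
      rcases C1' k hk with tk | ⟨k1, k2, k3⟩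
      · have dk := D k
        have t1 := T2 g hg k hk
        have t2 := T2 h hh k hk
        have t3 := T3 g hg h hh k hk
        rw [tk] at dk t1 t2 t3 ⊢
        rw [tg] at t1 t3
        rw [th] at t2 t3
        clear hne T1 T2 T3 C1 C1' D I hcon hsmall hgen hsym
        generalize g 0 0 = a at *
        generalize g 0 1 = b at *
        generalize g 1 0 = c at *
        generalize h 0 0 = a' at *
        generalize h 0 1 = b' at *
        generalize h 1 0 = c' at *
        generalize k 0 0 = x at *
        generalize k 0 1 = y at *
        generalize k 1 0 = z at *
        have e1 : b * c = -1 - a * a := by linear_combination -dg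
        have e2 : b' * c' = -1 - a' * a' := by linear_combination -dh
        have e3 : y * z = -1 - x * x := by linear_combination -dk
        set t := a * x + b * z + (c * y + -a * -x) with ht
        set r := a' * x + b' * z + (c' * y + -a' * -x) with hr
        have gram : ∀ q, q = (a * a' + b * c') * x + (a * b' + b * -a') * z +
            ((c * a' + -a * c') * y + (c * b' + -a * -a') * -x) →
            q ^ 2 = -(t + e * r) ^ 2 := by
          intro q hq
          have gen : q ^ 2 = 4 * ((-a * a - b * c) * (-a' * a' - b' * c') * (-x * x - y * z))
              - (2 * e) * t * r - (2 * e) ^ 2 * (-x * x - y * z)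
              - t ^ 2 * (-a' * a' - b' * c') - r ^ 2 * (-a * a - b * c) := by
            rw [← hs, hq, ht, hr]; ring
          rw [gen, e1, e2, e3]
          linear_combination (r ^ 2 - 4) * he2
        have gq := gram _ rfl
        have goal : t + e * r = 0 := by
          have h4 : (4 : ZMod p) ≠ 0 := by
            have := mul_ne_zero h2 h2
            norm_num at this; exact this
          generalize (a * a' + b * c') * x + (a * b' + b * -a') * z +
            ((c * a' + -a * c') * y + (c * b' + -a * -a') * -x) = q at *
          clear_value t r
          clear ht hr gram e1 e2 e3 dg dh dk hs he2
          have hq : q ^ 2 = 0 ∨ q ^ 2 = 4 := by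
            rcases t3 with rfl | rfl | rfl <;> norm_num
          have h8 : (8 : ZMod p) ≠ 0 := by
            have := mul_ne_zero h2 h4
            norm_num at this; exact this
          have h20 : (20 : ZMod p) ≠ 0 := by
            have := mul_ne_zero h5 h4
            norm_num at this; exact this
          clear t3
          rcases hq with hq | hq
          · rw [hq] at gq
            have : (t + e * r) ^ 2 = 0 := by linear_combination gq
            exact pow_eq_zero_iff (two_ne_zero) |>.mp this
          · exfalso
            rw [hq] at gq
            rcases he with rfl | rfl <;> rcases t1 with rfl | rfl | rfl <;>
              rcases t2 with rfl | rfl | rfl <;>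
              first
              | exact h4 (by linear_combination gq)
              | exact h8 (by linear_combination gq)
              | exact h20 (by linear_combination gq)
        rw [ht, hr] at goal
        linear_combination goal
      · rw [k1, k2, k3]; ring
  -- Case 3
  by_cases hex : ∃ g ∈ H, g 1 1 = - g 0 0
  · obtain ⟨g, hg, tg⟩ := hex
    have dg := D g
    rw [tg] at dg
    refine escape_quat h2 _ hgen (g 0 0) (g 0 1) (g 1 0) ?_ ?_
    · rintro ⟨q1, q2, q3⟩
      rw [q1, q2, q3] at dg
      simp at dg
    · intro h hh
      have hh : h ∈ H := hh
      simp only [← Matrix.ext_iff, Fin.forall_fin_two, Matrix.neg_apply, Matrix.mul_apply,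
        Fin.sum_univ_two, Matrix.of_apply, Matrix.cons_val_zero, Matrix.cons_val_one]
      rcases C1' h hh with th | ⟨k1, k2, k3⟩
      · have s := T2 g hg h hh
        rw [tg, th] at s
        have par : ∀ e : ZMod p, e = 1 ∨ e = -1 →
            2 * (g 0 0 * h 0 0) + g 0 1 * h 1 0 + g 1 0 * h 0 1 = 2 * e →
            g 0 0 = - e * h 0 0 ∧ g 0 1 = - e * h 0 1 ∧ g 1 0 = - e * h 1 0 := by
          intro e he hs
          obtain ⟨q1, q2, q3⟩ := C2 g hg h hh tg th e he hs
          exact ⟨by linear_combination q1, by linear_combination q2, by linear_combination q3⟩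
        rcases s with s | s | s
        · right
          rw [th]
          refine ⟨⟨?_, ?_⟩, ?_, ?_⟩
          · linear_combination s
          · ring
          · ring
          · linear_combination s
        · left
          obtain ⟨q1, q2, q3⟩ := par 1 (Or.inl rfl) (by linear_combination s)
          rw [th, q1, q2, q3]
          refine ⟨⟨?_, ?_⟩, ?_, ?_⟩ <;> ring
        · left
          obtain ⟨q1, q2, q3⟩ := par (-1) (Or.inr rfl) (by linear_combination s)
          rw [th, q1, q2, q3]
          refine ⟨⟨?_, ?_⟩, ?_, ?_⟩ <;> ring
      · left
        rw [k1, k2, k3]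
        refine ⟨⟨?_, ?_⟩, ?_, ?_⟩ <;> ring
  · push Not at hex
    refine escape_borel _ hgen 0 1 0 (by simp) (by simp) ?_
    intro g hg
    rcases C1' g hg with h | ⟨k1, k2, k3⟩
    · exact absurd h (hex g hg)
    · rw [k1, k2]; simp
end

section
/- Let p ≥ 3 be a prime and let g ∈ SL₂(𝔽_p) satisfy tr(g) ≠ 0 and tr(g)² ≠ 4. Let H be a symmetric generating set of SL₂(𝔽_p) containing the identity. Then |{x ∈ H : tr(x) = tr(g)}|³ ≤ 343 · |H^(3)|², unless |H^(3)|^28 > |H|^29. (Equivalently, with α = |H^(3)|/|H| the tripling constant, |{x ∈ H : tr(x) = tr(g)}| ≤ 7·α^(2/3)·|H|^(2/3) unless α > |H|^(1/28). The set {x : tr(x) = tr(g)} is the intersection of H with the conjugacy class of g in SL₂ over the algebraic closure of 𝔽_p.) -/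
open Pointwise

section LP
variable {F : Type*} [Field F]

/-- nonzero nilpotent matrices -/
def LPNil (n : Matrix (Fin 2) (Fin 2) F) : Prop := n.trace = 0 ∧ n.det = 0 ∧ n ≠ 0

lemma LPNil.entries {n : Matrix (Fin 2) (Fin 2) F} (h : LPNil n) :
    n 1 1 = - n 0 0 ∧ n 0 0 * n 0 0 + n 0 1 * n 1 0 = 0 ∧ (n 0 1 ≠ 0 ∨ n 1 0 ≠ 0) := by
  obtain ⟨h1, h2, h3⟩ := h
  rw [Matrix.trace_fin_two] at h1
  rw [Matrix.det_fin_two] at h2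
  have h11 : n 1 1 = - n 0 0 := by linear_combination h1
  refine ⟨h11, ?_, ?_⟩
  · rw [h11] at h2; linear_combination -h2
  · by_contra! hc
    apply h3
    have h0 : n 0 0 = 0 := by
      rw [h11, hc.1] at h2
      have : n 0 0 * n 0 0 = 0 := by linear_combination -h2
      simpa using this
    ext i j
    fin_cases i <;> fin_cases j <;> simp [hc, h0, h11]

lemma LPNil.sq {n : Matrix (Fin 2) (Fin 2) F} (h : LPNil n) : n * n = 0 := by
  obtain ⟨h1, h2, -⟩ := h.entries
  ext i j
  fin_cases i <;> fin_cases j <;> simp [Matrix.mul_apply, Fin.sum_univ_two, h1] <;>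
    grind

lemma LPNil.sandwich {n : Matrix (Fin 2) (Fin 2) F} (h : LPNil n) (W : Matrix (Fin 2) (Fin 2) F) :
    n * W * n = (W * n).trace • n := by
  obtain ⟨h1, h2, -⟩ := h.entries
  ext i j
  fin_cases i <;> fin_cases j <;>
    simp [Matrix.mul_apply, Fin.sum_univ_two, Matrix.trace_fin_two, h1] <;> grind

/-- eigenvalue on the left -/
lemma LPNil.eig {n : Matrix (Fin 2) (Fin 2) F} (h : LPNil n) {y : Matrix (Fin 2) (Fin 2) F}
    (hy : (y * n).trace = 0) :
    ∃ l : F, y * n = l • n ∧ n * y = (y.trace - l) • n ∧ l * l - y.trace * l + y.det = 0 := by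
  obtain ⟨h1, h2, h3⟩ := h.entries
  simp only [Matrix.trace_fin_two, Matrix.mul_apply, Fin.sum_univ_two, h1] at hy
  rcases h3 with h3 | h3
  · refine ⟨y 0 0 - y 0 1 * n 0 0 / n 0 1, ?_, ?_, ?_⟩
    · ext i j
      fin_cases i <;> fin_cases j <;>
        simp [Matrix.mul_apply, Fin.sum_univ_two, h1] <;> field_simp <;> grind
    · ext i j
      fin_cases i <;> fin_cases j <;>
        simp [Matrix.mul_apply, Fin.sum_univ_two, Matrix.trace_fin_two, h1] <;> field_simp <;> grind
    · rw [Matrix.trace_fin_two, Matrix.det_fin_two]; field_simp; grind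
  · refine ⟨y 1 1 + y 1 0 * n 0 0 / n 1 0, ?_, ?_, ?_⟩
    · ext i j
      fin_cases i <;> fin_cases j <;>
        simp [Matrix.mul_apply, Fin.sum_univ_two, h1] <;> field_simp <;> grind
    · ext i j
      fin_cases i <;> fin_cases j <;>
        simp [Matrix.mul_apply, Fin.sum_univ_two, Matrix.trace_fin_two, h1] <;> field_simp <;> grind
    · rw [Matrix.trace_fin_two, Matrix.det_fin_two]; field_simp; grind

lemma LPNil.tr_of_eig {n : Matrix (Fin 2) (Fin 2) F} (h : LPNil n) {y : Matrix (Fin 2) (Fin 2) F}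
    {l : F} (hy : y * n = l • n) : (y * n).trace = 0 := by
  rw [hy, Matrix.trace_smul, h.1, smul_zero]

/-- trace zero annihilators of n are multiples of n -/
lemma LPNil.annih {n : Matrix (Fin 2) (Fin 2) F} (h : LPNil n) {d : Matrix (Fin 2) (Fin 2) F}
    (hd : d.trace = 0) (hdn : d * n = 0) : ∃ s : F, d = s • n := by
  obtain ⟨h1, h2, h3⟩ := h.entries
  rw [Matrix.trace_fin_two] at hd
  have hd1 : d 1 1 = - d 0 0 := by linear_combination hd
  have e00 := congrFun (congrFun hdn 0) 0
  have e01 := congrFun (congrFun hdn 0) 1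
  have e10 := congrFun (congrFun hdn 1) 0
  have e11 := congrFun (congrFun hdn 1) 1
  simp only [Matrix.mul_apply, Fin.sum_univ_two, h1, hd1, Matrix.zero_apply] at e00 e01 e10 e11
  rcases h3 with h3 | h3
  · refine ⟨d 0 1 / n 0 1, ?_⟩
    ext i j
    fin_cases i <;> fin_cases j <;> simp [h1, hd1] <;> field_simp <;> grind
  · refine ⟨d 1 0 / n 1 0, ?_⟩
    ext i j
    fin_cases i <;> fin_cases j <;> simp [h1, hd1] <;> field_simp <;> grind

/-- the elements of trace t, det 1 in a Borel subgroup lie on two lines. -/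
lemma LPNil.lines {n : Matrix (Fin 2) (Fin 2) F} (h : LPNil n) {t : F}
    {x y : Matrix (Fin 2) (Fin 2) F}
    (hyt : y.trace = t) (hyd : y.det = 1) (hxt : x.trace = t) (hxd : x.det = 1)
    (hy : (y * n).trace = 0) (hx : (x * n).trace = 0) :
    (∃ s : F, x = y + s • n) ∨ (∃ s : F, x = (t • 1 - y) + s • n) := by
  obtain ⟨l, hl, -, hl2⟩ := h.eig hy
  obtain ⟨m, hm, -, hm2⟩ := h.eig hx
  rw [hyt, hyd] at hl2
  rw [hxt, hxd] at hm2
  have : (m - l) * (m - (t - l)) = 0 := by linear_combination hm2 - hl2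
  rcases mul_eq_zero.mp this with hc | hc
  · left
    have : (x - y) * n = 0 := by
      rw [sub_mul, hl, hm, ← sub_smul, hc, zero_smul]
    obtain ⟨s, hs⟩ := h.annih (d := x - y) (by rw [Matrix.trace_sub, hxt, hyt, sub_self]) this
    exact ⟨s, by rw [← hs]; abel⟩
  · right
    have : (x - (t • 1 - y)) * n = 0 := by
      rw [sub_mul, sub_mul, hl, hm, smul_mul_assoc, one_mul, ← sub_smul, ← sub_smul, hc, zero_smul]
    obtain ⟨s, hs⟩ := h.annih (d := x - (t • 1 - y))
      (by rw [Matrix.trace_sub, Matrix.trace_sub, hxt, hyt, Matrix.trace_smul, Matrix.trace_one]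
          simp; ring) this
    exact ⟨s, by rw [← hs]; abel⟩

/-- Given an eigenvalue of a non scalar matrix, n is unique up to scaling. -/
lemma LPNil.unique {y : Matrix (Fin 2) (Fin 2) F} (hyd : y.det = 1) (hy4 : y.trace ^ 2 ≠ 4)
    (l : F) : ∃ n0 : Matrix (Fin 2) (Fin 2) F, ∀ n, LPNil n → y * n = l • n →
      ∃ c : F, n = c • n0 := by
  have key : ∀ a b : F, (a ≠ 0 ∨ b ≠ 0) → ∀ n : Matrix (Fin 2) (Fin 2) F, LPNil n →
      a * n 0 0 + b * n 1 0 = 0 → a * n 0 1 - b * n 0 0 = 0 →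
      ∃ c : F, n = c • !![a * b, b * b; -(a * a), - (a * b)] := by
    intro a b hab n h e1 e2
    obtain ⟨h1, h2, h3⟩ := h.entries
    rcases hab with ha | hb
    · refine ⟨- n 1 0 / (a * a), ?_⟩
      ext i j
      fin_cases i <;> fin_cases j <;> simp [h1] <;> field_simp <;> grind
    · refine ⟨n 0 1 / (b * b), ?_⟩
      ext i j
      fin_cases i <;> fin_cases j <;> simp [h1] <;> field_simp <;> grind
  by_cases hr : y 0 0 - l ≠ 0 ∨ y 0 1 ≠ 0
  · refine ⟨_, fun n h hn => key _ _ hr n h ?_ ?_⟩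
    · have := congrFun (congrFun hn 0) 0
      simp [Matrix.mul_apply, Fin.sum_univ_two] at this
      linear_combination this
    · have := congrFun (congrFun hn 0) 1
      simp [Matrix.mul_apply, Fin.sum_univ_two, h.entries.1] at this
      linear_combination this
  · by_cases hr2 : y 1 0 ≠ 0 ∨ y 1 1 - l ≠ 0
    · refine ⟨_, fun n h hn => key _ _ hr2 n h ?_ ?_⟩
      · have := congrFun (congrFun hn 1) 0
        simp [Matrix.mul_apply, Fin.sum_univ_two] at this
        linear_combination this
      · have := congrFun (congrFun hn 1) 1
        simp [Matrix.mul_apply, Fin.sum_univ_two, h.entries.1] at this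
        linear_combination this
    · exfalso
      push Not at hr hr2
      rw [Matrix.det_fin_two] at hyd
      rw [Matrix.trace_fin_two] at hy4
      apply hy4
      have e1 : y 0 0 = l := by linear_combination hr.1
      have e2 : y 1 1 = l := by linear_combination hr2.2
      rw [e1, e2, hr.2] at hyd
      rw [e1, e2]
      linear_combination 4 * hyd

/-- Three distinct collinear points on the quadric. -/
lemma lp_collinear {s : F} {z n : Matrix (Fin 2) (Fin 2) F} (hn : n ≠ 0) (hs0 : s ≠ 0)
    (hs1 : s ≠ 1) (htn : n.trace = 0) (hz : z.det = 1) (hz1 : (z + n).det = 1)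
    (hz2 : (z + s • n).det = 1) : LPNil n ∧ (z * n).trace = 0 := by
  have hn1 : n 1 1 = - n 0 0 := by rw [Matrix.trace_fin_two] at htn; linear_combination htn
  simp [Matrix.det_fin_two, hn1] at hz hz1 hz2
  have hq : n 0 0 * n 0 0 + n 0 1 * n 1 0 = 0 := by
    have : s * (s - 1) * (n 0 0 * n 0 0 + n 0 1 * n 1 0) = 0 := by
      linear_combination -hz2 + s * hz1 + (1 - s) * hz
    simpa [hs0, sub_ne_zero.mpr hs1] using this
  refine ⟨⟨htn, ?_, hn⟩, ?_⟩
  · rw [Matrix.det_fin_two, hn1]; linear_combination -hq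
  · simp [Matrix.trace_fin_two, Matrix.mul_apply, Fin.sum_univ_two, hn1]
    linear_combination -hz1 + hz - hq

/-- orthogonality to two independent vectors -/
lemma lp_cross {a1 a2 a3 b1 b2 b3 : F}
    (hW : a2 * b3 - a3 * b2 ≠ 0 ∨ a3 * b1 - a1 * b3 ≠ 0 ∨ a1 * b2 - a2 * b1 ≠ 0) :
    ∃ w1 w2 w3 : F, ∀ d1 d2 d3 : F, d1 * a1 + d2 * a2 + d3 * a3 = 0 →
      d1 * b1 + d2 * b2 + d3 * b3 = 0 → ∃ c : F, d1 = c * w1 ∧ d2 = c * w2 ∧ d3 = c * w3 := by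
  refine ⟨a2 * b3 - a3 * b2, a3 * b1 - a1 * b3, a1 * b2 - a2 * b1, fun d1 d2 d3 e1 e2 => ?_⟩
  rcases hW with h | h | h
  · refine ⟨d1 / (a2 * b3 - a3 * b2), ?_, ?_, ?_⟩ <;> rw [div_mul_eq_mul_div, eq_div_iff h] <;> grind
  · refine ⟨d2 / (a3 * b1 - a1 * b3), ?_, ?_, ?_⟩ <;> rw [div_mul_eq_mul_div, eq_div_iff h] <;> grind
  · refine ⟨d3 / (a1 * b2 - a2 * b1), ?_, ?_, ?_⟩ <;> rw [div_mul_eq_mul_div, eq_div_iff h] <;> grind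

lemma lp_fiber {t : F} (ht : t ≠ 0) {y0 y1 y2 a b : Matrix (Fin 2) (Fin 2) F}
    (h0 : y0.trace = t) (h1 : y1.trace = t) (h2 : y2.trace = t)
    (h0d : y0.det = 1) (h1d : y1.det = 1) (h2d : y2.det = 1)
    (h0a : (y0 * a).trace = t) (h1a : (y1 * a).trace = t) (h2a : (y2 * a).trace = t)
    (h0b : (y0 * b).trace = t) (h1b : (y1 * b).trace = t) (h2b : (y2 * b).trace = t)
    (had : (y0 * a).det = 1) (hbd : (y0 * b).det = 1)
    (h01 : y0 ≠ y1) (h02 : y0 ≠ y2) (h12 : y1 ≠ y2)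
    (hxa : y0 ≠ y0 * a) (hxb : y0 ≠ y0 * b) (hab : y0 * a ≠ y0 * b) :
    ∃ n, LPNil n ∧ (y0 * n).trace = 0 ∧ (y0 * a * n).trace = 0 ∧ (y0 * b * n).trace = 0 := by
  by_cases hW : a 1 0 * b 0 1 - a 0 1 * b 1 0 ≠ 0 ∨
      a 0 1 * (b 0 0 - b 1 1) - (a 0 0 - a 1 1) * b 0 1 ≠ 0 ∨
      (a 0 0 - a 1 1) * b 1 0 - a 1 0 * (b 0 0 - b 1 1) ≠ 0
  · obtain ⟨w1, w2, w3, hw⟩ := lp_cross hW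
    have par : ∀ d : Matrix (Fin 2) (Fin 2) F, d.trace = 0 → (d * a).trace = 0 →
        (d * b).trace = 0 → ∃ c : F, d = c • !![w1, w2; w3, -w1] := by
      intro d e0 e1 e2
      have hd1 : d 1 1 = - d 0 0 := by rw [Matrix.trace_fin_two] at e0; linear_combination e0
      simp only [Matrix.trace_fin_two, Matrix.mul_apply, Fin.sum_univ_two, hd1] at e1 e2
      obtain ⟨c, c1, c2, c3⟩ := hw (d 0 0) (d 0 1) (d 1 0) (by linear_combination e1)
        (by linear_combination e2)
      refine ⟨c, ?_⟩
      ext i j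
      fin_cases i <;> fin_cases j <;> simp [hd1, c1, c2, c3]
    obtain ⟨α, hα⟩ := par (y1 - y0) (by simp [h1, h0]) (by simp [sub_mul, h1a, h0a])
      (by simp [sub_mul, h1b, h0b])
    obtain ⟨β, hβ⟩ := par (y2 - y0) (by simp [h2, h0]) (by simp [sub_mul, h2a, h0a])
      (by simp [sub_mul, h2b, h0b])
    have hα0 : α ≠ 0 := by
      rintro rfl
      rw [zero_smul, sub_eq_zero] at hα
      exact h01 hα.symm
    have hβ0 : β ≠ 0 := by
      rintro rfl
      rw [zero_smul, sub_eq_zero] at hβ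
      exact h02 hβ.symm
    have hαβ : β ≠ α := by
      rintro rfl
      rw [← hα] at hβ
      exact h12 (sub_left_inj.mp hβ).symm
    have e2 : y2 - y0 = (β / α) • (y1 - y0) := by
      rw [hα, hβ, smul_smul, div_mul_cancel₀ _ hα0]
    have hn0 : y1 - y0 ≠ 0 := sub_ne_zero.mpr h01.symm
    obtain ⟨hn, hn2⟩ := lp_collinear (z := y0) (n := y1 - y0) (s := β / α) hn0
      (div_ne_zero hβ0 hα0) (by rw [Ne, div_eq_one_iff_eq hα0]; exact hαβ) (by simp [h1, h0]) h0d
      (by rw [add_sub_cancel]; exact h1d) (by rw [← e2, add_sub_cancel]; exact h2d)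
    obtain ⟨l, -, hl, -⟩ := hn.eig hn2
    refine ⟨y1 - y0, hn, hn2, ?_, ?_⟩
    · rw [Matrix.trace_mul_comm, ← mul_assoc, hl, smul_mul_assoc, Matrix.trace_smul, sub_mul,
        Matrix.trace_sub, h1a, h0a, sub_self, smul_zero]
    · rw [Matrix.trace_mul_comm, ← mul_assoc, hl, smul_mul_assoc, Matrix.trace_smul, sub_mul,
        Matrix.trace_sub, h1b, h0b, sub_self, smul_zero]
  · push Not at hW
    obtain ⟨w1, w2, w3⟩ := hW
    have hA : a 0 0 - a 1 1 ≠ 0 ∨ a 1 0 ≠ 0 ∨ a 0 1 ≠ 0 := by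
      by_contra! hc
      obtain ⟨c1, c2, c3⟩ := hc
      have ea : a = a 0 0 • 1 := by
        ext i j
        fin_cases i <;> fin_cases j <;> simp [c2, c3]
        linear_combination -c1
      have : a 0 0 * t = 1 * t := by
        rw [ea, mul_smul_comm, mul_one, Matrix.trace_smul, h0, smul_eq_mul] at h0a
        rw [h0a, one_mul]
      rw [mul_right_cancel₀ ht this, one_smul] at ea
      apply hxa
      rw [ea, mul_one]
    have hB : ∃ c : F, b 0 0 - b 1 1 = c * (a 0 0 - a 1 1) ∧ b 1 0 = c * a 1 0 ∧
        b 0 1 = c * a 0 1 := by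
      rcases hA with h | h | h
      · refine ⟨(b 0 0 - b 1 1) / (a 0 0 - a 1 1), ?_, ?_, ?_⟩ <;>
          rw [div_mul_eq_mul_div, eq_div_iff h] <;> grind
      · refine ⟨b 1 0 / a 1 0, ?_, ?_, ?_⟩ <;>
          rw [div_mul_eq_mul_div, eq_div_iff h] <;> grind
      · refine ⟨b 0 1 / a 0 1, ?_, ?_, ?_⟩ <;>
          rw [div_mul_eq_mul_div, eq_div_iff h] <;> grind
    obtain ⟨c, c1, c2, c3⟩ := hB
    have eb : b = c • a + (b 1 1 - c * a 1 1) • 1 := by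
      ext i j
      fin_cases i <;> fin_cases j <;> simp [c2, c3]
      linear_combination c1
    set e := b 1 1 - c * a 1 1 with he
    have ey : y0 * b = c • (y0 * a) + e • y0 := by
      rw [eb, mul_add, mul_smul_comm, mul_smul_comm, mul_one]
    have he1 : e = 1 - c := by
      have := congrArg Matrix.trace ey
      rw [Matrix.trace_add, Matrix.trace_smul, Matrix.trace_smul, h0b, h0a, h0, smul_eq_mul,
        smul_eq_mul] at this
      apply mul_right_cancel₀ ht
      linear_combination -this
    have ey2 : y0 * b = y0 + c • (y0 * a - y0) := by
      rw [ey, he1, smul_sub, sub_smul, one_smul]; abel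
    have hc0 : c ≠ 0 := by
      rintro rfl
      apply hxb
      rw [ey2, zero_smul, add_zero]
    have hc1 : c ≠ 1 := by
      rintro rfl
      apply hab
      rw [ey2, one_smul, add_sub_cancel]
    obtain ⟨hn, hn2⟩ := lp_collinear (z := y0) (n := y0 * a - y0) (s := c)
      (sub_ne_zero.mpr hxa.symm) hc0 hc1 (by simp [h0a, h0]) h0d
      (by rw [add_sub_cancel]; exact had) (by rw [← ey2]; exact hbd)
    refine ⟨_, hn, hn2, ?_, ?_⟩
    · have : y0 * a * (y0 * a - y0) =
        y0 * (y0 * a - y0) + (y0 * a - y0) * (y0 * a - y0) := by noncomm_ring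
      rw [this, hn.sq, add_zero, hn2]
    · rw [ey2, add_mul, smul_mul_assoc, hn.sq, smul_zero, add_zero, hn2]

variable [DecidableEq F]

lemma lp_exists_out (H : Finset (Matrix.SpecialLinearGroup (Fin 2) F))
    (hgen : Subgroup.closure (H : Set (Matrix.SpecialLinearGroup (Fin 2) F)) = ⊤)
    {n : Matrix (Fin 2) (Fin 2) F} (hn : LPNil n) :
    ∃ h ∈ H, ((h : Matrix (Fin 2) (Fin 2) F) * n).trace ≠ 0 := by
  by_contra! hc
  have all : ∀ x : Matrix.SpecialLinearGroup (Fin 2) F,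
      ((x : Matrix (Fin 2) (Fin 2) F) * n).trace = 0 := by
    intro x
    have hx : x ∈ Subgroup.closure (H : Set (Matrix.SpecialLinearGroup (Fin 2) F)) := by
      rw [hgen]; trivial
    induction hx using Subgroup.closure_induction with
    | mem x hx => exact hc x hx
    | one => simpa using hn.1
    | mul x y _ _ hx hy =>
      obtain ⟨l, hl, -, -⟩ := hn.eig hx
      obtain ⟨m, hm, -, -⟩ := hn.eig hy
      rw [Matrix.SpecialLinearGroup.coe_mul, mul_assoc, hm, mul_smul_comm, hl, Matrix.trace_smul,
        Matrix.trace_smul, hn.1, smul_zero, smul_zero]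
    | inv x _ hx =>
      rw [Matrix.SpecialLinearGroup.coe_inv, Matrix.adjugate_fin_two]
      have h1 := hn.entries.1
      simp [Matrix.trace_fin_two, Matrix.mul_apply, Fin.sum_univ_two, Matrix.vecMul, dotProduct, h1] at hx ⊢
      linear_combination -hx
  obtain ⟨h1, -, h3⟩ := hn.entries
  have e1 := all ⟨!![1, 1; 0, 1], by simp⟩
  have e2 := all ⟨!![1, 0; 1, 1], by simp⟩
  simp [Matrix.trace_fin_two, Fin.sum_univ_two, Matrix.vecMul, dotProduct, h1] at e1 e2
  simp [e1, e2] at h3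

lemma lp_line (H : Finset (Matrix.SpecialLinearGroup (Fin 2) F))
    (hgen : Subgroup.closure (H : Set (Matrix.SpecialLinearGroup (Fin 2) F)) = ⊤)
    {n z : Matrix (Fin 2) (Fin 2) F} (hn : LPNil n) (hz : z.det = 1)
    (hzn : (z * n).trace = 0) (S : Finset (Matrix.SpecialLinearGroup (Fin 2) F)) (hSH : S ⊆ H)
    (hS : ∀ x ∈ S, ∃ s : F, (x : Matrix (Fin 2) (Fin 2) F) = z + s • n) :
    S.card ^ 3 ≤ 2 * (H ^ 5).card := by
  classical
  rcases S.eq_empty_or_nonempty with rfl | ⟨x0, hx0⟩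
  · simp
  obtain ⟨h, hH, hh⟩ := lp_exists_out H hgen hn
  obtain ⟨l, hl, hm, hl2⟩ := hn.eig hzn
  set m := z.trace - l with hmdef
  have hlm : l * m = 1 := by rw [hmdef]; rw [hz] at hl2; linear_combination -hl2
  have hl0 : l ≠ 0 := left_ne_zero_of_mul_eq_one hlm
  have hm0 : m ≠ 0 := right_ne_zero_of_mul_eq_one hlm
  have hr : ∀ x ∈ S, (x : Matrix (Fin 2) (Fin 2) F) * n = l • n := by
    intro x hx
    obtain ⟨s, hs⟩ := hS x hx
    rw [hs, add_mul, smul_mul_assoc, hn.sq, smul_zero, add_zero, hl]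
  have hle : ∀ x ∈ S, n * (x : Matrix (Fin 2) (Fin 2) F) = m • n := by
    intro x hx
    obtain ⟨s, hs⟩ := hS x hx
    rw [hs, mul_add, mul_smul_comm, hn.sq, smul_zero, add_zero, hm]
  have hdiff : ∀ x ∈ S, ∀ x' ∈ S, ∃ s : F,
      (x : Matrix (Fin 2) (Fin 2) F) = x' + s • n := by
    intro x hx x' hx'
    obtain ⟨s, hs⟩ := hS x hx
    obtain ⟨s', hs'⟩ := hS x' hx'
    refine ⟨s - s', ?_⟩
    rw [hs, hs', sub_smul]; abel
  have hinj2 : ∀ x ∈ S, ∀ x' ∈ S,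
      n * (h : Matrix (Fin 2) (Fin 2) F) * x * h * n = n * h * x' * h * n → x = x' := by
    intro x hx x' hx' e
    obtain ⟨s, hs⟩ := hdiff x hx x' hx'
    have : s • (n * (h : Matrix (Fin 2) (Fin 2) F) * n * h * n) = 0 := by
      rw [hs, mul_add, add_mul, add_mul, mul_smul_comm, smul_mul_assoc, smul_mul_assoc] at e
      simpa using e
    rw [hn.sandwich, smul_mul_assoc, smul_mul_assoc, hn.sandwich] at this
    have hs0 : s = 0 := by simpa [hh, hn.2.2] using this
    apply Subtype.ext
    rw [hs, hs0, zero_smul, add_zero]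
  set S' := S.filter (fun x : Matrix.SpecialLinearGroup (Fin 2) F =>
      n * (h : Matrix (Fin 2) (Fin 2) F) * (x : Matrix (Fin 2) (Fin 2) F) * h * n ≠ 0) with hS'
  have hcard : S.card ≤ S'.card + 1 := by
    have h1 := Finset.card_le_card_sdiff_add_card (s := S) (t := S')
    have h2 : (S \ S').card ≤ 1 := by
      rw [Finset.card_le_one]
      intro x hx x' hx'
      rw [hS', Finset.mem_sdiff, Finset.mem_filter, not_and, not_not] at hx hx'
      exact hinj2 x hx.1 x' hx'.1 (by rw [hx.2 hx.1, hx'.2 hx'.1])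
    omega
  have hprod : (S ×ˢ S' ×ˢ S).card ≤ (H ^ 5).card := by
    apply Finset.card_le_card_of_injOn (fun q => q.1 * h * q.2.1 * h * q.2.2)
    · rintro ⟨x1, x2, x3⟩ hq
      simp only [Finset.coe_product, Set.mem_prod, Finset.mem_coe, hS', Finset.mem_filter] at hq
      obtain ⟨q1, q2, q3⟩ := hq
      have : H ^ 5 = H * H * H * H * H := by simp only [pow_succ, pow_zero, one_mul]
      rw [this]
      exact Finset.mul_mem_mul (Finset.mul_mem_mul (Finset.mul_mem_mul (Finset.mul_mem_mul
        (hSH q1) hH) (hSH q2.1)) hH) (hSH q3)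
    · rintro ⟨x1, x2, x3⟩ hq ⟨x1', x2', x3'⟩ hq' e
      simp only [Finset.coe_product, Set.mem_prod, Finset.mem_coe, hS', Finset.mem_filter] at hq hq'
      obtain ⟨q1, ⟨q2, q2n⟩, q3⟩ := hq
      obtain ⟨r1, ⟨r2, r2n⟩, r3⟩ := hq'
      try dsimp only at e
      have e0 := congrArg (fun x : Matrix.SpecialLinearGroup (Fin 2) F =>
        n * (x : Matrix (Fin 2) (Fin 2) F)) e
      simp only [Matrix.SpecialLinearGroup.coe_mul, ← mul_assoc] at e0
      rw [hle x1 q1, hle x1' r1] at e0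
      simp only [smul_mul_assoc] at e0
      have e1 := smul_right_injective _ hm0 e0
      have e2 := congrArg (fun x => x * n) e1
      try dsimp only at e2
      rw [mul_assoc _ (x3 : Matrix (Fin 2) (Fin 2) F), mul_assoc _ (x3' : Matrix (Fin 2) (Fin 2) F),
        hr x3 q3, hr x3' r3, mul_smul_comm, mul_smul_comm] at e2
      have e3 := hinj2 x2 q2 x2' r2 (smul_right_injective _ hl0 e2)
      subst e3
      obtain ⟨s, hs⟩ := hdiff x3 q3 x3' r3
      have hs0 : s = 0 := by
        rw [hs, mul_add, mul_smul_comm] at e1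
        have : s • (n * (h : Matrix (Fin 2) (Fin 2) F) * x2 * h * n) = 0 := by simpa using e1
        simpa [q2n] using this
      have e4 : x3 = x3' := by
        apply Subtype.ext
        rw [hs, hs0, zero_smul, add_zero]
      subst e4
      have e5 : x1 = x1' := by simpa using e
      rw [e5]
  rw [Finset.card_product, Finset.card_product] at hprod
  have hpos : 1 ≤ S.card := Finset.card_pos.mpr ⟨x0, hx0⟩
  have hpos5 : 1 ≤ (H ^ 5).card := Finset.card_pos.mpr (Finset.Nonempty.pow ⟨h, hH⟩)
  rcases Nat.eq_or_lt_of_le hpos with h1 | h1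
  · rw [← h1]; omega
  · have h2 : S.card ≤ 2 * S'.card := by omega
    calc S.card ^ 3 = S.card * (S.card * S.card) := by ring
      _ ≤ S.card * (2 * S'.card * S.card) := by gcongr
      _ = 2 * (S.card * (S'.card * S.card)) := by ring
      _ ≤ _ := by gcongr
lemma lp_borel_count (H : Finset (Matrix.SpecialLinearGroup (Fin 2) F))
    (hgen : Subgroup.closure (H : Set (Matrix.SpecialLinearGroup (Fin 2) F)) = ⊤)
    (t : F) (M : ℕ) (hM : ∀ k : ℕ, k ^ 3 ≤ 2 * (H ^ 5).card → k ≤ M)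
    (C : Finset (Matrix.SpecialLinearGroup (Fin 2) F)) (hCH : C ⊆ H)
    (hC : ∀ x ∈ C, (x : Matrix (Fin 2) (Fin 2) F).trace = t)
    (y : Matrix.SpecialLinearGroup (Fin 2) F) (hy : y ∈ C)
    {n : Matrix (Fin 2) (Fin 2) F} (hn : LPNil n)
    (hyn : ((y : Matrix (Fin 2) (Fin 2) F) * n).trace = 0)
    (S : Finset (Matrix.SpecialLinearGroup (Fin 2) F)) (hS : S ⊆ C)
    (hSn : ∀ x ∈ S, ((x : Matrix (Fin 2) (Fin 2) F) * n).trace = 0) :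
    S.card ≤ 2 * M := by
  classical
  set S1 := S.filter (fun x : Matrix.SpecialLinearGroup (Fin 2) F =>
    ∃ s : F, (x : Matrix (Fin 2) (Fin 2) F) = (y : Matrix (Fin 2) (Fin 2) F) + s • n) with hS1
  set S2 := S.filter (fun x : Matrix.SpecialLinearGroup (Fin 2) F =>
    ∃ s : F, (x : Matrix (Fin 2) (Fin 2) F) =
      (t • 1 - (y : Matrix (Fin 2) (Fin 2) F)) + s • n) with hS2
  have hsub : S ⊆ S1 ∪ S2 := by
    intro x hx
    rw [Finset.mem_union, hS1, hS2, Finset.mem_filter, Finset.mem_filter]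
    rcases hn.lines (hC y hy) y.2 (hC x (hS hx)) x.2 hyn (hSn x hx) with h | h
    · exact Or.inl ⟨hx, h⟩
    · exact Or.inr ⟨hx, h⟩
  have c1 : S1.card ≤ M := by
    apply hM
    apply lp_line H hgen hn y.2 hyn S1 (((Finset.filter_subset _ _).trans hS).trans hCH)
    intro x hx
    exact (Finset.mem_filter.mp hx).2
  have c2 : S2.card ≤ M := by
    apply hM
    apply lp_line H hgen hn (z := t • 1 - (y : Matrix (Fin 2) (Fin 2) F)) ?_ ?_ S2
      (((Finset.filter_subset _ _).trans hS).trans hCH)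
    · intro x hx
      exact (Finset.mem_filter.mp hx).2
    · have h1 := hC y hy
      have h2 : (y : Matrix (Fin 2) (Fin 2) F).det = 1 := y.2
      rw [Matrix.trace_fin_two] at h1
      rw [Matrix.det_fin_two] at h2 ⊢
      simp
      rw [← h1]
      linear_combination h2
    · rw [sub_mul, Matrix.trace_sub, hyn, smul_mul_assoc, one_mul, Matrix.trace_smul, hn.1]
      simp
  have := Finset.card_le_card hsub
  have := Finset.card_union_le S1 S2
  omega

lemma lp_roots (t : F) : ∃ Λ : Finset F, Λ.card ≤ 2 ∧ ∀ l : F, l * l - t * l + 1 = 0 → l ∈ Λ := by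
  by_cases h : ∃ l : F, l * l - t * l + 1 = 0
  · obtain ⟨l0, h0⟩ := h
    refine ⟨{l0, t - l0}, Finset.card_le_two, fun l hl => ?_⟩
    have : (l - l0) * (l - (t - l0)) = 0 := by linear_combination hl - h0
    rcases mul_eq_zero.mp this with h | h
    · simp [sub_eq_zero.mp h]
    · simp [sub_eq_zero.mp h]
  · push Not at h
    exact ⟨∅, by simp, fun l hl => absurd hl (h l)⟩

/-- Pairs which lie in a common Borel subgroup with `y`. -/
lemma lp_pairs (H : Finset (Matrix.SpecialLinearGroup (Fin 2) F))
    (hgen : Subgroup.closure (H : Set (Matrix.SpecialLinearGroup (Fin 2) F)) = ⊤)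
    (t : F) (ht4 : t ^ 2 ≠ 4) (M : ℕ) (hM : ∀ k : ℕ, k ^ 3 ≤ 2 * (H ^ 5).card → k ≤ M)
    (C : Finset (Matrix.SpecialLinearGroup (Fin 2) F)) (hCH : C ⊆ H)
    (hC : ∀ x ∈ C, (x : Matrix (Fin 2) (Fin 2) F).trace = t)
    (y : Matrix.SpecialLinearGroup (Fin 2) F) (hy : y ∈ C)
    (P : Finset (Matrix.SpecialLinearGroup (Fin 2) F × Matrix.SpecialLinearGroup (Fin 2) F))
    (hP : ∀ q ∈ P, q.1 ∈ C ∧ q.2 ∈ C ∧ ∃ n : Matrix (Fin 2) (Fin 2) F, LPNil n ∧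
      ((y : Matrix (Fin 2) (Fin 2) F) * n).trace = 0 ∧
      ((q.1 : Matrix (Fin 2) (Fin 2) F) * n).trace = 0 ∧
      ((q.2 : Matrix (Fin 2) (Fin 2) F) * n).trace = 0) :
    P.card ≤ 8 * M ^ 2 := by
  classical
  obtain ⟨Λ, hΛ, hroots⟩ := lp_roots t
  let B : F → Finset (Matrix.SpecialLinearGroup (Fin 2) F) := fun l =>
    C.filter (fun x : Matrix.SpecialLinearGroup (Fin 2) F =>
      ∃ n : Matrix (Fin 2) (Fin 2) F, LPNil n ∧ (y : Matrix (Fin 2) (Fin 2) F) * n = l • n ∧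
      ((x : Matrix (Fin 2) (Fin 2) F) * n).trace = 0)
  have hB : ∀ l, (B l).card ≤ 2 * M := by
    intro l
    rcases (B l).eq_empty_or_nonempty with h0 | ⟨x0, hx0⟩
    · rw [h0]; simp
    obtain ⟨-, n, hn, hyn, -⟩ := Finset.mem_filter.mp hx0
    obtain ⟨n0, hn0⟩ := LPNil.unique (y := (y : Matrix (Fin 2) (Fin 2) F)) y.2
      (by rw [hC y hy]; exact ht4) l
    obtain ⟨c, hc⟩ := hn0 n hn hyn
    apply lp_borel_count H hgen t M hM C hCH hC y hy hn (hn.tr_of_eig hyn) (B l)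
      (Finset.filter_subset _ _)
    intro x hx
    obtain ⟨-, n', hn', hyn', hxn'⟩ := Finset.mem_filter.mp hx
    obtain ⟨c', hc'⟩ := hn0 n' hn' hyn'
    have hc0 : c' ≠ 0 := by
      rintro rfl
      exact hn'.2.2 (by rw [hc', zero_smul])
    rw [hc', mul_smul_comm, Matrix.trace_smul, smul_eq_mul, mul_eq_zero] at hxn'
    rw [hc, mul_smul_comm, Matrix.trace_smul, hxn'.resolve_left hc0, smul_zero]
  have hsub : P ⊆ Λ.biUnion (fun l => B l ×ˢ B l) := by
    intro q hq
    obtain ⟨q1, q2, n, hn, hyn, h1, h2⟩ := hP q hq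
    obtain ⟨l, hl, -, hl2⟩ := hn.eig hyn
    have hd : (y : Matrix (Fin 2) (Fin 2) F).det = 1 := y.2
    rw [hC y hy, hd] at hl2
    rw [Finset.mem_biUnion]
    refine ⟨l, hroots l hl2, ?_⟩
    rw [Finset.mem_product]
    exact ⟨Finset.mem_filter.mpr ⟨q1, n, hn, hl, h1⟩, Finset.mem_filter.mpr ⟨q2, n, hn, hl, h2⟩⟩
  calc P.card ≤ _ := Finset.card_le_card hsub
    _ ≤ Λ.card * ((2 * M) * (2 * M)) := by
      apply Finset.card_biUnion_le_card_mul
      intro l _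
      rw [Finset.card_product]
      exact Nat.mul_le_mul (hB l) (hB l)
    _ ≤ 2 * ((2 * M) * (2 * M)) := by gcongr
    _ = 8 * M ^ 2 := by ring

lemma lp_count (H : Finset (Matrix.SpecialLinearGroup (Fin 2) F))
    (hsym : ∀ h ∈ H, h⁻¹ ∈ H)
    (hgen : Subgroup.closure (H : Set (Matrix.SpecialLinearGroup (Fin 2) F)) = ⊤)
    (t : F) (ht : t ≠ 0) (ht4 : t ^ 2 ≠ 4) (M : ℕ)
    (hM : ∀ k : ℕ, k ^ 3 ≤ 2 * (H ^ 5).card → k ≤ M)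
    (C : Finset (Matrix.SpecialLinearGroup (Fin 2) F)) (hCH : C ⊆ H)
    (hC : ∀ x ∈ C, (x : Matrix (Fin 2) (Fin 2) F).trace = t) :
    C.card ^ 3 ≤ 2 * (H ^ 2).card ^ 2 + 3 * C.card ^ 2 + 8 * C.card * M ^ 2 := by
  classical
  let SL := Matrix.SpecialLinearGroup (Fin 2) F
  let Bad : SL × SL × SL → Prop := fun q => ∃ n : Matrix (Fin 2) (Fin 2) F, LPNil n ∧
      ((q.1 : Matrix (Fin 2) (Fin 2) F) * n).trace = 0 ∧
      ((q.2.1 : Matrix (Fin 2) (Fin 2) F) * n).trace = 0 ∧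
      ((q.2.2 : Matrix (Fin 2) (Fin 2) F) * n).trace = 0
  let T : Finset (SL × SL × SL) := C ×ˢ C ×ˢ C
  let T4 := T.filter Bad
  let T1 : Finset (SL × SL × SL) := (C ×ˢ C).image (fun q => (q.1, q.1, q.2))
  let T2 : Finset (SL × SL × SL) := (C ×ˢ C).image (fun q => (q.1, q.2, q.1))
  let T3 : Finset (SL × SL × SL) := (C ×ˢ C).image (fun q => (q.1, q.2, q.2))
  let G := T.filter (fun q => ¬ Bad q ∧ q.1 ≠ q.2.1 ∧ q.1 ≠ q.2.2 ∧ q.2.1 ≠ q.2.2)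
  have hT : T.card = C.card ^ 3 := by
    simp only [T, Finset.card_product]; ring
  have hT1 : T1.card ≤ C.card ^ 2 := by
    refine Finset.card_image_le.trans ?_
    rw [Finset.card_product, sq]
  have hT2 : T2.card ≤ C.card ^ 2 := by
    refine Finset.card_image_le.trans ?_
    rw [Finset.card_product, sq]
  have hT3 : T3.card ≤ C.card ^ 2 := by
    refine Finset.card_image_le.trans ?_
    rw [Finset.card_product, sq]
  have hcover : T ⊆ G ∪ (T1 ∪ (T2 ∪ (T3 ∪ T4))) := by
    rintro ⟨y, a, b⟩ hq
    have hq' := hq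
    simp only [T, Finset.mem_product] at hq'
    obtain ⟨m1, m2, m3⟩ := hq'
    by_cases e1 : y = a
    · subst e1
      have : (y, y, b) ∈ T1 := Finset.mem_image.mpr ⟨(y, b), Finset.mk_mem_product m1 m3, rfl⟩
      simp [this]
    by_cases e2 : y = b
    · subst e2
      have : (y, a, y) ∈ T2 := Finset.mem_image.mpr ⟨(y, a), Finset.mk_mem_product m1 m2, rfl⟩
      simp [this]
    by_cases e3 : a = b
    · subst e3
      have : (y, a, a) ∈ T3 := Finset.mem_image.mpr ⟨(y, a), Finset.mk_mem_product m1 m2, rfl⟩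
      simp [this]
    by_cases e4 : Bad (y, a, b)
    · have : (y, a, b) ∈ T4 := Finset.mem_filter.mpr ⟨hq, e4⟩
      simp [this]
    have : (y, a, b) ∈ G := Finset.mem_filter.mpr ⟨hq, e4, e1, e2, e3⟩
    simp [this]
  have hT4 : T4.card ≤ 8 * M ^ 2 * C.card := by
    apply Finset.card_le_mul_card_image_of_maps_to (f := fun q => q.1) (t := C)
    · intro q hq
      have := (Finset.mem_filter.mp hq).1
      simp only [T, Finset.mem_product] at this
      exact this.1
    · intro y hy
      have hinj : (T4.filter (fun q => q.1 = y)).card =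
          ((T4.filter (fun q => q.1 = y)).image (fun q => q.2)).card := by
        symm
        apply Finset.card_image_of_injOn
        intro q hq q' hq' e
        have h1 := (Finset.mem_filter.mp hq).2
        have h2 := (Finset.mem_filter.mp hq').2
        exact Prod.ext (h1.trans h2.symm) e
      rw [hinj]
      apply lp_pairs H hgen t ht4 M hM C hCH hC y hy
      intro q hq
      obtain ⟨q', hq', rfl⟩ := Finset.mem_image.mp hq
      obtain ⟨hq1, rfl⟩ := Finset.mem_filter.mp hq'
      obtain ⟨hq2, hbad⟩ := Finset.mem_filter.mp hq1
      simp only [T, Finset.mem_product] at hq2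
      exact ⟨hq2.2.1, hq2.2.2, hbad⟩
  have hG : G.card ≤ 2 * ((H ^ 2) ×ˢ (H ^ 2)).card := by
    apply Finset.card_le_mul_card_image_of_maps_to
      (f := fun q : SL × SL × SL => (q.1⁻¹ * q.2.1, q.1⁻¹ * q.2.2))
    · intro q hq
      have := (Finset.mem_filter.mp hq).1
      simp only [T, Finset.mem_product] at this
      obtain ⟨m1, m2, m3⟩ := this
      rw [Finset.mem_product, sq]
      exact ⟨Finset.mul_mem_mul (hsym _ (hCH m1)) (hCH m2),
        Finset.mul_mem_mul (hsym _ (hCH m1)) (hCH m3)⟩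
    · rintro ⟨a, b⟩ -
      by_contra hcon
      rw [not_le, Finset.two_lt_card] at hcon
      obtain ⟨q0, hq0, q1, hq1, q2, hq2, h01, h02, h12⟩ := hcon
      have info : ∀ q ∈ G.filter (fun q : SL × SL × SL =>
          (q.1⁻¹ * q.2.1, q.1⁻¹ * q.2.2) = (a, b)),
          q.1 ∈ C ∧ q.1 * a ∈ C ∧ q.1 * b ∈ C ∧ q = (q.1, q.1 * a, q.1 * b) := by
        intro q hq
        obtain ⟨hq1, e⟩ := Finset.mem_filter.mp hq
        have := (Finset.mem_filter.mp hq1).1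
        simp only [T, Finset.mem_product] at this
        obtain ⟨m1, m2, m3⟩ := this
        rw [Prod.mk.injEq] at e
        have e1 : q.1 * a = q.2.1 := by rw [← e.1, mul_inv_cancel_left]
        have e2 : q.1 * b = q.2.2 := by rw [← e.2, mul_inv_cancel_left]
        rw [e1, e2]
        exact ⟨m1, m2, m3, rfl⟩
      obtain ⟨a0, b0, c0, d0⟩ := info q0 hq0
      obtain ⟨a1, b1, c1, d1⟩ := info q1 hq1
      obtain ⟨a2, b2, c2, d2⟩ := info q2 hq2
      have hgood := (Finset.mem_filter.mp (Finset.mem_filter.mp hq0).1).2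
      obtain ⟨g1, g2, g3, g4⟩ := hgood
      have s1 : q0.2.1 = q0.1 * a := by rw [d0]
      have s2 : q0.2.2 = q0.1 * b := by rw [d0]
      rw [s1] at g2 g4
      rw [s2] at g3 g4
      apply g1
      have coe_ne : ∀ u v : SL, u ≠ v →
          (u : Matrix (Fin 2) (Fin 2) F) ≠ (v : Matrix (Fin 2) (Fin 2) F) :=
        fun u v huv e => huv (Subtype.ext e)
      have n01 : q0.1 ≠ q1.1 := fun e => h01 (by rw [d0, d1, e])
      have n02 : q0.1 ≠ q2.1 := fun e => h02 (by rw [d0, d2, e])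
      have n12 : q1.1 ≠ q2.1 := fun e => h12 (by rw [d1, d2, e])
      obtain ⟨n, hn, k1, k2, k3⟩ := lp_fiber ht (hC _ a0) (hC _ a1) (hC _ a2) q0.1.2 q1.1.2 q2.1.2
        (hC _ b0) (hC _ b1) (hC _ b2) (hC _ c0) (hC _ c1) (hC _ c2) (q0.1 * a).2 (q0.1 * b).2
        (coe_ne _ _ n01) (coe_ne _ _ n02) (coe_ne _ _ n12)
        (coe_ne _ _ g2) (coe_ne _ _ g3) (coe_ne _ _ g4)
      refine ⟨n, hn, k1, ?_, ?_⟩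
      · rw [s1]; exact k2
      · rw [s2]; exact k3
  rw [Finset.card_product, ← sq] at hG
  have u0 := Finset.card_le_card hcover
  have u1 := Finset.card_union_le G (T1 ∪ (T2 ∪ (T3 ∪ T4)))
  have u2 := Finset.card_union_le T1 (T2 ∪ (T3 ∪ T4))
  have u3 := Finset.card_union_le T2 (T3 ∪ T4)
  have u4 := Finset.card_union_le T3 T4
  rw [hT] at u0
  have e8 : 8 * M ^ 2 * C.card = 8 * C.card * M ^ 2 := by ring
  omega

lemma lp_arith {N h T P Q M : ℕ} (hh : 1 ≤ h) (hQT : Q ≤ T)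
    (hcount : N ^ 3 ≤ 2 * Q ^ 2 + 3 * N ^ 2 + 8 * N * M ^ 2) (hM : M ^ 3 ≤ 2 * P)
    (hP : P * h ^ 2 ≤ T ^ 3) (hT : T ^ 28 ≤ h ^ 29) (hT1 : 1 ≤ T) : N ^ 3 ≤ 343 * T ^ 2 := by
  by_contra! hcon
  have hQ2 : Q ^ 2 ≤ T ^ 2 := by gcongr
  have hN8 : 8 ≤ N := by
    by_contra! hlt
    have h1 : N ≤ 7 := by omega
    have h2 : N ^ 3 ≤ 7 ^ 3 := by gcongr
    have h3 : 1 ≤ T ^ 2 := Nat.one_le_pow _ _ hT1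
    omega
  have hNM : N ≤ 4 * M := by
    by_contra! hlt
    have h1 : 16 * M ^ 2 < N ^ 2 := by nlinarith
    have h2 : 16 * (N * M ^ 2) ≤ N ^ 3 := by nlinarith
    have h3 : 8 * N ^ 2 ≤ N ^ 3 := by nlinarith [Nat.zero_le (N ^ 2)]
    nlinarith
  have h1 : N ^ 3 ≤ 128 * P := by
    have : N ^ 3 ≤ (4 * M) ^ 3 := by gcongr
    nlinarith
  have h2 : 343 * T ^ 2 < 128 * P := by omega
  have h3 : 343 * T ^ 2 * h ^ 2 < 128 * T ^ 3 := by
    have : 0 < h ^ 2 := by positivity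
    nlinarith
  have h4 : h ^ 2 < T := by
    by_contra! hle
    have : T ^ 3 ≤ T ^ 2 * h ^ 2 := by
      rw [pow_succ]; gcongr
    nlinarith
  have h5 : (h ^ 2) ^ 28 < T ^ 28 := Nat.pow_lt_pow_left h4 (by norm_num)
  have h6 : h ^ 29 ≤ (h ^ 2) ^ 28 := by
    rw [← pow_mul]; exact Nat.pow_le_pow_right hh (by norm_num)
  omega

end LP
/-- **Larsen–Pink non-concentration inequality for `SL₂(𝔽_p)` (Theorem `th-lp`).**
Let `p ≥ 3` be prime and `g ∈ SL₂(𝔽_p)` regular semisimple (`tr(g)² ≠ 4`) with `tr(g) ≠ 0`.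
For a symmetric generating set `H` containing `1`, the number of elements of `H` whose
trace equals `tr(g)` (the intersection of `H` with the conjugacy class of `g` over the
algebraic closure) satisfies `|H ∩ 𝐂(g)|³ ≤ 343·|H^(3)|²`, unless `|H^(3)|^28 > |H|^29`. -/
theorem stmt_13 (p : ℕ) (hp : p.Prime) (hp3 : 3 ≤ p)
    (g : Matrix.SpecialLinearGroup (Fin 2) (ZMod p))
    (hg0 : Matrix.trace (g : Matrix (Fin 2) (Fin 2) (ZMod p)) ≠ 0)
    (hg4 : Matrix.trace (g : Matrix (Fin 2) (Fin 2) (ZMod p)) ^ 2 ≠ 4)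
    (H : Finset (Matrix.SpecialLinearGroup (Fin 2) (ZMod p)))
    (hsym : ∀ h ∈ H, h⁻¹ ∈ H)
    (hone : (1 : Matrix.SpecialLinearGroup (Fin 2) (ZMod p)) ∈ H)
    (hgen : Subgroup.closure (H : Set (Matrix.SpecialLinearGroup (Fin 2) (ZMod p))) = ⊤) :
    (H.filter fun x : Matrix.SpecialLinearGroup (Fin 2) (ZMod p) =>
        Matrix.trace (↑x : Matrix (Fin 2) (Fin 2) (ZMod p)) =
        Matrix.trace (g : Matrix (Fin 2) (Fin 2) (ZMod p))).card ^ 3 ≤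
      343 * (H ^ 3 : Finset (Matrix.SpecialLinearGroup (Fin 2) (ZMod p))).card ^ 2 ∨
    H.card ^ 29 < (H ^ 3 : Finset (Matrix.SpecialLinearGroup (Fin 2) (ZMod p))).card ^ 28 := by
  haveI : Fact p.Prime := ⟨hp⟩
  by_contra hcon
  rw [not_or, not_lt] at hcon
  obtain ⟨hc1, hc2⟩ := hcon
  apply hc1
  have hh : 1 ≤ H.card := Finset.card_pos.mpr ⟨1, hone⟩
  have hT1 : 1 ≤ (H ^ 3).card := Finset.card_pos.mpr (Finset.Nonempty.pow ⟨1, hone⟩)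
  have hQT : (H ^ 2).card ≤ (H ^ 3).card :=
    Finset.card_le_card (Finset.pow_subset_pow_right hone (by norm_num))
  obtain ⟨M, hM1, hM2⟩ : ∃ M : ℕ, M ^ 3 ≤ 2 * (H ^ 5).card ∧
      ∀ k : ℕ, k ^ 3 ≤ 2 * (H ^ 5).card → k ≤ M := by
    refine ⟨Nat.findGreatest (fun k => k ^ 3 ≤ 2 * (H ^ 5).card) (2 * (H ^ 5).card), ?_, ?_⟩
    · exact Nat.findGreatest_spec (P := fun k => k ^ 3 ≤ 2 * (H ^ 5).card) (Nat.zero_le _) (by simp)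
    · intro k hk
      exact Nat.le_findGreatest ((Nat.le_self_pow (by norm_num) k).trans hk) hk
  have hP : (H ^ 5).card * H.card ^ 2 ≤ (H ^ 3).card ^ 3 := by
    have hinv : H⁻¹ = H := by
      ext x
      rw [Finset.mem_inv']
      exact ⟨fun hx => by simpa using hsym _ hx, fun hx => hsym _ hx⟩
    have hpos : (0 : ℝ) < H.card := by exact_mod_cast hh
    have key := Finset.small_pow_of_small_tripling (A := H) (m := 5)
      (K := ((H ^ 3).card : ℝ) / H.card) (by norm_num) (by rw [div_mul_cancel₀ _ hpos.ne']) hinv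
    have key2 : ((H ^ 5).card : ℝ) * (H.card : ℝ) ^ 2 ≤ ((H ^ 3).card : ℝ) ^ 3 := by
      calc ((H ^ 5).card : ℝ) * (H.card : ℝ) ^ 2
          ≤ ((((H ^ 3).card : ℝ) / H.card) ^ (5 - 2) * H.card) * (H.card : ℝ) ^ 2 := by gcongr
        _ = ((H ^ 3).card : ℝ) ^ 3 := by norm_num; field_simp
    exact_mod_cast key2
  refine lp_arith hh hQT (lp_count H hsym hgen _ hg0 hg4 M hM2 _ (Finset.filter_subset _ _) ?_)
    hM1 hP hc2 hT1
  intro x hx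
  exact (Finset.mem_filter.mp hx).2
end

section
/- Let p ≥ 3 be a prime, let H be a symmetric generating set of SL₂(𝔽_p) containing the identity, and suppose g ∈ H satisfies tr(g) ≠ 0 and tr(g)² ≠ 4. Let N = |{h ∈ H^(2) : hg = gh and tr(h)² ≠ 4}|. Then 2744 · N³ · |H^(3)|¹² ≥ |H|¹³, unless |H^(3)|^168 ≥ |H|^169. (Equivalently, with α = |H^(3)|/|H|, the number of regular semisimple elements of H^(2) in the maximal torus through g — its centralizer — is at least 14^(−1)·α^(−4)·|H|^(1/3) unless α ≥ |H|^(1/168).) -/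
open Pointwise

namespace LP

variable {F : Type*} [Field F]

/-- `(v0, v1)` is an eigenvector of `m` with eigenvalue `l`. -/
def Eig (m : Matrix (Fin 2) (Fin 2) F) (v0 v1 l : F) : Prop :=
  m 0 0 * v0 + m 0 1 * v1 = l * v0 ∧ m 1 0 * v0 + m 1 1 * v1 = l * v1

lemma par {v0 v1 w0 w1 : F} (hv : v0 ≠ 0 ∨ v1 ≠ 0) (h : v0 * w1 = v1 * w0) :
    ∃ l, w0 = l * v0 ∧ w1 = l * v1 := by
  rcases hv with hv | hv
  · refine ⟨w0 / v0, by field_simp, ?_⟩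
    field_simp; linear_combination h
  · refine ⟨w1 / v1, ?_, by field_simp⟩
    field_simp; linear_combination -h

lemma par3 {v0 v1 v2 w0 w1 w2 : F} (hv : v0 ≠ 0 ∨ v1 ≠ 0 ∨ v2 ≠ 0) (h1 : v0 * w1 = v1 * w0)
    (h2 : v0 * w2 = v2 * w0) (h3 : v1 * w2 = v2 * w1) :
    ∃ l, w0 = l * v0 ∧ w1 = l * v1 ∧ w2 = l * v2 := by
  rcases hv with hv | hv | hv
  · refine ⟨w0 / v0, by field_simp, ?_, ?_⟩
    · field_simp; linear_combination h1
    · field_simp; linear_combination h2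
  · refine ⟨w1 / v1, ?_, by field_simp, ?_⟩
    · field_simp; linear_combination -h1
    · field_simp; linear_combination h3
  · refine ⟨w2 / v2, ?_, ?_, by field_simp⟩
    · field_simp; linear_combination -h2
    · field_simp; linear_combination -h3

lemma nil {p q r : F} (h0 : p ≠ 0 ∨ q ≠ 0 ∨ r ≠ 0) (hd : p ^ 2 + q * r = 0) :
    ∃ v0 v1 : F, (v0 ≠ 0 ∨ v1 ≠ 0) ∧ ∀ m : Matrix (Fin 2) (Fin 2) F,
      p * (m 0 0 - m 1 1) + q * m 1 0 + r * m 0 1 = 0 → ∃ l, Eig m v0 v1 l := by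
  by_cases hpr : p ≠ 0 ∨ r ≠ 0
  · refine ⟨p, r, hpr, fun m hm => par hpr ?_⟩
    linear_combination (-r) * hm + m 1 0 * hd
  · have hq : q ≠ 0 ∨ -p ≠ 0 := by
      push Not at hpr
      rcases h0 with h | h | h
      · exact absurd hpr.1 h
      · exact Or.inl h
      · exact absurd hpr.2 h
    refine ⟨q, -p, hq, fun m hm => par hq ?_⟩
    linear_combination q * hm - m 0 1 * hd

lemma core {t : F} (ht : t ≠ 0)
    (a1 a2 a3 x y : Matrix (Fin 2) (Fin 2) F)
    (d1 : a1.det = 1) (d2 : a2.det = 1) (d3 : a3.det = 1) (dx : x.det = 1) (dy : y.det = 1)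
    (h12 : a1 ≠ a2) (h13 : a1 ≠ a3) (h23 : a2 ≠ a3) (hx1 : x ≠ 1) (hy1 : y ≠ 1) (hxy : x ≠ y)
    (t1 : a1.trace = t) (t2 : a2.trace = t) (t3 : a3.trace = t)
    (tx1 : (a1 * x).trace = t) (tx2 : (a2 * x).trace = t) (tx3 : (a3 * x).trace = t)
    (ty1 : (a1 * y).trace = t) (ty2 : (a2 * y).trace = t) (ty3 : (a3 * y).trace = t) :
    ∃ v0 v1 : F, (v0 ≠ 0 ∨ v1 ≠ 0) ∧ (∃ l, Eig a1 v0 v1 l) ∧ (∃ l, Eig x v0 v1 l) ∧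
      (∃ l, Eig y v0 v1 l) := by
  simp only [Matrix.det_fin_two, Matrix.trace_fin_two, Matrix.mul_apply, Fin.sum_univ_two]
    at *
  have ext' : ∀ m n : Matrix (Fin 2) (Fin 2) F, m 0 0 = n 0 0 → m 0 1 = n 0 1 →
      m 1 0 = n 1 0 → m 1 1 = n 1 1 → m = n := by
    intro m n h1 h2 h3 h4
    ext i j
    fin_cases i <;> fin_cases j <;> assumption
  set X0 := x 0 0 - x 1 1 with hX0
  set Y0 := y 0 0 - y 1 1 with hY0
  by_cases hw : X0 * y 1 0 = x 1 0 * Y0 ∧ X0 * y 0 1 = x 0 1 * Y0 ∧ x 1 0 * y 0 1 = x 0 1 * y 1 0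
  · -- dependent case
    obtain ⟨w1, w2, w3⟩ := hw
    have hX : X0 ≠ 0 ∨ x 1 0 ≠ 0 ∨ x 0 1 ≠ 0 := by
      by_contra hc
      push Not at hc
      obtain ⟨c0, c1, c2⟩ := hc
      have e : x 0 0 = x 1 1 := by linear_combination c0
      have : t * x 1 1 = t := by
        rw [c1, c2, e] at tx1
        linear_combination tx1 - x 1 1 * t1
      have h1 : x 1 1 = 1 := mul_left_cancel₀ ht (by rw [this, mul_one])
      exact hx1 (ext' _ _ (by simp [e, h1]) (by simp [c2]) (by simp [c1]) (by simp [h1]))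
    obtain ⟨k, k0, k1, k2⟩ := par3 hX w1 w2 w3
    -- y - k x is scalar, equal to 1 - k
    have hs : y 1 1 - k * x 1 1 = 1 - k := by
      apply mul_left_cancel₀ ht
      have e : y 0 0 = y 1 1 + k * (x 0 0 - x 1 1) := by linear_combination k0
      rw [k1, k2, e] at ty1
      linear_combination ty1 - k * tx1 - (y 1 1 - k * x 1 1) * t1
    have hs0 : y 0 0 - k * x 0 0 = 1 - k := by linear_combination hs + k0
    have hk0 : k ≠ 0 := by
      rintro rfl
      exact hy1 (ext' _ _ (by simpa using hs0) (by simp [k2]) (by simp [k1]) (by simpa using hs))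
    have hk1 : k ≠ 1 := by
      rintro rfl
      refine hxy (ext' _ _ ?_ (by simp [k2]) (by simp [k1]) ?_)
      · linear_combination -hs0
      · linear_combination -hs
    have trx : x 0 0 + x 1 1 = 2 := by
      have e0 : y 0 0 = k * x 0 0 + 1 - k := by linear_combination hs0
      have e1 : y 1 1 = k * x 1 1 + 1 - k := by linear_combination hs
      rw [e0, e1, k1, k2] at dy
      have : (k * (1 - k)) * (x 0 0 + x 1 1 - 2) = 0 := by
        linear_combination dy - k ^ 2 * dx
      have hk : k * (1 - k) ≠ 0 := mul_ne_zero hk0 (sub_ne_zero.2 hk1.symm)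
      have := (mul_eq_zero.1 this).resolve_left hk
      linear_combination this
    have hn : x 0 0 - 1 ≠ 0 ∨ x 0 1 ≠ 0 ∨ x 1 0 ≠ 0 := by
      by_contra hc
      push Not at hc
      obtain ⟨c0, c1, c2⟩ := hc
      exact hx1 (ext' _ _ (by simp; linear_combination c0) (by simp [c1]) (by simp [c2])
        (by simp; linear_combination trx - c0))
    obtain ⟨v0, v1, hv, hm⟩ := nil hn (by linear_combination x 0 0 * trx - dx)
    have hxx : (x 0 0 - 1) * (x 0 0 - x 1 1) + x 0 1 * x 1 0 + x 1 0 * x 0 1 = 0 := by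
      linear_combination (x 0 0 * 2 - x 0 0 + 1) * trx - 2 * dx
    refine ⟨v0, v1, hv, hm _ ?_, hm _ ?_, hm _ ?_⟩
    · linear_combination tx1 - t1 - a1 1 1 * trx
    · exact hxx
    · rw [k1, k2]
      linear_combination k * hxx + (x 0 0 - 1) * k0
  · -- independent case
    have hw' : x 1 0 * y 0 1 - x 0 1 * y 1 0 ≠ 0 ∨ x 0 1 * Y0 - X0 * y 0 1 ≠ 0 ∨
        X0 * y 1 0 - x 1 0 * Y0 ≠ 0 := by
      by_contra hc
      push Not at hc
      obtain ⟨c0, c1, c2⟩ := hc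
      exact hw ⟨by linear_combination c2, by linear_combination -c1, by linear_combination c0⟩
    have key : ∀ p q r : F, p * X0 + q * x 1 0 + r * x 0 1 = 0 →
        p * Y0 + q * y 1 0 + r * y 0 1 = 0 →
        ∃ l, p = l * (x 1 0 * y 0 1 - x 0 1 * y 1 0) ∧ q = l * (x 0 1 * Y0 - X0 * y 0 1) ∧
          r = l * (X0 * y 1 0 - x 1 0 * Y0) := by
      intro p q r hX hY
      apply par3 hw'
      · linear_combination (-y 0 1) * hX * (-1) - x 0 1 * hY
      · linear_combination (-y 1 0) * hX + x 1 0 * hY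
      · linear_combination Y0 * hX - X0 * hY
    have X2 : (a2 0 0 - a1 0 0) * X0 + (a2 0 1 - a1 0 1) * x 1 0 + (a2 1 0 - a1 1 0) * x 0 1 = 0 := by
      linear_combination tx2 - tx1 - x 1 1 * (t2 - t1)
    have Y2 : (a2 0 0 - a1 0 0) * Y0 + (a2 0 1 - a1 0 1) * y 1 0 + (a2 1 0 - a1 1 0) * y 0 1 = 0 := by
      linear_combination ty2 - ty1 - y 1 1 * (t2 - t1)
    have X3 : (a3 0 0 - a1 0 0) * X0 + (a3 0 1 - a1 0 1) * x 1 0 + (a3 1 0 - a1 1 0) * x 0 1 = 0 := by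
      linear_combination tx3 - tx1 - x 1 1 * (t3 - t1)
    have Y3 : (a3 0 0 - a1 0 0) * Y0 + (a3 0 1 - a1 0 1) * y 1 0 + (a3 1 0 - a1 1 0) * y 0 1 = 0 := by
      linear_combination ty3 - ty1 - y 1 1 * (t3 - t1)
    obtain ⟨l, l0, l1, l2⟩ := key _ _ _ X2 Y2
    obtain ⟨m, m0, m1, m2⟩ := key _ _ _ X3 Y3
    have nX : (x 1 0 * y 0 1 - x 0 1 * y 1 0) * X0 + (x 0 1 * Y0 - X0 * y 0 1) * x 1 0
      + (X0 * y 1 0 - x 1 0 * Y0) * x 0 1 = 0 := by ring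
    have nY : (x 1 0 * y 0 1 - x 0 1 * y 1 0) * Y0 + (x 0 1 * Y0 - X0 * y 0 1) * y 1 0
      + (X0 * y 1 0 - x 1 0 * Y0) * y 0 1 = 0 := by ring
    generalize x 1 0 * y 0 1 - x 0 1 * y 1 0 = P at *
    generalize x 0 1 * Y0 - X0 * y 0 1 = Q at *
    generalize X0 * y 1 0 - x 1 0 * Y0 = R at *
    have l3 : a2 1 1 - a1 1 1 = - (l * P) := by linear_combination t2 - t1 - l0
    have m3 : a3 1 1 - a1 1 1 = - (m * P) := by linear_combination t3 - t1 - m0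
    have hl : l ≠ 0 := by
      rintro rfl
      exact h12 (ext' _ _ (by linear_combination -l0) (by linear_combination -l1)
        (by linear_combination -l2) (by linear_combination -l3))
    have hm : m ≠ 0 := by
      rintro rfl
      exact h13 (ext' _ _ (by linear_combination -m0) (by linear_combination -m1)
        (by linear_combination -m2) (by linear_combination -m3))
    have hlm : l - m ≠ 0 := by
      intro h
      have : l = m := by linear_combination h
      subst this
      exact h23 (ext' _ _ (by linear_combination l0 - m0) (by linear_combination l1 - m1)
        (by linear_combination l2 - m2) (by linear_combination l3 - m3))
    -- det (a1 + s n) = 1 + s B - s^2 (P^2 + Q R)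
    have el : l * ((a1 1 1 - a1 0 0) * P - a1 1 0 * Q - a1 0 1 * R - l * (P ^ 2 + Q * R)) = 0 := by
      have e0 : a2 0 0 = a1 0 0 + l * P := by linear_combination l0
      have e1 : a2 0 1 = a1 0 1 + l * Q := by linear_combination l1
      have e2 : a2 1 0 = a1 1 0 + l * R := by linear_combination l2
      have e3 : a2 1 1 = a1 1 1 - l * P := by linear_combination l3
      rw [e0, e1, e2, e3] at d2
      linear_combination d2 - d1
    have em : m * ((a1 1 1 - a1 0 0) * P - a1 1 0 * Q - a1 0 1 * R - m * (P ^ 2 + Q * R)) = 0 := by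
      have e0 : a3 0 0 = a1 0 0 + m * P := by linear_combination m0
      have e1 : a3 0 1 = a1 0 1 + m * Q := by linear_combination m1
      have e2 : a3 1 0 = a1 1 0 + m * R := by linear_combination m2
      have e3 : a3 1 1 = a1 1 1 - m * P := by linear_combination m3
      rw [e0, e1, e2, e3] at d3
      linear_combination d3 - d1
    have el' := (mul_eq_zero.1 el).resolve_left hl
    have em' := (mul_eq_zero.1 em).resolve_left hm
    have hD : P ^ 2 + Q * R = 0 := by
      have : (l - m) * (P ^ 2 + Q * R) = 0 := by linear_combination em' - el'
      exact (mul_eq_zero.1 this).resolve_left hlm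
    obtain ⟨v0, v1, hv, hh⟩ := nil hw' hD
    refine ⟨v0, v1, hv, hh _ ?_, hh _ ?_, hh _ ?_⟩
    · linear_combination -el' - l * hD
    · linear_combination nX
    · linear_combination nY

abbrev G (F : Type*) [Field F] := Matrix.SpecialLinearGroup (Fin 2) F

lemma sl_ext {a b : G F} (h1 : a.1 0 0 = b.1 0 0) (h2 : a.1 0 1 = b.1 0 1)
    (h3 : a.1 1 0 = b.1 1 0) (h4 : a.1 1 1 = b.1 1 1) : a = b := by
  ext i j
  fin_cases i <;> fin_cases j <;> assumption

lemma Eig.mul {a b : Matrix (Fin 2) (Fin 2) F} {v0 v1 l m : F} (ha : Eig a v0 v1 l)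
    (hb : Eig b v0 v1 m) : Eig (a * b) v0 v1 (l * m) := by
  obtain ⟨h1, h2⟩ := ha
  obtain ⟨h3, h4⟩ := hb
  simp only [Eig, Matrix.mul_apply, Fin.sum_univ_two]
  constructor
  · linear_combination a 0 0 * h3 + a 0 1 * h4 + m * h1
  · linear_combination a 1 0 * h3 + a 1 1 * h4 + m * h2

lemma Eig.char {a : G F} {v0 v1 l : F} (hv : v0 ≠ 0 ∨ v1 ≠ 0) (h : Eig a.1 v0 v1 l) :
    l ^ 2 - a.1.trace * l + 1 = 0 := by
  obtain ⟨h1, h2⟩ := h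
  have hd := a.2
  rw [Matrix.det_fin_two] at hd
  rw [Matrix.trace_fin_two]
  rcases hv with hv | hv
  · apply mul_left_cancel₀ hv
    linear_combination (a.1 1 1 - l) * h1 - a.1 0 1 * h2 - v0 * hd
  · apply mul_left_cancel₀ hv
    linear_combination (a.1 0 0 - l) * h2 - a.1 1 0 * h1 - v1 * hd

lemma Eig.ne_zero {a : G F} {v0 v1 l : F} (hv : v0 ≠ 0 ∨ v1 ≠ 0) (h : Eig a.1 v0 v1 l) :
    l ≠ 0 := by
  rintro rfl
  simpa using h.char hv

lemma Eig.inv {a : G F} {v0 v1 l : F} (hv : v0 ≠ 0 ∨ v1 ≠ 0) (h : Eig a.1 v0 v1 l) :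
    Eig (a⁻¹ : G F).1 v0 v1 l⁻¹ := by
  have hl := h.ne_zero hv
  obtain ⟨h1, h2⟩ := h
  have hd := a.2
  rw [Matrix.det_fin_two] at hd
  rw [Matrix.SpecialLinearGroup.SL2_inv_expl]
  simp only [Eig, Matrix.cons_val', Matrix.cons_val_zero, Matrix.cons_val_one,
    Matrix.cons_val_fin_one]
  constructor
  · field_simp
    linear_combination (-a.1 1 1) * h1 + a.1 0 1 * h2 + v0 * hd
  · field_simp
    linear_combination (-a.1 0 0) * h2 + a.1 1 0 * h1 + v1 * hd

/-- The subgroup stabilizing the line through `(v0, v1)`. -/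
def stab (v0 v1 : F) (hv : v0 ≠ 0 ∨ v1 ≠ 0) : Subgroup (G F) where
  carrier := {a | ∃ l, Eig a.1 v0 v1 l}
  mul_mem' := by
    rintro a b ⟨l, hl⟩ ⟨m, hm⟩
    exact ⟨l * m, hl.mul hm⟩
  one_mem' := ⟨1, by simp [Eig]⟩
  inv_mem' := by
    rintro a ⟨l, hl⟩
    exact ⟨l⁻¹, hl.inv hv⟩

lemma exists_move {S : Set (G F)} (hS : Subgroup.closure S = ⊤) {v0 v1 : F}
    (hv : v0 ≠ 0 ∨ v1 ≠ 0) : ∃ h ∈ S, ¬ ∃ l, Eig h.1 v0 v1 l := by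
  by_contra hc
  push Not at hc
  have h1 : S ⊆ (stab v0 v1 hv : Set (G F)) := fun h hh => hc h hh
  have h2 : (⊤ : Subgroup (G F)) ≤ stab v0 v1 hv := by
    rw [← hS]; exact (Subgroup.closure_le _).2 h1
  obtain ⟨l, hl1, hl2⟩ : (⟨!![1, 1; 0, 1], by simp⟩ : G F) ∈ stab v0 v1 hv := h2 trivial
  obtain ⟨m, hm1, hm2⟩ : (⟨!![1, 0; 1, 1], by simp⟩ : G F) ∈ stab v0 v1 hv := h2 trivial
  simp at hl1 hl2 hm1 hm2
  grind

/-- An element fixing two independent vectors is the identity. -/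
lemma eq_of_inj {x x' y y' h : G F} {v0 v1 l : F} (hv : v0 ≠ 0 ∨ v1 ≠ 0)
    (hh : ¬ ∃ l, Eig h.1 v0 v1 l)
    (hx : Eig x.1 v0 v1 l) (hx' : Eig x'.1 v0 v1 l) (hy : Eig y.1 v0 v1 l)
    (hy' : Eig y'.1 v0 v1 l) (he : x * h * y⁻¹ = x' * h * y'⁻¹) : x = x' ∧ y = y' := by
  have hl := hx.ne_zero hv
  obtain ⟨u, hu⟩ : ∃ u, u = x'⁻¹ * x := ⟨_, rfl⟩
  obtain ⟨w, hw⟩ : ∃ w, w = y'⁻¹ * y := ⟨_, rfl⟩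
  have huw : u * h = h * w := by
    rw [hu, hw]
    have : x * h = x' * h * y'⁻¹ * y := by rw [← he]; group
    rw [mul_assoc, this]; group
  have eu : Eig u.1 v0 v1 1 := by
    have := (hx'.inv hv).mul hx
    rw [inv_mul_cancel₀ hl] at this
    rw [hu]; simpa using this
  have ew : Eig w.1 v0 v1 1 := by
    have := (hy'.inv hv).mul hy
    rw [inv_mul_cancel₀ hl] at this
    rw [hw]; simpa using this
  have hz : v0 * (h.1 1 0 * v0 + h.1 1 1 * v1) - v1 * (h.1 0 0 * v0 + h.1 0 1 * v1) ≠ 0 := by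
    intro h0
    exact hh (par hv (by linear_combination h0))
  have m := congrArg (fun z : G F => z.1) huw
  simp only [Matrix.SpecialLinearGroup.coe_mul] at m
  have m00 := congrFun (congrFun m 0) 0
  have m01 := congrFun (congrFun m 0) 1
  have m10 := congrFun (congrFun m 1) 0
  have m11 := congrFun (congrFun m 1) 1
  simp only [Matrix.mul_apply, Fin.sum_univ_two] at m00 m01 m10 m11
  obtain ⟨u1, u2⟩ := eu
  obtain ⟨w1, w2⟩ := ew
  have z1 : u.1 0 0 * (h.1 0 0 * v0 + h.1 0 1 * v1) + u.1 0 1 * (h.1 1 0 * v0 + h.1 1 1 * v1)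
      = h.1 0 0 * v0 + h.1 0 1 * v1 := by
    linear_combination m00 * v0 + m01 * v1 + h.1 0 0 * w1 + h.1 0 1 * w2
  have z2 : u.1 1 0 * (h.1 0 0 * v0 + h.1 0 1 * v1) + u.1 1 1 * (h.1 1 0 * v0 + h.1 1 1 * v1)
      = h.1 1 0 * v0 + h.1 1 1 * v1 := by
    linear_combination m10 * v0 + m11 * v1 + h.1 1 0 * w1 + h.1 1 1 * w2
  generalize h.1 0 0 * v0 + h.1 0 1 * v1 = r0 at *
  generalize h.1 1 0 * v0 + h.1 1 1 * v1 = r1 at *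
  have hu1 : u = 1 := by
    apply sl_ext
    · apply mul_left_cancel₀ hz
      simp
      linear_combination r1 * u1 - v1 * z1
    · apply mul_left_cancel₀ hz
      rw [Matrix.SpecialLinearGroup.coe_one, Matrix.one_apply_ne (by decide)]
      linear_combination v0 * z1 - r0 * u1
    · apply mul_left_cancel₀ hz
      rw [Matrix.SpecialLinearGroup.coe_one, Matrix.one_apply_ne (by decide)]
      linear_combination r1 * u2 - v1 * z2
    · apply mul_left_cancel₀ hz
      simp
      linear_combination v0 * z2 - r0 * u2
  have hw1 : w = 1 := by
    rw [hu1, one_mul] at huw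
    exact mul_left_cancel (a := h) (by rw [← huw, mul_one])
  constructor
  · rw [hu1] at hu; exact (inv_mul_eq_one.1 hu.symm).symm
  · rw [hw1] at hw; exact (inv_mul_eq_one.1 hw.symm).symm

/-- Two eigenvectors with the same eigenvalue of a regular element are parallel. -/
lemma eig_trans {a b : G F} (ha : a.1.trace ^ 2 ≠ 4) {v0 v1 w0 w1 l m : F}
    (hw : w0 ≠ 0 ∨ w1 ≠ 0)
    (h1 : Eig a.1 v0 v1 l) (h2 : Eig a.1 w0 w1 l) (h3 : Eig b.1 w0 w1 m) : Eig b.1 v0 v1 m := by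
  have hd := a.2
  rw [Matrix.det_fin_two] at hd
  rw [Matrix.trace_fin_two] at ha
  obtain ⟨a1, a2⟩ := h1
  obtain ⟨a3, a4⟩ := h2
  have hp : w0 * v1 = w1 * v0 := by
    by_contra hne
    have hz : w0 * v1 - w1 * v0 ≠ 0 := sub_ne_zero.2 hne
    have e00 : a.1 0 0 = l := mul_left_cancel₀ hz (by linear_combination v1 * a3 - w1 * a1)
    have e01 : a.1 0 1 = 0 := mul_left_cancel₀ hz (by linear_combination w0 * a1 - v0 * a3)
    have e11 : a.1 1 1 = l := mul_left_cancel₀ hz (by linear_combination w0 * a2 - v0 * a4)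
    apply ha
    rw [e00, e01, e11] at hd
    rw [e00, e11]
    linear_combination 4 * hd
  obtain ⟨k, rfl, rfl⟩ := par hw hp
  obtain ⟨b1, b2⟩ := h3
  exact ⟨by linear_combination k * b1, by linear_combination k * b2⟩

end LP

namespace LP

variable {F : Type*} [Field F] [DecidableEq F]

open Classical in
lemma line_card {H A : Finset (G F)} (hsym : H⁻¹ = H)
    (hgen : Subgroup.closure (H : Set (G F)) = ⊤) (hA : A ⊆ H ^ 3)
    (a : G F) (ha : a.1.trace ^ 2 ≠ 4) (l m : F) :
    (A.filter fun b => ∃ v0 v1 : F, (v0 ≠ 0 ∨ v1 ≠ 0) ∧ Eig a.1 v0 v1 l ∧ Eig b.1 v0 v1 m).card ^ 2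
      ≤ (H ^ 7).card := by
  set L := A.filter fun b => ∃ v0 v1 : F, (v0 ≠ 0 ∨ v1 ≠ 0) ∧ Eig a.1 v0 v1 l ∧ Eig b.1 v0 v1 m
    with hL
  rcases L.eq_empty_or_nonempty with h0 | ⟨b0, hb0⟩
  · simp [h0]
  obtain ⟨-, v0, v1, hv, hav, -⟩ := Finset.mem_filter.1 hb0
  have hall : ∀ b ∈ L, Eig b.1 v0 v1 m := by
    intro b hb
    obtain ⟨-, w0, w1, hw, haw, hbw⟩ := Finset.mem_filter.1 hb
    exact eig_trans ha hw hav haw hbw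
  obtain ⟨h, hhH, hh⟩ := exists_move hgen hv
  have hi3 : (H ^ 3)⁻¹ = H ^ 3 := by rw [← inv_pow, hsym]
  rw [pow_two, ← Finset.card_product]
  apply Finset.card_le_card_of_injOn (fun z => z.1 * h * z.2⁻¹)
  · rintro ⟨x, y⟩ hxy
    obtain ⟨hx, hy⟩ := Finset.mem_product.1 (Finset.mem_coe.1 hxy)
    have e : H ^ 7 = H ^ 3 * H * H ^ 3 := by
      rw [← pow_succ, ← pow_add]
    simp only [Finset.mem_coe]
    rw [e]
    refine Finset.mul_mem_mul (Finset.mul_mem_mul (hA (Finset.mem_filter.1 hx).1) hhH) ?_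
    rw [← hi3]
    exact Finset.inv_mem_inv (hA (Finset.mem_filter.1 hy).1)
  · rintro ⟨x, y⟩ hxy ⟨x', y'⟩ hxy' he
    obtain ⟨hx, hy⟩ := Finset.mem_product.1 (Finset.mem_coe.1 hxy)
    obtain ⟨hx', hy'⟩ := Finset.mem_product.1 (Finset.mem_coe.1 hxy')
    obtain ⟨h1, h2⟩ := eq_of_inj hv hh (hall _ hx) (hall _ hx') (hall _ hy) (hall _ hy') he
    rw [Prod.mk.injEq]
    exact ⟨h1, h2⟩

open Classical in
lemma share_card {A : Finset (G F)} {t : F} {D : ℕ}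
    (hA : ∀ a ∈ A, a.1.trace = t) (a : G F) (ha : a ∈ A)
    (hD : ∀ l m : F, (A.filter fun b => ∃ v0 v1 : F, (v0 ≠ 0 ∨ v1 ≠ 0) ∧ Eig a.1 v0 v1 l ∧
      Eig b.1 v0 v1 m).card ^ 2 ≤ D) :
    (A.filter fun b => ∃ v0 v1 : F, (v0 ≠ 0 ∨ v1 ≠ 0) ∧ (∃ l, Eig a.1 v0 v1 l) ∧
      ∃ m, Eig b.1 v0 v1 m).card ^ 2 ≤ 16 * D := by
  obtain ⟨R, hR, hRc⟩ : ∃ R : Finset F, R.card ≤ 2 ∧ ∀ l, l ^ 2 - t * l + 1 = 0 → l ∈ R := by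
    by_cases h : ∃ l, l ^ 2 - t * l + 1 = 0
    · obtain ⟨l, hl⟩ := h
      refine ⟨{l, t - l}, Finset.card_le_two, fun k hk => ?_⟩
      have : (k - l) * (k - (t - l)) = 0 := by linear_combination hk - hl
      rcases mul_eq_zero.1 this with h | h
      · simp [sub_eq_zero.1 h]
      · simp [sub_eq_zero.1 h]
    · exact ⟨∅, by simp, fun l hl => absurd ⟨l, hl⟩ h⟩
  have hsub : (A.filter fun b => ∃ v0 v1 : F, (v0 ≠ 0 ∨ v1 ≠ 0) ∧ (∃ l, Eig a.1 v0 v1 l) ∧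
      ∃ m, Eig b.1 v0 v1 m) ⊆ (R ×ˢ R).biUnion fun lm =>
      A.filter fun b => ∃ v0 v1 : F, (v0 ≠ 0 ∨ v1 ≠ 0) ∧ Eig a.1 v0 v1 lm.1 ∧
      Eig b.1 v0 v1 lm.2 := by
    intro b hb
    obtain ⟨hbA, v0, v1, hv, ⟨l, hl⟩, m, hm⟩ := Finset.mem_filter.1 hb
    refine Finset.mem_biUnion.2 ⟨(l, m), Finset.mem_product.2 ⟨hRc _ ?_, hRc _ ?_⟩,
      Finset.mem_filter.2 ⟨hbA, v0, v1, hv, hl, hm⟩⟩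
    · rw [← hA a ha]; exact hl.char hv
    · rw [← hA b hbA]; exact hm.char hv
  have h1 := (Finset.card_le_card hsub).trans
    (Finset.card_biUnion_le_card_mul _ _ (Nat.sqrt D)
      (fun lm _ => Nat.le_sqrt'.2 (hD lm.1 lm.2)))
  have h2 : (R ×ˢ R).card ≤ 4 := by
    rw [Finset.card_product]
    exact Nat.mul_le_mul hR hR
  calc _ ≤ (4 * Nat.sqrt D) ^ 2 := Nat.pow_le_pow_left (h1.trans (Nat.mul_le_mul_right _ h2)) 2
    _ = 16 * (Nat.sqrt D ^ 2) := by ring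
    _ ≤ 16 * D := Nat.mul_le_mul_left _ (Nat.sqrt_le' D)

open Classical in
lemma count {A B : Finset (G F)} {t : F} (ht : t ≠ 0) {D : ℕ}
    (hA : ∀ a ∈ A, a.1.trace = t) (hB : ∀ a ∈ A, ∀ b ∈ A, a⁻¹ * b ∈ B)
    (hD : ∀ a ∈ A, ∀ l m : F, (A.filter fun b => ∃ v0 v1 : F, (v0 ≠ 0 ∨ v1 ≠ 0) ∧
      Eig a.1 v0 v1 l ∧ Eig b.1 v0 v1 m).card ^ 2 ≤ D) :
    A.card ^ 3 ≤ 2 * B.card ^ 2 + 3 * A.card ^ 2 + 16 * A.card * D := by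
  let S : G F → Finset (G F) := fun a => A.filter fun b => ∃ v0 v1 : F, (v0 ≠ 0 ∨ v1 ≠ 0) ∧
    (∃ l, Eig a.1 v0 v1 l) ∧ ∃ m, Eig b.1 v0 v1 m
  let T : Finset (G F × G F × G F) := A ×ˢ A ×ˢ A
  let T1 : Finset (G F × G F × G F) := (A ×ˢ A).image fun z => (z.1, z.1, z.2)
  let T2 : Finset (G F × G F × G F) := (A ×ˢ A).image fun z => (z.1, z.2, z.1)
  let T3 : Finset (G F × G F × G F) := (A ×ˢ A).image fun z => (z.1, z.2, z.2)
  let E : Finset (G F × G F × G F) := A.biUnion fun a => (S a ×ˢ S a).image fun z => (a, z)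
  let Q : Finset (G F × G F × G F) := T \ (T1 ∪ T2 ∪ T3 ∪ E)
  have hT : T.card = A.card ^ 3 := by
    simp only [T, Finset.card_product]; ring
  have c1 : T1.card ≤ A.card ^ 2 := Finset.card_image_le.trans (by rw [Finset.card_product, pow_two])
  have c2 : T2.card ≤ A.card ^ 2 := Finset.card_image_le.trans (by rw [Finset.card_product, pow_two])
  have c3 : T3.card ≤ A.card ^ 2 := Finset.card_image_le.trans (by rw [Finset.card_product, pow_two])
  have cE : E.card ≤ A.card * (16 * D) := by
    apply Finset.card_biUnion_le_card_mul
    intro a ha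
    refine Finset.card_image_le.trans ?_
    rw [Finset.card_product, ← pow_two]
    exact share_card hA a ha (hD a ha)
  have cQ : Q.card ≤ 2 * (B ×ˢ B).card := by
    apply Finset.card_le_mul_card_image_of_maps_to
      (f := fun z : G F × G F × G F => (z.1⁻¹ * z.2.1, z.1⁻¹ * z.2.2))
    · rintro ⟨a, b, c⟩ hz
      simp only [Q, T, Finset.mem_sdiff, Finset.mem_product] at hz
      exact Finset.mem_product.2 ⟨hB _ hz.1.1 _ hz.1.2.1, hB _ hz.1.1 _ hz.1.2.2⟩
    · rintro ⟨x, y⟩ -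
      by_contra hc
      push Not at hc
      obtain ⟨⟨a1, b1, c1⟩, z1, ⟨a2, b2, c2⟩, z2, ⟨a3, b3, c3⟩, z3, n12, n13, n23⟩ :=
        Finset.two_lt_card.1 hc
      simp only [Finset.mem_filter, Prod.mk.injEq] at z1 z2 z3
      obtain ⟨q1, x1, y1⟩ := z1
      obtain ⟨q2, x2, y2⟩ := z2
      obtain ⟨q3, x3, y3⟩ := z3
      rw [inv_mul_eq_iff_eq_mul] at x1 x2 x3 y1 y2 y3
      subst x1 x2 x3 y1 y2 y3
      simp only [Q, T, Finset.mem_sdiff, Finset.mem_product, Finset.mem_union, not_or] at q1 q2 q3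
      obtain ⟨⟨ha1, hx1, hy1⟩, ⟨⟨nT1, nT2⟩, nT3⟩, nE⟩ := q1
      obtain ⟨⟨ha2, hx2, hy2⟩, -⟩ := q2
      obtain ⟨⟨ha3, hx3, hy3⟩, -⟩ := q3
      have inj : ∀ {u w : G F}, u ≠ w → u.1 ≠ w.1 := fun h h' => h (Subtype.ext h')
      have m12 : a1 ≠ a2 := by rintro rfl; exact n12 rfl
      have m13 : a1 ≠ a3 := by rintro rfl; exact n13 rfl
      have m23 : a2 ≠ a3 := by rintro rfl; exact n23 rfl
      have mx : x ≠ 1 := by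
        rintro rfl
        exact nT1 (Finset.mem_image.2 ⟨(a1, a1 * y), Finset.mem_product.2 ⟨ha1, hy1⟩, by simp⟩)
      have my : y ≠ 1 := by
        rintro rfl
        exact nT2 (Finset.mem_image.2 ⟨(a1, a1 * x), Finset.mem_product.2 ⟨ha1, hx1⟩, by simp⟩)
      have mxy : x ≠ y := by
        rintro rfl
        exact nT3 (Finset.mem_image.2 ⟨(a1, a1 * x), Finset.mem_product.2 ⟨ha1, hx1⟩, by simp⟩)
      obtain ⟨v0, v1, hv, ⟨l, hl⟩, ⟨m, hm⟩, ⟨n, hn⟩⟩ := core ht a1.1 a2.1 a3.1 x.1 y.1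
        a1.2 a2.2 a3.2 x.2 y.2 (inj m12) (inj m13) (inj m23) (inj mx) (inj my) (inj mxy)
        (hA _ ha1) (hA _ ha2) (hA _ ha3) (hA _ hx1) (hA _ hx2) (hA _ hx3)
        (hA _ hy1) (hA _ hy2) (hA _ hy3)
      refine nE (Finset.mem_biUnion.2 ⟨a1, ha1, Finset.mem_image.2 ⟨(a1 * x, a1 * y),
        Finset.mem_product.2 ⟨?_, ?_⟩, rfl⟩⟩)
      · exact Finset.mem_filter.2 ⟨hx1, v0, v1, hv, ⟨l, hl⟩, l * m, hl.mul hm⟩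
      · exact Finset.mem_filter.2 ⟨hy1, v0, v1, hv, ⟨l, hl⟩, l * n, hl.mul hn⟩
  have hsub : T ⊆ Q ∪ (T1 ∪ T2 ∪ T3 ∪ E) := by
    intro z hz
    by_cases h : z ∈ T1 ∪ T2 ∪ T3 ∪ E
    · exact Finset.mem_union_right _ h
    · exact Finset.mem_union_left _ (Finset.mem_sdiff.2 ⟨hz, h⟩)
  have k0 := Finset.card_le_card hsub
  have k1 := Finset.card_union_le Q (T1 ∪ T2 ∪ T3 ∪ E)
  have k2 := Finset.card_union_le (T1 ∪ T2 ∪ T3) E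
  have k3 := Finset.card_union_le (T1 ∪ T2) T3
  have k4 := Finset.card_union_le T1 T2
  rw [Finset.card_product, ← pow_two] at cQ
  rw [hT] at k0
  have : A.card * (16 * D) = 16 * A.card * D := by ring
  omega

/-- An element commuting with a regular element and of trace `±2` is `±1`. -/
lemma comm_pm {g h : G F} (hg : g.1.trace ^ 2 ≠ 4) (hc : h * g = g * h)
    (hh : h.1.trace ^ 2 = 4) : h = 1 ∨ h = -1 := by
  have m := congrArg (fun z : G F => z.1) hc
  simp only [Matrix.SpecialLinearGroup.coe_mul] at m
  have m00 := congrFun (congrFun m 0) 0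
  have m01 := congrFun (congrFun m 0) 1
  have m10 := congrFun (congrFun m 1) 0
  simp only [Matrix.mul_apply, Fin.sum_univ_two] at m00 m01 m10
  have dg := g.2
  have dh := h.2
  rw [Matrix.det_fin_two] at dg dh
  rw [Matrix.trace_fin_two] at hg hh
  have hdisc : (g.1 0 0 - g.1 1 1) ^ 2 + 4 * g.1 0 1 * g.1 1 0 ≠ 0 := by
    intro h0
    exact hg (by linear_combination h0 + 4 * dg)
  have hv : g.1 0 0 - g.1 1 1 ≠ 0 ∨ g.1 0 1 ≠ 0 ∨ g.1 1 0 ≠ 0 := by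
    by_contra hcon
    push Not at hcon
    obtain ⟨p0, p1, p2⟩ := hcon
    exact hdisc (by rw [p0, p1]; ring)
  obtain ⟨k, k0, k1, k2⟩ := par3 (w0 := h.1 0 0 - h.1 1 1) (w1 := h.1 0 1) (w2 := h.1 1 0) hv
    (by linear_combination -m01) (by linear_combination m10) (by linear_combination -m00)
  have hk : k = 0 := by
    have : k ^ 2 * ((g.1 0 0 - g.1 1 1) ^ 2 + 4 * g.1 0 1 * g.1 1 0) = 0 := by
      have e : (h.1 0 0 - h.1 1 1) ^ 2 + 4 * h.1 0 1 * h.1 1 0 = 0 := by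
        linear_combination hh - 4 * dh
      rw [k0, k1, k2] at e
      linear_combination e
    exact pow_eq_zero_iff (two_ne_zero) |>.1 ((mul_eq_zero.1 this).resolve_right hdisc)
  subst hk
  rw [zero_mul] at k0 k1 k2
  have e : h.1 0 0 = h.1 1 1 := sub_eq_zero.1 k0
  rw [k1, e] at dh
  have : (h.1 1 1 - 1) * (h.1 1 1 + 1) = 0 := by linear_combination dh
  rcases mul_eq_zero.1 this with q | q
  · left
    have q : h.1 1 1 = 1 := sub_eq_zero.1 q
    apply sl_ext <;> simp [e, q, k1, k2]
  · right
    have q : h.1 1 1 = -1 := eq_neg_of_add_eq_zero_left q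
    apply sl_ext <;> simp [e, q, k1, k2]

lemma final {H3 h c X N H6 H7 : ℕ} (hh : 0 < h) (h3 : h ≤ H3)
    (h6 : (H6 : ℝ) ≤ ((H3 : ℝ) / h) ^ 4 * h) (h7 : (H7 : ℝ) ≤ ((H3 : ℝ) / h) ^ 5 * h)
    (hc : c ≤ H3) (hcount : c ^ 3 ≤ 2 * H6 ^ 2 + 3 * c ^ 2 + 16 * c * H7)
    (hX : h ≤ c * X) (hN : X ≤ 3 * N) : h ^ 13 ≤ 2744 * N ^ 3 * H3 ^ 12 := by
  have hh' : (0 : ℝ) < h := by exact_mod_cast hh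
  obtain ⟨K, hK⟩ : ∃ K : ℝ, K = (H3 : ℝ) / h := ⟨_, rfl⟩
  rw [← hK] at h6 h7
  have hK1 : 1 ≤ K := by
    rw [hK, le_div_iff₀ hh', one_mul]; exact_mod_cast h3
  have hKh : (H3 : ℝ) = K * h := by rw [hK]; field_simp
  have hc' : (c : ℝ) ≤ K * h := by rw [← hKh]; exact_mod_cast hc
  have hcount' : (c : ℝ) ^ 3 ≤ 2 * (H6 : ℝ) ^ 2 + 3 * (c : ℝ) ^ 2 + 16 * c * H7 := by
    exact_mod_cast hcount
  have hK0 : 0 ≤ K := by linarith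
  have b1 : (H6 : ℝ) ^ 2 ≤ K ^ 8 * h ^ 2 := by
    calc (H6 : ℝ) ^ 2 ≤ (K ^ 4 * h) ^ 2 := by gcongr
      _ = _ := by ring
  have b2 : (c : ℝ) ^ 2 ≤ K ^ 8 * h ^ 2 := by
    calc (c : ℝ) ^ 2 ≤ (K * h) ^ 2 := by gcongr
      _ = K ^ 2 * h ^ 2 := by ring
      _ ≤ K ^ 8 * h ^ 2 := by gcongr; norm_num
  have b3 : (c : ℝ) * H7 ≤ K ^ 8 * h ^ 2 := by
    calc (c : ℝ) * H7 ≤ (K * h) * (K ^ 5 * h) := by gcongr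
      _ = K ^ 6 * h ^ 2 := by ring
      _ ≤ K ^ 8 * h ^ 2 := by gcongr; norm_num
  have b4 : (c : ℝ) ^ 3 ≤ 21 * (K ^ 8 * h ^ 2) := by nlinarith
  have hXN : (h : ℝ) ≤ c * (3 * N) := by
    exact_mod_cast hX.trans (Nat.mul_le_mul_left c hN)
  have b5 : (h : ℝ) ^ 3 ≤ 567 * N ^ 3 * K ^ 8 * h ^ 2 := by
    calc (h : ℝ) ^ 3 ≤ ((c : ℝ) * (3 * N)) ^ 3 := by gcongr
      _ = (c : ℝ) ^ 3 * (27 * N ^ 3) := by ring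
      _ ≤ (21 * (K ^ 8 * h ^ 2)) * (27 * N ^ 3) := by gcongr
      _ = _ := by ring
  have b6 : (h : ℝ) ≤ 567 * N ^ 3 * K ^ 8 := by
    have : (h : ℝ) * h ^ 2 ≤ (567 * N ^ 3 * K ^ 8) * h ^ 2 := by
      calc (h : ℝ) * h ^ 2 = h ^ 3 := by ring
        _ ≤ _ := b5
    exact le_of_mul_le_mul_right this (by positivity)
  have b7 : (h : ℝ) ^ 13 ≤ 2744 * N ^ 3 * H3 ^ 12 := by
    calc (h : ℝ) ^ 13 = h * h ^ 12 := by ring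
      _ ≤ (567 * N ^ 3 * K ^ 8) * h ^ 12 := by gcongr
      _ ≤ (2744 * N ^ 3 * K ^ 12) * h ^ 12 := by gcongr <;> norm_num
      _ = 2744 * N ^ 3 * (K * h) ^ 12 := by ring
      _ = _ := by rw [hKh]
  exact_mod_cast b7

end LP

/-- **Key dichotomy for involved tori (Proposition `pr-dichotomy`(2)).**
Let `p ≥ 3` be prime, `H` a symmetric generating set of `SL₂(𝔽_p)` containing `1`, and
`g ∈ H` with `tr(g) ≠ 0` and `tr(g)² ≠ 4`. Let `N` be the number of regular semisimple
elements of `H^(2)` commuting with `g` (i.e. lying in the maximal torus through `g`).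
Then `2744·N³·|H^(3)|¹² ≥ |H|¹³`, unless `|H^(3)|^168 ≥ |H|^169`. -/
theorem stmt_14 (p : ℕ) (hp : p.Prime) (hp3 : 3 ≤ p)
    (H : Finset (Matrix.SpecialLinearGroup (Fin 2) (ZMod p)))
    (hsym : ∀ h ∈ H, h⁻¹ ∈ H)
    (hone : (1 : Matrix.SpecialLinearGroup (Fin 2) (ZMod p)) ∈ H)
    (hgen : Subgroup.closure (H : Set (Matrix.SpecialLinearGroup (Fin 2) (ZMod p))) = ⊤)
    (g : Matrix.SpecialLinearGroup (Fin 2) (ZMod p)) (hgH : g ∈ H)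
    (hg0 : Matrix.trace (g : Matrix (Fin 2) (Fin 2) (ZMod p)) ≠ 0)
    (hg4 : Matrix.trace (g : Matrix (Fin 2) (Fin 2) (ZMod p)) ^ 2 ≠ 4)
    (N : ℕ)
    (hN : N = ((H ^ 2 : Finset (Matrix.SpecialLinearGroup (Fin 2) (ZMod p))).filter
      fun h : Matrix.SpecialLinearGroup (Fin 2) (ZMod p) =>
        h * g = g * h ∧ Matrix.trace (↑h : Matrix (Fin 2) (Fin 2) (ZMod p)) ^ 2 ≠ 4).card) :
    H.card ^ 13 ≤
        2744 * N ^ 3 * (H ^ 3 : Finset (Matrix.SpecialLinearGroup (Fin 2) (ZMod p))).card ^ 12 ∨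
      H.card ^ 169 ≤ (H ^ 3 : Finset (Matrix.SpecialLinearGroup (Fin 2) (ZMod p))).card ^ 168 := by
  left
  haveI : Fact p.Prime := ⟨hp⟩
  have hsym' : H⁻¹ = H := by
    ext h
    rw [Finset.mem_inv']
    exact ⟨fun hh => by simpa using hsym _ hh, fun hh => hsym _ hh⟩
  have hpos : 0 < H.card := Finset.card_pos.2 ⟨1, hone⟩
  have hle3 : H.card ≤ (H ^ 3).card := by
    have : H ^ 1 ⊆ H ^ 3 := Finset.pow_subset_pow_right hone (by norm_num)
    rw [pow_one] at this
    exact Finset.card_le_card this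
  have hK : ((H ^ 3).card : ℝ) ≤ ((H ^ 3).card / H.card : ℝ) * H.card := by
    have : (H.card : ℝ) ≠ 0 := by exact_mod_cast hpos.ne'
    rw [div_mul_cancel₀ _ this]
  have h6 := Finset.small_pow_of_small_tripling (m := 6) (by norm_num) hK hsym'
  have h7 := Finset.small_pow_of_small_tripling (m := 7) (by norm_num) hK hsym'
  have hi3 : (H ^ 3)⁻¹ = H ^ 3 := by rw [← inv_pow, hsym']
  obtain ⟨t, ht⟩ : ∃ t, t = Matrix.trace (g : Matrix (Fin 2) (Fin 2) (ZMod p)) := ⟨_, rfl⟩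
  rw [← ht] at hg0 hg4
  let A := (H ^ 3).filter fun a => Matrix.trace a.1 = t
  have hA : ∀ a ∈ A, Matrix.trace a.1 = t := fun a ha => (Finset.mem_filter.1 ha).2
  have hA3 : A ⊆ H ^ 3 := Finset.filter_subset _ _
  have hcount := LP.count (A := A) (B := H ^ 6) (D := (H ^ 7).card) hg0 hA
    (fun a ha b hb => by
      have e : H ^ 6 = H ^ 3 * H ^ 3 := by rw [← pow_add]
      rw [e]
      refine Finset.mul_mem_mul ?_ (hA3 hb)
      rw [← hi3]
      exact Finset.inv_mem_inv (hA3 ha))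
    (fun a ha l m => LP.line_card hsym' hgen hA3 a (by rw [hA a ha]; exact hg4) l m)
  let X := (H ^ 2).filter fun h => h * g = g * h
  have hX : H.card ≤ A.card * X.card := by
    rw [mul_comm]
    apply Finset.card_le_mul_card_image_of_maps_to (f := fun h => h * g * h⁻¹)
    · intro h hh
      refine Finset.mem_filter.2 ⟨?_, ?_⟩
      · have e : H ^ 3 = H * H * H := by rw [pow_succ, pow_two]
        rw [e]
        exact Finset.mul_mem_mul (Finset.mul_mem_mul hh hgH) (hsym _ hh)
      · have e : (h * g * h⁻¹).1 = h.1 * g.1 * (h⁻¹).1 := by simp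
        have e2 : (h⁻¹).1 * h.1 = 1 := by
          rw [← Matrix.SpecialLinearGroup.coe_mul, inv_mul_cancel, Matrix.SpecialLinearGroup.coe_one]
        rw [e, Matrix.trace_mul_comm, ← mul_assoc, e2, one_mul, ht]
    · intro b _
      rcases (H.filter fun h => h * g * h⁻¹ = b).eq_empty_or_nonempty with h0 | ⟨k, hk⟩
      · rw [h0]; simp
      obtain ⟨hkH, hkb⟩ := Finset.mem_filter.1 hk
      apply Finset.card_le_card_of_injOn (fun h => k⁻¹ * h)
      · intro h hh
        obtain ⟨hhH, hhb⟩ := Finset.mem_filter.1 (Finset.mem_coe.1 hh)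
        refine Finset.mem_coe.2 (Finset.mem_filter.2 ⟨?_, ?_⟩)
        · rw [pow_two]
          exact Finset.mul_mem_mul (hsym _ hkH) hhH
        · have e : h * g = k * g * k⁻¹ * h := by rw [hkb, ← hhb]; group
          rw [mul_assoc, e]; group
      · intro x _ y _ hxy
        exact mul_left_cancel hxy
  have hgN : g ∈ (H ^ 2).filter fun h : Matrix.SpecialLinearGroup (Fin 2) (ZMod p) =>
      h * g = g * h ∧ Matrix.trace (↑h : Matrix (Fin 2) (Fin 2) (ZMod p)) ^ 2 ≠ 4 := by
    refine Finset.mem_filter.2 ⟨?_, rfl, by rw [← ht]; exact hg4⟩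
    rw [pow_two]
    simpa using Finset.mul_mem_mul hgH hone
  have hN1 : 1 ≤ N := by
    rw [hN]; exact Finset.card_pos.2 ⟨g, hgN⟩
  have hXN : X.card ≤ 3 * N := by
    have hsub : X ⊆ ((H ^ 2).filter fun h : Matrix.SpecialLinearGroup (Fin 2) (ZMod p) =>
      h * g = g * h ∧ Matrix.trace (↑h : Matrix (Fin 2) (Fin 2) (ZMod p)) ^ 2 ≠ 4) ∪ {1, -1} := by
      intro h hh
      obtain ⟨h1, h2⟩ := Finset.mem_filter.1 hh
      by_cases h4 : Matrix.trace (↑h : Matrix (Fin 2) (Fin 2) (ZMod p)) ^ 2 = 4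
      · apply Finset.mem_union_right
        have := LP.comm_pm (by rw [← ht]; exact hg4) h2 h4
        simpa using this
      · exact Finset.mem_union_left _ (Finset.mem_filter.2 ⟨h1, h2, h4⟩)
    have h1 := (Finset.card_le_card hsub).trans (Finset.card_union_le _ _)
    rw [← hN] at h1
    have h2 : ({1, -1} : Finset (Matrix.SpecialLinearGroup (Fin 2) (ZMod p))).card ≤ 2 :=
      Finset.card_le_two
    omega
  exact LP.final hpos hle3 h6 h7 (Finset.card_le_card hA3) hcount hX hXN
end
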